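/- arXiv:2109.07845 — 5 statements merged into one kernel-verified Lean document; each statement's English description precedes it below -/
import Mathlib

section
/- With the brace setup below (n ≥ 5), assume self-duality: b_r = b_{m−r} for all 0 ≤ r ≤ m, and there exist invertible matrices U_0, …, U_m with entries in K, with U_0 = (1) and U_m = (c) where c = +1 if n ≡ 2,3 (mod 4) and c = −1 if n ≡ 0,1 (mod 4), such that U_{r−1}·φ_r = φ_{m+1−r}^T·U_r for all 1 ≤ r ≤ m. Then for all indices i, j, k, ℓ, a_1, …, a_{n−4} ∈ {1,…,n−1} we have {i, j, a_1, …, a_{n−4}, k, ℓ} = −{k, ℓ, a_1, …, a_{n−4}, i, j}. -/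
open MvPolynomial

/-- The row vector `P(a_1,a_2)·(∂φ_2/∂x_{a_3})⋯(∂φ_{r+1}/∂x_{a_{r+2}})` (0-based: the
sequence `c` is indexed from 0, `φ r` is the paper's `φ_{r+1}`). -/
noncomputable def braceVec {K : Type*} [Field K] {N : ℕ} {b : ℕ → ℕ}
    (φ : ∀ r : ℕ, Matrix (Fin (b r)) (Fin (b (r + 1))) (MvPolynomial (Fin N) K))
    (P : Fin N → Fin N → Fin (b 1) → K)
    (c : ℕ → Fin N) : ∀ r : ℕ, Fin (b (r + 1)) → MvPolynomial (Fin N) K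
  | 0 => fun q => C (P (c 0) (c 1) q)
  | (r + 1) => Matrix.vecMul (braceVec φ P c r)
      (fun p q => pderiv (c (r + 2)) (φ (r + 1) p q))

/-- The brace symbol `{a_1 a_2 ⋯ a_n} = P(a_1,a_2)·(∂φ_2/∂x_{a_3})⋯(∂φ_{m−1}/∂x_{a_{n−2}})
·Q(a_{n−1},a_n)` (a scalar, realized as a constant polynomial). Here `nn` is the paper's
`n`, `m = nn − 2`, and `h` records `m − 1 = m − 2 + 1`. -/
noncomputable def braceFn {K : Type*} [Field K] {N : ℕ} {b : ℕ → ℕ}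
    (φ : ∀ r : ℕ, Matrix (Fin (b r)) (Fin (b (r + 1))) (MvPolynomial (Fin N) K))
    (P : Fin N → Fin N → Fin (b 1) → K)
    (m : ℕ) (Q : Fin N → Fin N → Fin (b (m - 1)) → K) (h : m - 1 = m - 2 + 1)
    (nn : ℕ) (c : ℕ → Fin N) : MvPolynomial (Fin N) K :=
  ∑ p : Fin (b (m - 1)),
    braceVec φ P c (m - 2) (Fin.cast (congrArg b h) p) * C (Q (c (nn - 2)) (c (nn - 1)) p)

section Helpers

/-- Zero-padding of a rectangular matrix to a square one of size `B`. -/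
def padM {R : Type*} [CommRing R] (B : ℕ) {p q : ℕ} (M : Matrix (Fin p) (Fin q) R) :
    Matrix (Fin B) (Fin B) R :=
  fun i j => if h : i.val < p ∧ j.val < q then M ⟨i.val, h.1⟩ ⟨j.val, h.2⟩ else 0

lemma padM_mul {R : Type*} [CommRing R] (B : ℕ) {p q s : ℕ} (hq : q ≤ B)
    (M : Matrix (Fin p) (Fin q) R) (N : Matrix (Fin q) (Fin s) R) :
    padM B (M * N) = padM B M * padM B N := by
  ext i j
  simp only [padM, Matrix.mul_apply]
  by_cases hi : i.val < p
  · by_cases hj : j.val < s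
    · simp only [hi, hj, and_self, dite_true, true_and, and_true]
      rw [← Finset.sum_subset (Finset.subset_univ
        (Finset.univ.map (Fin.castLEEmb hq)))]
      · rw [Finset.sum_map]
        apply Finset.sum_congr rfl
        intro x _
        simp
      · intro x _ hx
        have : ¬ x.val < q := by
          intro h
          apply hx
          simp only [Finset.mem_map, Finset.mem_univ, true_and]
          exact ⟨⟨x.val, h⟩, by ext; simp⟩
        simp [this]
    · simp [hj]
  · simp [hi]

lemma padM_transpose {R : Type*} [CommRing R] (B : ℕ) {p q : ℕ} (M : Matrix (Fin p) (Fin q) R) :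
    padM B M.transpose = (padM B M).transpose := by
  ext i j
  simp only [padM, Matrix.transpose_apply, and_comm]

lemma padM_cast {R : Type*} [CommRing R] (B : ℕ) {p q p' q' : ℕ} (hp : p' = p) (hq : q' = q)
    (M : Matrix (Fin p) (Fin q) R) :
    padM B (M.submatrix (Fin.cast hp) (Fin.cast hq)) = padM B M := by
  subst hp hq
  rfl

lemma padM_one_mul {R : Type*} [CommRing R] (B : ℕ) {p q : ℕ} (hp : p ≤ B)
    (M : Matrix (Fin p) (Fin q) R) :
    padM B (1 : Matrix (Fin p) (Fin p) R) * padM B M = padM B M := by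
  rw [← padM_mul B hp, Matrix.one_mul]

lemma padM_map {R : Type*} [CommRing R] (B : ℕ) {p q : ℕ} (M : Matrix (Fin p) (Fin q) R)
    (L : R → R) (hL : L 0 = 0) :
    (padM B M).map L = padM B (M.map L) := by
  ext i j
  simp only [padM, Matrix.map_apply]
  split_ifs <;> simp [hL]

/-- Scalar matrices commute with entrywise application of `K`-linear maps. -/
lemma map_scalar_mul {K : Type*} [Field K] {N B p : ℕ} (u : Matrix (Fin p) (Fin p) K)
    (d : Matrix (Fin B) (Fin B) (MvPolynomial (Fin N) K))
    (L : MvPolynomial (Fin N) K →ₗ[K] MvPolynomial (Fin N) K) :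
    (padM B (u.map (fun x => (C x : MvPolynomial (Fin N) K))) * d).map L
      = padM B (u.map (fun x => (C x : MvPolynomial (Fin N) K))) * d.map L := by
  ext1 i j
  simp only [Matrix.map_apply, Matrix.mul_apply, map_sum]
  apply Finset.sum_congr rfl
  intro x _
  simp only [padM, Matrix.map_apply]
  split_ifs
  · rw [← MvPolynomial.smul_eq_C_mul, ← MvPolynomial.smul_eq_C_mul, map_smul]
  · simp

lemma map_mul_scalar {K : Type*} [Field K] {N B p : ℕ} (u : Matrix (Fin p) (Fin p) K)
    (d : Matrix (Fin B) (Fin B) (MvPolynomial (Fin N) K))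
    (L : MvPolynomial (Fin N) K →ₗ[K] MvPolynomial (Fin N) K) :
    (d * padM B (u.map (fun x => (C x : MvPolynomial (Fin N) K)))).map L
      = d.map L * padM B (u.map (fun x => (C x : MvPolynomial (Fin N) K))) := by
  ext1 i j
  simp only [Matrix.map_apply, Matrix.mul_apply, map_sum]
  apply Finset.sum_congr rfl
  intro x _
  simp only [padM, Matrix.map_apply]
  split_ifs
  · rw [mul_comm, ← MvPolynomial.smul_eq_C_mul, mul_comm, ← MvPolynomial.smul_eq_C_mul, map_smul]
  · simp

/-- `G s [x₀,x₁,…] = D s x₀ * D (s+1) x₁ * ⋯`. -/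
def chainProd {A ι : Type*} [Ring A] (D : ℕ → ι → A) : ℕ → List ι → A
  | _, [] => 1
  | s, x :: l => D s x * chainProd D (s + 1) l

lemma chainProd_append {A ι : Type*} [Ring A] (D : ℕ → ι → A) (l : List ι) (x : ι) :
    ∀ s, chainProd D s (l ++ [x]) = chainProd D s l * D (s + l.length) x := by
  induction l with
  | nil => intro s; simp [chainProd]
  | cons y l ih =>
    intro s
    simp only [List.cons_append, chainProd, ih, List.length_cons, mul_assoc]
    rw [show s + 1 + l.length = s + (l.length + 1) by omega]

lemma chainProd_rot {A ι : Type*} [Ring A] (D : ℕ → ι → A) (M : ℕ)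
    (hD : ∀ r, 1 ≤ r → r + 1 < M → ∀ x y, D r x * D (r + 1) y = - (D r y * D (r + 1) x))
    (l : List ι) (x : ι) :
    ∀ s, 1 ≤ s → s + l.length < M →
      chainProd D s (l ++ [x]) = (-1) ^ l.length * chainProd D s (x :: l) := by
  induction l with
  | nil => intro s _ _; simp
  | cons y l ih =>
    intro s hs hM
    simp only [List.length_cons] at hM
    rw [List.cons_append, chainProd, ih (s + 1) (by omega) (by omega)]
    simp only [chainProd, List.length_cons]
    rw [← mul_assoc (D s x), ← neg_eq_iff_eq_neg.mpr (hD s hs (by omega) y x)]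
    have h1 : Commute (D s y) ((-1 : A) ^ l.length) := 
      (Commute.neg_one_right _).pow_right _
    rw [← mul_assoc, h1.eq, pow_succ]
    simp [mul_assoc]

lemma chainProd_reverse {A ι : Type*} [Ring A] (D : ℕ → ι → A) (M : ℕ)
    (hD : ∀ r, 1 ≤ r → r + 1 < M → ∀ x y, D r x * D (r + 1) y = - (D r y * D (r + 1) x))
    (l : List ι) :
    ∀ s, 1 ≤ s → s + l.length ≤ M →
      chainProd D s l.reverse = (-1) ^ (∑ i ∈ Finset.range l.length, i) * chainProd D s l := by
  induction l with
  | nil => intro s _ _; simp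
  | cons y l ih =>
    intro s hs hM
    simp only [List.length_cons] at hM
    rw [List.reverse_cons, chainProd_rot D M hD _ _ s hs (by simp; omega)]
    simp only [chainProd, List.length_cons, List.length_reverse]
    rw [ih (s + 1) (by omega) (by omega), Finset.sum_range_succ, add_comm (∑ i ∈ Finset.range l.length, i), pow_add]
    have h1 : Commute (D s y) ((-1 : A) ^ (∑ i ∈ Finset.range l.length, i)) := 
      (Commute.neg_one_right _).pow_right _
    rw [← mul_assoc (D s y), h1.eq]
    simp [mul_assoc]

lemma chainProd_dual {R ι : Type*} [CommRing R] {B : ℕ}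
    (D : ℕ → ι → Matrix (Fin B) (Fin B) R) (u : ℕ → Matrix (Fin B) (Fin B) R) (m : ℕ)
    (h : ∀ s, 1 ≤ s → s + 2 ≤ m → ∀ a, u s * D s a = (D (m - (s + 1)) a).transpose * u (s + 1))
    (l : List ι) :
    ∀ s, 1 ≤ s → s + l.length + 1 ≤ m →
      u s * chainProd D s l
        = (chainProd D (m - (s + l.length)) l.reverse).transpose * u (s + l.length) := by
  induction l with
  | nil => intro s _ _; simp [chainProd]
  | cons y l ih =>
    intro s hs hM
    simp only [List.length_cons] at hM
    rw [List.reverse_cons, chainProd_append, chainProd, ← mul_assoc, h s hs (by omega), mul_assoc,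
      ih (s + 1) (by omega) (by omega), Matrix.transpose_mul, ← mul_assoc]
    simp only [List.length_cons, List.length_reverse]
    rw [show m - (s + (l.length + 1)) + l.length = m - (s + 1) by omega,
      show s + 1 + l.length = s + (l.length + 1) by omega]

/-- The coefficient of `x_i x_j`, as a constant polynomial. -/
noncomputable def quadCoeff {K : Type*} [Field K] {N : ℕ} (i j : Fin N) :
    MvPolynomial (Fin N) K →ₗ[K] MvPolynomial (Fin N) K :=
  (Algebra.linearMap K (MvPolynomial (Fin N) K)).comp
    (MvPolynomial.lcoeff K (Finsupp.single i 1 + Finsupp.single j 1))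

lemma single_pair {N : ℕ} {i j a b : Fin N} (hij : i ≤ j) (hab : a ≤ b)
    (h : (Finsupp.single a 1 + Finsupp.single b 1 : Fin N →₀ ℕ)
      = Finsupp.single i 1 + Finsupp.single j 1) : a = i ∧ b = j := by
  have ha := DFunLike.congr_fun h a
  have hb := DFunLike.congr_fun h b
  have hi := DFunLike.congr_fun h i
  have hj := DFunLike.congr_fun h j
  simp only [Finsupp.add_apply, Finsupp.single_apply] at ha hb hi hj
  grind

lemma quadCoeff_quad {K : Type*} [Field K] {N : ℕ} (f : Fin N → Fin N → K)
    (hf : ∀ i j, f i j = f j i) (i j : Fin N) :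
    quadCoeff i j (∑ a : Fin N, ∑ b : Fin N,
        if a ≤ b then C (f a b) * X a * X b else (0 : MvPolynomial (Fin N) K)) = C (f i j) := by
  wlog hij : i ≤ j generalizing i j
  · have := this j i (le_of_not_ge hij)
    rw [hf i j, ← this]
    simp only [quadCoeff, add_comm]
  have key : ∀ a b : Fin N, coeff (Finsupp.single i 1 + Finsupp.single j 1)
      (if a ≤ b then C (f a b) * X a * X b else (0 : MvPolynomial (Fin N) K))
      = if a = i then (if b = j then f i j else 0) else 0 := by
    intro a b
    by_cases hab : a ≤ b
    · rw [if_pos hab, X, X, mul_assoc, monomial_mul, C_mul_monomial, coeff_monomial]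
      by_cases hh : a = i ∧ b = j
      · obtain ⟨rfl, rfl⟩ := hh
        simp
      · rw [if_neg (fun h => hh (single_pair hij hab h))]
        grind
    · rw [if_neg hab]
      simp only [coeff_zero]
      grind
  simp only [quadCoeff, LinearMap.comp_apply, lcoeff_apply, coeff_sum, key]
  simp [MvPolynomial.algebraMap_eq]

lemma pderiv_pderiv_linear {K : Type*} [Field K] {N : ℕ} (f : MvPolynomial (Fin N) K)
    (hf : f.IsHomogeneous 1) (i j : Fin N) : pderiv i (pderiv j f) = 0 := by
  have h := hf.pderiv (i := j)
  have h0 : (pderiv j f).totalDegree = 0 := by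
    have := h.totalDegree_le
    omega
  rw [MvPolynomial.totalDegree_eq_zero_iff_eq_C] at h0
  rw [h0, pderiv_C]

lemma pderiv_anti {K : Type*} [Field K] {N p q s : ℕ}
    (M : Matrix (Fin p) (Fin q) (MvPolynomial (Fin N) K))
    (M' : Matrix (Fin q) (Fin s) (MvPolynomial (Fin N) K))
    (hM : ∀ i j, (M i j).IsHomogeneous 1) (hM' : ∀ i j, (M' i j).IsHomogeneous 1)
    (h : M * M' = 0) (x y : Fin N) :
    M.map (pderiv x) * M'.map (pderiv y) = - (M.map (pderiv y) * M'.map (pderiv x)) := by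
  ext1 i j
  have h1 : pderiv x (pderiv y ((M * M') i j)) = 0 := by rw [h]; simp
  rw [Matrix.mul_apply] at h1
  simp only [map_sum, Derivation.leibniz, map_add, smul_eq_mul,
    pderiv_pderiv_linear _ (hM _ _), pderiv_pderiv_linear _ (hM' _ _), mul_zero, zero_add,
    Finset.sum_add_distrib] at h1
  rw [Matrix.neg_apply, Matrix.mul_apply, Matrix.mul_apply]
  simp only [Matrix.map_apply]
  rw [eq_neg_iff_add_eq_zero, ← h1]
  congr 1
  exact Finset.sum_congr rfl fun _ _ => mul_comm _ _

lemma sign_lemma {A : Type*} [Ring A] (n : ℕ) (hn : 5 ≤ n) :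
    (if n % 4 = 2 ∨ n % 4 = 3 then (1 : A) else -1) * (-1) ^ (∑ i ∈ Finset.range (n - 4), i)
      = -1 := by
  have hg : ∀ k : ℕ, (-1 : A) ^ (∑ i ∈ Finset.range k, i)
      = if k % 4 = 2 ∨ k % 4 = 3 then -1 else 1 := by
    intro k
    induction k with
    | zero => simp
    | succ k ih =>
      rw [Finset.sum_range_succ, pow_add, ih]
      rcases Nat.even_or_odd k with he | ho
      · rw [he.neg_one_pow]
        rw [Nat.even_iff] at he
        have : (k % 4 = 2 ∨ k % 4 = 3) ↔ ((k+1) % 4 = 2 ∨ (k+1) % 4 = 3) := by omega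
        simp only [this, mul_one]
      · rw [ho.neg_one_pow]
        rw [Nat.odd_iff] at ho
        have : (k % 4 = 2 ∨ k % 4 = 3) ↔ ¬ ((k+1) % 4 = 2 ∨ (k+1) % 4 = 3) := by omega
        simp only [this]
        split_ifs <;> simp
  rw [hg]
  have : ((n - 4) % 4 = 2 ∨ (n - 4) % 4 = 3) ↔ (n % 4 = 2 ∨ n % 4 = 3) := by omega
  simp only [this]
  split_ifs <;> simp

lemma braceVec_pad {K : Type*} [Field K] {N : ℕ} {b : ℕ → ℕ} (B m : ℕ)
    (hB : ∀ r, r ≤ m → b r ≤ B)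
    (φ : ∀ r : ℕ, Matrix (Fin (b r)) (Fin (b (r + 1))) (MvPolynomial (Fin N) K))
    (P : Fin N → Fin N → Fin (b 1) → K) (c : ℕ → Fin N) :
    ∀ r, r + 1 ≤ m → padM B (Matrix.of fun (_ : Fin 1) q => braceVec φ P c r q)
      = padM B (Matrix.of fun (_ : Fin 1) q => (C (P (c 0) (c 1) q) : MvPolynomial (Fin N) K))
        * chainProd (fun s a => padM B ((φ s).map (pderiv a))) 1
          ((List.range r).map (fun j => c (j + 2))) := by
  intro r
  induction r with
  | zero => intro _; simp [chainProd, braceVec]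
  | succ r ih =>
    intro hr
    rw [List.range_succ, List.map_append, List.map_singleton, chainProd_append, ← mul_assoc,
      ← ih (by omega)]
    rw [List.length_map, List.length_range]
    rw [show 1 + r = r + 1 by omega, ← padM_mul B (hB _ (by omega))]
    rfl

end Helpers

/-- In the brace setup (`n ≥ 5`), assuming Gorenstein self-duality — `b_r =
b_{m−r}` and invertible scalar matrices `U_0 = 1, U_1, …, U_m = (c)` with
`U_{r−1}·φ_r = φ_{m+1−r}ᵀ·U_r`, where `c = +1` if `n ≡ 2,3 (mod 4)` and `c = −1` if
`n ≡ 0,1 (mod 4)` — the brace symbol satisfies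
`{i, j, a_1, …, a_{n−4}, k, ℓ} = −{k, ℓ, a_1, …, a_{n−4}, i, j}`. -/
theorem stmt13 (K : Type*) [Field K] (n : ℕ) (hn : 5 ≤ n) (m : ℕ) (hm : m = n - 2)
    (b : ℕ → ℕ) (hbpos : ∀ r, r ≤ m → 0 < b r) (hb0 : b 0 = 1) (hbm : b m = 1)
    (φ : ∀ r : ℕ, Matrix (Fin (b r)) (Fin (b (r + 1))) (MvPolynomial (Fin (n - 1)) K))
    (hcomp : ∀ r, r + 2 ≤ m → φ r * φ (r + 1) = 0)
    (hdeg1 : ∀ p q, (φ 0 p q).IsHomogeneous 2)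
    (hdegm : ∀ p q, (φ (m - 1) p q).IsHomogeneous 2)
    (hdegmid : ∀ r, 1 ≤ r → r + 2 ≤ m → ∀ p q, (φ r p q).IsHomogeneous 1)
    (P : Fin (n - 1) → Fin (n - 1) → Fin (b 1) → K)
    (Q : Fin (n - 1) → Fin (n - 1) → Fin (b (m - 1)) → K)
    (hPsymm : ∀ i j, P i j = P j i) (hQsymm : ∀ i j, Q i j = Q j i)
    (hP : ∀ (p : Fin (b 0)) (q : Fin (b 1)),
      φ 0 p q = ∑ i : Fin (n - 1), ∑ j : Fin (n - 1),
        if i ≤ j then C (P i j q) * X i * X j else 0)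
    (hQ : ∀ (p : Fin (b (m - 1))) (q : Fin (b (m - 1 + 1))),
      φ (m - 1) p q = ∑ i : Fin (n - 1), ∑ j : Fin (n - 1),
        if i ≤ j then C (Q i j p) * X i * X j else 0)
    (hbsym : ∀ r, r ≤ m → b r = b (m - r))
    (U : ∀ r : ℕ, Matrix (Fin (b r)) (Fin (b r)) K)
    (hU : ∀ r, r ≤ m → IsUnit (U r))
    (hU0 : U 0 = 1)
    (cval : K) (hcval : cval = if n % 4 = 2 ∨ n % 4 = 3 then 1 else -1)
    (hUm : U m = cval • (1 : Matrix (Fin (b m)) (Fin (b m)) K))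
    (hdual : ∀ s, s < m →
      ∀ (h3 : b (m - (s + 1) + 1) = b s) (h2 : b (m - (s + 1)) = b (s + 1)),
        (U s).map (fun x => (C x : MvPolynomial (Fin (n - 1)) K)) * φ s
          = (Matrix.transpose (φ (m - (s + 1)))).submatrix (Fin.cast h3.symm) (Fin.cast h2.symm)
              * (U (s + 1)).map (fun x => (C x : MvPolynomial (Fin (n - 1)) K)))
    (c : ℕ → Fin (n - 1)) :
    braceFn φ P m Q (by omega) n c
      = - braceFn φ P m Q (by omega) n
          (fun r => if r = 0 then c (n - 2) else if r = 1 then c (n - 1)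
            else if r = n - 2 then c 0 else if r = n - 1 then c 1 else c r) := by
  classical
  obtain ⟨B, hB⟩ : ∃ B, ∀ r, r ≤ m → b r ≤ B :=
    ⟨∑ r ∈ Finset.range (m + 1), b r, fun r hr =>
      Finset.single_le_sum (f := b) (fun _ _ => Nat.zero_le _) (Finset.mem_range.mpr (by omega))⟩
  have hB1 : 1 ≤ B := hb0 ▸ hB 0 (by omega)
  set D : ℕ → Fin (n - 1) → Matrix (Fin B) (Fin B) (MvPolynomial (Fin (n - 1)) K) :=
    fun s a => padM B ((φ s).map (pderiv a)) with hD
  set u : ℕ → Matrix (Fin B) (Fin B) (MvPolynomial (Fin (n - 1)) K) :=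
    fun s => padM B ((U s).map (fun x => (C x : MvPolynomial (Fin (n - 1)) K))) with hu
  set d : ℕ → Matrix (Fin B) (Fin B) (MvPolynomial (Fin (n - 1)) K) :=
    fun s => padM B (φ s) with hd
  set p : Fin (n - 1) → Fin (n - 1) → Matrix (Fin B) (Fin B) (MvPolynomial (Fin (n - 1)) K) :=
    fun i j => padM B (Matrix.of fun (_ : Fin 1) q => C (P i j q)) with hp
  set q : Fin (n - 1) → Fin (n - 1) → Matrix (Fin B) (Fin B) (MvPolynomial (Fin (n - 1)) K) :=
    fun i j => padM B (Matrix.of fun r (_ : Fin 1) => C (Q i j r)) with hq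
  have hud : ∀ s, s < m → u s * d s = (d (m - (s + 1))).transpose * u (s + 1) := by
    intro s hs
    have h3 : b (m - (s + 1) + 1) = b s := by
      rw [hbsym s (by omega)]; congr 1; omega
    have h2 : b (m - (s + 1)) = b (s + 1) := (hbsym (s + 1) (by omega)).symm
    have h := congrArg (padM B) (hdual s hs h3 h2)
    rw [padM_mul B (hB _ (by omega)), padM_mul B (hB _ (by omega)), padM_cast,
      padM_transpose] at h
    exact h
  have hL : ∀ s, s < m → ∀ L : MvPolynomial (Fin (n - 1)) K →ₗ[K] MvPolynomial (Fin (n - 1)) K,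
      u s * (d s).map L = ((d (m - (s + 1))).map L).transpose * u (s + 1) := by
    intro s hs L
    have h := congrArg (fun M => M.map L) (hud s hs)
    simp only [hu] at h
    rw [map_scalar_mul, map_mul_scalar] at h
    exact h
  have hpq : ∀ i j, (d 0).map (quadCoeff i j) = p i j := by
    intro i j
    ext1 x y
    simp only [hd, hp, padM, Matrix.map_apply, hb0]
    split_ifs with h
    · rw [hP, quadCoeff_quad (fun i j => P i j _) (fun i j => by rw [hPsymm])]
      rfl
    · simp
  have hqq : ∀ i j, (d (m - 1)).map (quadCoeff i j) = q i j := by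
    intro i j
    have hb' : b (m - 1 + 1) = 1 := by rw [← hbm]; congr 1; omega
    ext1 x y
    simp only [hd, hq, padM, Matrix.map_apply, hb']
    split_ifs with h
    · rw [hQ, quadCoeff_quad (fun i j => Q i j _) (fun i j => by rw [hQsymm])]
      rfl
    · simp
  have hu0 : ∀ i j, p i j = (q i j).transpose * u 1 := by
    intro i j
    have h := hL 0 (by omega) (quadCoeff i j)
    rw [hpq, zero_add, hqq] at h
    rw [← h, ← hpq]
    simp only [hu, hd, hU0]
    rw [padM_map _ _ _ (map_zero _), Matrix.map_one _ (map_zero _) (map_one _),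
      padM_one_mul B (hB 0 (by omega))]
  have hum : ∀ i j, u (m - 1) * q i j = (C cval : MvPolynomial (Fin (n - 1)) K) • (p i j).transpose := by
    intro i j
    have h := hL (m - 1) (by omega) (quadCoeff i j)
    rw [hqq, show m - 1 + 1 = m by omega, Nat.sub_self, hpq] at h
    rw [h]
    have h1 : u m = (C cval : MvPolynomial (Fin (n - 1)) K) • padM B (1 : Matrix (Fin (b m)) (Fin (b m)) _) := by
      ext1 x y
      simp only [hu, hUm, padM, Matrix.smul_apply, Matrix.map_apply, Matrix.one_apply]
      split_ifs <;> simp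
    rw [h1, Matrix.mul_smul]
    congr 1
    have h2 : (1 : Matrix (Fin (b m)) (Fin (b m)) (MvPolynomial (Fin (n - 1)) K))
        = (1 : Matrix (Fin (b m)) (Fin (b m)) (MvPolynomial (Fin (n - 1)) K)).transpose := by simp
    rw [h2, padM_transpose, ← Matrix.transpose_mul]
    congr 1
    rw [hbm]
    exact padM_one_mul B hB1 _
  have hdD : ∀ s a, (d s).map (pderiv a) = D s a := fun s a =>
    padM_map _ _ _ (map_zero _)
  have hdual' : ∀ s, 1 ≤ s → s + 2 ≤ m → ∀ a,
      u s * D s a = (D (m - (s + 1)) a).transpose * u (s + 1) := by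
    intro s _ hs a
    have h := hL s (by omega) (pderiv a : Derivation K _ _).toLinearMap
    rw [← hdD, ← hdD]
    exact h
  have hanti : ∀ r, 1 ≤ r → r + 1 < m - 1 → ∀ x y,
      D r x * D (r + 1) y = - (D r y * D (r + 1) x) := by
    intro r hr hrm x y
    simp only [hD]
    rw [← padM_mul B (hB _ (by omega)), ← padM_mul B (hB _ (by omega)),
      pderiv_anti _ _ (hdegmid r hr (by omega)) (hdegmid (r + 1) (by omega) (by omega))
        (hcomp r (by omega))]
    ext1 i j
    simp only [padM, Matrix.neg_apply]
    split_ifs <;> simp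
  have hbrace : ∀ c : ℕ → Fin (n - 1), braceFn φ P m Q (by omega) n c
      = (p (c 0) (c 1) * chainProd D 1 ((List.range (m - 2)).map (fun j => c (j + 2)))
          * q (c (n - 2)) (c (n - 1))) ⟨0, hB1⟩ ⟨0, hB1⟩ := by
    intro c
    simp only [hp, hD]
    rw [← braceVec_pad B m hB φ P c (m - 2) (by omega)]
    have hm1 : m - 1 = m - 2 + 1 := by omega
    rw [← padM_cast B (rfl : 1 = 1) (congrArg b hm1), ← padM_mul B (hB _ (by omega))]
    simp only [padM]
    rw [dif_pos ⟨Nat.one_pos, Nat.one_pos⟩]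
    rfl
  have hmain : ∀ i j k l (L : List (Fin (n - 1))), L.length = m - 2 →
      p i j * chainProd D 1 L * q k l = - (p k l * chainProd D 1 L * q i j).transpose := by
    intro i j k l L hLl
    have h1 := chainProd_dual D u m hdual' L 1 le_rfl (by omega)
    rw [hLl, show m - (1 + (m - 2)) = 1 by omega, show 1 + (m - 2) = m - 1 by omega] at h1
    rw [hu0 i j, mul_assoc (q i j).transpose, h1, mul_assoc, mul_assoc, hum,
      chainProd_reverse D (m - 1) hanti L 1 le_rfl (by omega), hLl,
      show m - 2 = n - 4 by omega]
    have hs := sign_lemma (A := MvPolynomial (Fin (n - 1)) K) n hn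
    have hc : (C cval : MvPolynomial (Fin (n - 1)) K)
        = if n % 4 = 2 ∨ n % 4 = 3 then 1 else -1 := by
      rw [hcval]; split_ifs <;> simp
    rw [← hc] at hs
    have hpow : ((-1 : Matrix (Fin B) (Fin B) (MvPolynomial (Fin (n - 1)) K))
        ^ (∑ i ∈ Finset.range (n - 4), i)) * chainProd D 1 L
        = ((-1 : MvPolynomial (Fin (n - 1)) K) ^ (∑ i ∈ Finset.range (n - 4), i))
          • chainProd D 1 L := by
      rcases neg_one_pow_eq_or (MvPolynomial (Fin (n - 1)) K)
        (∑ i ∈ Finset.range (n - 4), i) with h | h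
      all_goals
        rcases Nat.even_or_odd (∑ i ∈ Finset.range (n - 4), i) with he | ho
        · rw [he.neg_one_pow, he.neg_one_pow]; simp
        · rw [ho.neg_one_pow, ho.neg_one_pow]; simp
    rw [hpow, Matrix.transpose_smul, Matrix.mul_smul, Matrix.smul_mul, Matrix.mul_smul,
      Matrix.mul_smul, smul_smul, hs, neg_one_smul]
    simp only [Matrix.transpose_mul, mul_assoc]
  rw [hbrace, hbrace, hmain _ _ _ _ _ (by simp)]
  have hlist : (List.range (m - 2)).map (fun j => (fun r => if r = 0 then c (n - 2)
      else if r = 1 then c (n - 1) else if r = n - 2 then c 0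
      else if r = n - 1 then c 1 else c r) (j + 2))
      = (List.range (m - 2)).map (fun j => c (j + 2)) := by
    apply List.map_congr_left
    intro j hj
    rw [List.mem_range] at hj
    simp only []
    rw [if_neg (by omega), if_neg (by omega), if_neg (by omega), if_neg (by omega)]
  rw [hlist]
  have e1 : n - 2 ≠ 0 := by omega
  have e2 : n - 2 ≠ 1 := by omega
  have e3 : n - 1 ≠ 0 := by omega
  have e4 : n - 1 ≠ 1 := by omega
  have e5 : n - 1 ≠ n - 2 := by omega
  simp only [e1, e2, e3, e4, e5, if_true, if_false, one_ne_zero, Matrix.neg_apply,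
    Matrix.transpose_apply]
end

section
/- With the brace setup below (n ≥ 5), for all pairwise distinct i, j, k ∈ {1,…,n−1} and all a_1, …, a_{n−3} ∈ {1,…,n−1} we have {i, j, k, a_1, …, a_{n−3}} + {j, k, i, a_1, …, a_{n−3}} + {k, i, j, a_1, …, a_{n−3}} = 0. -/
open MvPolynomial

theorem pd_two {K : Type*} [Field K] {N : ℕ} (P : Fin N → Fin N → K)
    (hs : ∀ i j, P i j = P j i) (a d : Fin N) (h : a ≠ d) :
    pderiv a (pderiv d (∑ i : Fin N, ∑ j : Fin N,
        if i ≤ j then (C (P i j) * X i * X j : MvPolynomial (Fin N) K) else 0)) = C (P a d) := by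
  have key : ∀ i j : Fin N, pderiv a (pderiv d
      (if i ≤ j then (C (P i j) * X i * X j : MvPolynomial (Fin N) K) else 0))
      = (if i = a then (if j = d then (if i ≤ j then C (P i j) else 0) else 0) else 0)
        + (if i = d then (if j = a then (if i ≤ j then C (P i j) else 0) else 0) else 0) := by
    intro i j
    have hX : ∀ u v : Fin N, pderiv u (X v : MvPolynomial (Fin N) K)
        = C (if v = u then 1 else 0) := by
      intro u v
      rw [pderiv_X, Pi.single_apply]
      split_ifs <;> simp_all
    by_cases hle : i ≤ j
    · simp only [hle, if_true, Derivation.leibniz, smul_eq_mul, hX, pderiv_C, map_add, mul_zero,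
        zero_add, add_zero]
      by_cases h1 : i = a <;> by_cases h2 : j = d <;> by_cases h3 : i = d <;>
        by_cases h4 : j = a <;> simp_all
    · simp [hle]
  simp only [map_sum, key, Finset.sum_add_distrib]
  simp only [Finset.sum_ite_irrel, Finset.sum_const_zero, Finset.sum_ite_eq', Finset.mem_univ,
    if_true]
  rcases lt_or_gt_of_ne h with h1 | h1
  · simp [h1.le, not_le.mpr h1]
  · simp [h1.le, not_le.mpr h1, hs d a]

theorem pd_one {K : Type*} [Field K] {N : ℕ} (f : MvPolynomial (Fin N) K)
    (hf : f.IsHomogeneous 1) (a d : Fin N) : pderiv a (pderiv d f) = 0 := by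
  have h := hf.pderiv (i := d)
  rw [(totalDegree_eq_zero_iff_eq_C (p := pderiv d f)).1 (by
    have := h.totalDegree_le
    omega), pderiv_C]

theorem braceVec_sum {K : Type*} [Field K] {N : ℕ} {b : ℕ → ℕ}
    (φ : ∀ r : ℕ, Matrix (Fin (b r)) (Fin (b (r + 1))) (MvPolynomial (Fin N) K))
    (P : Fin N → Fin N → Fin (b 1) → K) (c₁ c₂ c₃ : ℕ → Fin N)
    (h12 : ∀ r, 3 ≤ r → c₁ r = c₂ r) (h13 : ∀ r, 3 ≤ r → c₁ r = c₃ r)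
    (h1 : braceVec φ P c₁ 1 + braceVec φ P c₂ 1 + braceVec φ P c₃ 1 = 0) (r : ℕ) :
    braceVec φ P c₁ (r + 1) + braceVec φ P c₂ (r + 1) + braceVec φ P c₃ (r + 1) = 0 := by
  induction r with
  | zero => exact h1
  | succ r ih =>
    have hu : ∀ c : ℕ → Fin N, braceVec φ P c (r + 1 + 1) = Matrix.vecMul (braceVec φ P c (r + 1))
        (Matrix.of fun p q => pderiv (c (r + 1 + 2)) (φ (r + 1 + 1) p q)) := fun c => rfl
    rw [hu, hu, hu, ← h12 (r + 1 + 2) (by omega), ← h13 (r + 1 + 2) (by omega),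
      ← Matrix.add_vecMul, ← Matrix.add_vecMul, ih, Matrix.zero_vecMul]

/-- In the brace setup (`n ≥ 5`), for pairwise distinct `i, j, k`:
`{i, j, k, a_1, …, a_{n−3}} + {j, k, i, a_1, …, a_{n−3}} + {k, i, j, a_1, …, a_{n−3}} = 0`.
(0-based: the common tail `a_1, …, a_{n−3}` occupies positions `3, …, n − 1`, given by the
sequence `c`.) -/
theorem stmt14 (K : Type*) [Field K] (n : ℕ) (hn : 5 ≤ n) (m : ℕ) (hm : m = n - 2)
    (b : ℕ → ℕ) (hbpos : ∀ r, r ≤ m → 0 < b r) (hb0 : b 0 = 1) (hbm : b m = 1)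
    (φ : ∀ r : ℕ, Matrix (Fin (b r)) (Fin (b (r + 1))) (MvPolynomial (Fin (n - 1)) K))
    (hcomp : ∀ r, r + 2 ≤ m → φ r * φ (r + 1) = 0)
    (hdeg1 : ∀ p q, (φ 0 p q).IsHomogeneous 2)
    (hdegm : ∀ p q, (φ (m - 1) p q).IsHomogeneous 2)
    (hdegmid : ∀ r, 1 ≤ r → r + 2 ≤ m → ∀ p q, (φ r p q).IsHomogeneous 1)
    (P : Fin (n - 1) → Fin (n - 1) → Fin (b 1) → K)
    (Q : Fin (n - 1) → Fin (n - 1) → Fin (b (m - 1)) → K)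
    (hPsymm : ∀ i j, P i j = P j i) (hQsymm : ∀ i j, Q i j = Q j i)
    (hP : ∀ (p : Fin (b 0)) (q : Fin (b 1)),
      φ 0 p q = ∑ i : Fin (n - 1), ∑ j : Fin (n - 1),
        if i ≤ j then C (P i j q) * X i * X j else 0)
    (hQ : ∀ (p : Fin (b (m - 1))) (q : Fin (b (m - 1 + 1))),
      φ (m - 1) p q = ∑ i : Fin (n - 1), ∑ j : Fin (n - 1),
        if i ≤ j then C (Q i j p) * X i * X j else 0)
    (i j k : Fin (n - 1)) (hij : i ≠ j) (hjk : j ≠ k) (hik : i ≠ k)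
    (c : ℕ → Fin (n - 1)) :
    braceFn φ P m Q (by omega) n
        (fun r => if r = 0 then i else if r = 1 then j else if r = 2 then k else c r)
      + braceFn φ P m Q (by omega) n
          (fun r => if r = 0 then j else if r = 1 then k else if r = 2 then i else c r)
      + braceFn φ P m Q (by omega) n
          (fun r => if r = 0 then k else if r = 1 then i else if r = 2 then j else c r)
      = 0 := by
  have hv : ∀ q, braceVec φ P (fun r => if r = 0 then i else if r = 1 then j else
        if r = 2 then k else c r) 1 q
      + braceVec φ P (fun r => if r = 0 then j else if r = 1 then k else
        if r = 2 then i else c r) 1 q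
      + braceVec φ P (fun r => if r = 0 then k else if r = 1 then i else
        if r = 2 then j else c r) 1 q = 0 := by
    intro q
    have h0 := congrFun (congrFun (hcomp 0 (by omega)) ⟨0, by omega⟩) q
    rw [Matrix.mul_apply] at h0
    have h3 := congrArg (fun f => pderiv i (pderiv j (pderiv k f))) h0
    have hP2 : ∀ (a d : Fin (n - 1)), a ≠ d → ∀ p s,
        pderiv a (pderiv d (φ 0 p s)) = C (P a d s) := by
      intro a d had p s
      rw [hP]
      exact pd_two (fun i j => P i j s) (fun i j => congrFun (hPsymm i j) s) a d had
    have h1 : ∀ a d p s, pderiv a (pderiv d (φ 1 p s)) = 0 := fun a d p s =>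
      pd_one _ (hdegmid 1 le_rfl (by omega) p s) a d
    simp only [zero_add, map_sum, Derivation.leibniz, smul_eq_mul, map_add, h1, hP2 i j hij,
      hP2 j k hjk, hP2 i k hik, pderiv_C, map_zero, mul_zero, add_zero, Matrix.zero_apply] at h3
    simp only [braceVec, Matrix.vecMul, dotProduct]
    rw [← Finset.sum_add_distrib, ← Finset.sum_add_distrib]
    rw [← h3]
    apply Finset.sum_congr rfl
    intro p _
    simp [hPsymm k i]
    try ring
  have hs := braceVec_sum φ P _ _ _ (fun r hr => by
      simp [show r ≠ 0 by omega, show r ≠ 1 by omega, show r ≠ 2 by omega])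
    (fun r hr => by
      simp [show r ≠ 0 by omega, show r ≠ 1 by omega, show r ≠ 2 by omega])
    (funext hv) (m - 3)
  rw [show m - 3 + 1 = m - 2 by omega] at hs
  unfold braceFn
  simp only [show n - 2 ≠ 0 by omega, show n - 2 ≠ 1 by omega, show n - 2 ≠ 2 by omega,
    show n - 1 ≠ 0 by omega, show n - 1 ≠ 1 by omega, show n - 1 ≠ 2 by omega, if_false]
  rw [← Finset.sum_add_distrib, ← Finset.sum_add_distrib]
  apply Finset.sum_eq_zero
  intro p _
  rw [← add_mul, ← add_mul]
  have := congrFun hs (Fin.cast (congrArg b (by omega)) p)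
  simp only [Pi.add_apply, Pi.zero_apply] at this
  rw [this, zero_mul]
end

section
/- With the brace setup below (n ≥ 5), fix distinct i, j ∈ {1,…,n−1}. For a sequence a_1, …, a_{n−3} that is a permutation of the list 1, 2, …, î, …, ĵ, …, n−1 (the integers 1 to n−1 with i and j omitted, in increasing order), with ν the sign of that permutation, set A := ν·({i, j, a_1, …, a_{n−3}, i} + {i, i, a_1, …, a_{n−3}, j}). Then A does not depend on the choice of the permutation a_1, …, a_{n−3}: any two such choices give the same value of A. -/
open MvPolynomial

section helpers

variable {K : Type*} [Field K] {N : ℕ}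

/-- The standard basis point. -/
def bpt (K : Type*) [Field K] {N : ℕ} (i : Fin N) : Fin N → K := fun a => if a = i then 1 else 0

lemma pderiv_eq_C {f : MvPolynomial (Fin N) K} (hf : f.IsHomogeneous 1) (a i : Fin N) :
    pderiv a f = C (eval (bpt K i) (pderiv a f)) := by
  have h : (pderiv a f).IsHomogeneous 0 := by simpa using hf.pderiv (i := a)
  have h2 := totalDegree_eq_zero_iff_eq_C.mp ((totalDegree_zero_iff_isHomogeneous _).mpr h)
  rw [h2]; simp

lemma eval_bpt_lin {f : MvPolynomial (Fin N) K} (hf : f.IsHomogeneous 1) (i : Fin N) :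
    eval (bpt K i) f = eval (bpt K i) (pderiv i f) := by
  have h := hf.sum_X_mul_pderiv
  have h2 := congrArg (eval (bpt K i)) h
  simp [bpt] at h2
  exact h2.symm

lemma pderiv2_lin {f : MvPolynomial (Fin N) K} (hf : f.IsHomogeneous 1) (a b : Fin N) :
    pderiv b (pderiv a f) = 0 := by
  rw [pderiv_eq_C hf a a, pderiv_C]

/-- The quadratic form with coefficients `Q`. -/
noncomputable def qf (Q : Fin N → Fin N → K) : MvPolynomial (Fin N) K :=
  ∑ i : Fin N, ∑ j : Fin N, if i ≤ j then C (Q i j) * X i * X j else 0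

lemma qf_eval (Q : Fin N → Fin N → K) (i : Fin N) : eval (bpt K i) (qf Q) = Q i i := by
  simp only [qf, map_sum, apply_ite (eval (bpt K i)), map_mul, eval_C, eval_X, map_zero, bpt]
  rw [Finset.sum_eq_single i, Finset.sum_eq_single i] <;> simp +contextual

lemma qf_pderiv (Q : Fin N → Fin N → K) (hQ : ∀ a b, Q a b = Q b a) (i v : Fin N) (h : v ≠ i) :
    eval (bpt K i) (pderiv v (qf Q)) = Q v i := by
  have e1 : eval (bpt K i) (pderiv v (qf Q)) =
      ∑ a : Fin N, ∑ b : Fin N, ((if b = i then if a = v then if a ≤ b then Q a b else 0 else 0 else 0)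
        + (if b = v then if a = i then if a ≤ b then Q a b else 0 else 0 else 0)) := by
    simp only [qf, map_sum]
    refine Finset.sum_congr rfl fun a _ => Finset.sum_congr rfl fun b _ => ?_
    by_cases hab : a ≤ b
    · simp only [hab, if_true, Derivation.leibniz, pderiv_C, pderiv_X, bpt, Pi.single_apply,
        smul_eq_mul, map_add, map_mul, eval_C, eval_X, mul_zero, add_zero, map_zero]
      split_ifs <;> simp_all
    · simp [hab]
  rw [e1]
  simp only [Finset.sum_add_distrib, Finset.sum_ite_eq', Finset.mem_univ, if_true]
  rcases lt_or_gt_of_ne h with h1 | h1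
  · simp [h1.le, not_le.mpr h1]
  · simp [h1.le, not_le.mpr h1, hQ i v]

lemma qf_pderiv2 (Q : Fin N → Fin N → K) (hQ : ∀ a b, Q a b = Q b a) (i u v : Fin N) (h : u ≠ v) :
    eval (bpt K i) (pderiv u (pderiv v (qf Q))) = Q u v := by
  have e1 : eval (bpt K i) (pderiv u (pderiv v (qf Q))) =
      ∑ a : Fin N, ∑ b : Fin N, ((if b = u then if a = v then if a ≤ b then Q a b else 0 else 0 else 0)
        + (if b = v then if a = u then if a ≤ b then Q a b else 0 else 0 else 0)) := by
    simp only [qf, map_sum]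
    refine Finset.sum_congr rfl fun a _ => Finset.sum_congr rfl fun b _ => ?_
    by_cases hab : a ≤ b
    · simp only [hab, if_true, Derivation.leibniz, pderiv_C, pderiv_X, bpt, Pi.single_apply,
        smul_eq_mul, map_add, map_mul, eval_C, eval_X, mul_zero, add_zero, map_zero]
      by_cases h1 : a = v <;> by_cases h2 : b = v <;> by_cases h3 : a = u <;> by_cases h4 : b = u <;>
        simp_all [pderiv_X]
    · simp [hab]
  rw [e1]
  simp only [Finset.sum_add_distrib, Finset.sum_ite_eq', Finset.mem_univ, if_true]
  rcases lt_or_gt_of_ne h with h1 | h1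
  · simp [h1.le, not_le.mpr h1]
  · simp [h1.le, not_le.mpr h1, hQ u v]

/-- Entrywise derivative of a matrix. -/
noncomputable def dM {p q : Type*} (M : Matrix p q (MvPolynomial (Fin N) K)) (a : Fin N) :
    Matrix p q (MvPolynomial (Fin N) K) := fun x y => pderiv a (M x y)

lemma rel_mid {p q s : Type*} [Fintype q] (M : Matrix p q (MvPolynomial (Fin N) K))
    (M' : Matrix q s (MvPolynomial (Fin N) K)) (h : M * M' = 0)
    (hM : ∀ x y, (M x y).IsHomogeneous 1) (hM' : ∀ x y, (M' x y).IsHomogeneous 1) (a b : Fin N) :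
    dM M a * dM M' b = - (dM M b * dM M' a) := by
  rw [eq_neg_iff_add_eq_zero]
  ext1 x y
  have h1 := congrFun (congrFun h x) y
  simp only [Matrix.mul_apply, Matrix.zero_apply] at h1
  have h2 := congrArg (fun f => pderiv b (pderiv a f)) h1
  simp only [map_sum, map_zero, Derivation.leibniz, smul_eq_mul, map_add,
    pderiv2_lin (hM _ _), pderiv2_lin (hM' _ _), mul_zero, zero_add, add_zero] at h2
  simp only [Matrix.add_apply, Matrix.mul_apply, Matrix.zero_apply, dM, ← Finset.sum_add_distrib]
  rw [← h2]
  refine Finset.sum_congr rfl fun z _ => ?_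
  ring

lemma rel_start {q s : Type*} [Fintype q] (P : Fin N → Fin N → q → K)
    (hP : ∀ a b, P a b = P b a)
    (M' : Matrix q s (MvPolynomial (Fin N) K)) (h : ∀ y, ∑ z, qf (fun a b => P a b z) * M' z y = 0)
    (hM' : ∀ x y, (M' x y).IsHomogeneous 1) (i j : Fin N) (hij : i ≠ j) :
    Matrix.vecMul (fun z => C (P i j z)) (dM M' i) +
      Matrix.vecMul (fun z => C (P i i z)) (dM M' j) = 0 := by
  ext1 y
  have h2 := congrArg (fun f => (C : K →+* MvPolynomial (Fin N) K) (eval (bpt K i) (pderiv j f))) (h y)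
  simp only [map_sum, map_zero, Derivation.leibniz, smul_eq_mul, map_add, map_mul] at h2
  simp only [Pi.add_apply, Matrix.vecMul, dotProduct, dM, Pi.zero_apply, ← Finset.sum_add_distrib]
  rw [← h2]
  refine Finset.sum_congr rfl fun z _ => ?_
  rw [qf_eval, qf_pderiv _ (fun a b => by rw [hP]) _ _ hij.symm, eval_bpt_lin (hM' _ _),
    ← pderiv_eq_C (hM' _ _), ← pderiv_eq_C (hM' _ _), hP j i]
  ring

lemma rel_end {p q : Type*} [Fintype q] (Q : Fin N → Fin N → q → K)
    (hQ : ∀ a b, Q a b = Q b a)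
    (M : Matrix p q (MvPolynomial (Fin N) K)) (h : ∀ y, ∑ z, M y z * qf (fun a b => Q a b z) = 0)
    (hM : ∀ x y, (M x y).IsHomogeneous 1) (i u v : Fin N) (hu : u ≠ i) (hv : v ≠ i) (huv : u ≠ v) :
    Matrix.mulVec (dM M u) (fun z => C (Q v i z)) + Matrix.mulVec (dM M v) (fun z => C (Q u i z))
      + Matrix.mulVec (dM M i) (fun z => C (Q u v z)) = 0 := by
  ext1 y
  have h2 := congrArg (fun f => (C : K →+* MvPolynomial (Fin N) K) (eval (bpt K i) (pderiv u (pderiv v f)))) (h y)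
  simp only [map_sum, map_zero, Derivation.leibniz, smul_eq_mul, map_add, map_mul,
    pderiv2_lin (hM _ _), mul_zero, add_zero] at h2
  simp only [Pi.add_apply, Matrix.mulVec, dotProduct, dM, Pi.zero_apply, ← Finset.sum_add_distrib]
  rw [← h2]
  refine Finset.sum_congr rfl fun z _ => ?_
  rw [qf_pderiv2 _ (fun a b => by rw [hQ]) _ _ _ huv, qf_pderiv _ (fun a b => by rw [hQ]) _ _ hu,
    qf_pderiv _ (fun a b => by rw [hQ]) _ _ hv, eval_bpt_lin (hM _ _),
    ← pderiv_eq_C (hM _ _), ← pderiv_eq_C (hM _ _), ← pderiv_eq_C (hM _ _)]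
  ring

variable {b : ℕ → ℕ}
    (φ : ∀ r : ℕ, Matrix (Fin (b r)) (Fin (b (r + 1))) (MvPolynomial (Fin N) K))
    (P : Fin N → Fin N → Fin (b 1) → K)

lemma bv_succ (c : ℕ → Fin N) (r : ℕ) : braceVec φ P c (r + 1) =
    Matrix.vecMul (braceVec φ P c r) (dM (φ (r + 1)) (c (r + 2))) := rfl

lemma bv_congr (c c' : ℕ → Fin N) (r : ℕ) (h : ∀ t, t ≤ r + 1 → c t = c' t) :
    braceVec φ P c r = braceVec φ P c' r := by
  induction r with
  | zero => simp [braceVec, h 0, h 1]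
  | succ r ih => rw [bv_succ, bv_succ, ih (fun t ht => h t (by omega)), h (r + 2) (by omega)]

lemma bv_swap (k : ℕ)
    (hmid : ∀ r, r + 1 ≤ k → ∀ u v, dM (φ (r + 1)) u * dM (φ (r + 2)) v
      = - (dM (φ (r + 1)) v * dM (φ (r + 2)) u))
    (c : ℕ → Fin N) (s : ℕ) (r : ℕ) (hr : r + s + 1 ≤ k) :
    braceVec φ P (fun t => c (Equiv.swap (s + 2) (s + 3) t)) (s + 2 + r)
      = - braceVec φ P c (s + 2 + r) := by
  induction r with
  | zero =>
    change braceVec φ P _ (s + 1 + 1) = - braceVec φ P c (s + 1 + 1)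
    rw [bv_succ, bv_succ, bv_succ φ P c (s + 1), bv_succ φ P c s, bv_congr φ P _ c s,
      Matrix.vecMul_vecMul, Matrix.vecMul_vecMul, hmid s (by omega), Matrix.vecMul_neg]
    · simp
    · intro t ht
      rw [Equiv.swap_apply_of_ne_of_ne] <;> omega
  | succ r ih =>
    rw [← add_assoc, bv_succ, bv_succ, ih (by omega), Matrix.neg_vecMul,
      Equiv.swap_apply_of_ne_of_ne] <;> omega

lemma bv_move (k : ℕ)
    (hmid : ∀ r, r + 1 ≤ k → ∀ u v, dM (φ (r + 1)) u * dM (φ (r + 2)) v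
      = - (dM (φ (r + 1)) v * dM (φ (r + 2)) u)) (i j : Fin N)
    (hst : Matrix.vecMul (fun z => C (P i j z)) (dM (φ 1) i) +
      Matrix.vecMul (fun z => C (P i i z)) (dM (φ 1) j) = 0)
    (c c' : ℕ → Fin N) (h0 : c 0 = i) (h1 : c 1 = j) (h0' : c' 0 = i) (h1' : c' 1 = i)
    (hc : ∀ t, 2 ≤ t → t ≤ k + 2 → c t = c' t) (r : ℕ) (hr : r ≤ k) :
    Matrix.vecMul (braceVec φ P c r) (dM (φ (r + 1)) i) +
      Matrix.vecMul (braceVec φ P c' r) (dM (φ (r + 1)) j) = 0 := by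
  induction r with
  | zero => simpa [braceVec, h0, h1, h0', h1'] using hst
  | succ r ih =>
    rw [bv_succ, bv_succ, Matrix.vecMul_vecMul, Matrix.vecMul_vecMul, hmid r hr _ i, hmid r hr _ j,
      Matrix.vecMul_neg, Matrix.vecMul_neg, ← Matrix.vecMul_vecMul, ← Matrix.vecMul_vecMul,
      hc (r + 2) (by omega) (by omega), ← neg_add, ← Matrix.add_vecMul, ih (by omega)]
    simp

/-- The brace in convenient form. -/
noncomputable def br (k : ℕ) (Q : Fin N → Fin N → Fin (b (k + 2)) → K) (c : ℕ → Fin N) :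
    MvPolynomial (Fin N) K :=
  braceVec φ P c (k + 1) ⬝ᵥ (fun p => C (Q (c (k + 3)) (c (k + 4)) p))

lemma br_swap (k : ℕ) (Q : Fin N → Fin N → Fin (b (k + 2)) → K)
    (hmid : ∀ r, r + 1 ≤ k → ∀ u v, dM (φ (r + 1)) u * dM (φ (r + 2)) v
      = - (dM (φ (r + 1)) v * dM (φ (r + 2)) u)) (i j : Fin N)
    (hst : Matrix.vecMul (fun z => C (P i j z)) (dM (φ 1) i) +
      Matrix.vecMul (fun z => C (P i i z)) (dM (φ 1) j) = 0)
    (hend : ∀ i u v, u ≠ i → v ≠ i → u ≠ v →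
      Matrix.mulVec (dM (φ (k + 1)) u) (fun z => C (Q v i z))
      + Matrix.mulVec (dM (φ (k + 1)) v) (fun z => C (Q u i z))
      + Matrix.mulVec (dM (φ (k + 1)) i) (fun z => C (Q u v z)) = 0)
    (c c' : ℕ → Fin N) (h0 : c 0 = i) (h1 : c 1 = j) (h0' : c' 0 = i) (h1' : c' 1 = i)
    (hc : ∀ t, 2 ≤ t → t ≤ k + 3 → c t = c' t) (hl : c (k + 4) = i) (hl' : c' (k + 4) = j)
    (hui : c (k + 2) ≠ i) (huj : c (k + 2) ≠ j) (hvi : c (k + 3) ≠ i) (hvj : c (k + 3) ≠ j)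
    (huv : c (k + 2) ≠ c (k + 3)) (s : ℕ) (hs : s ≤ k) :
    br φ P k Q (fun t => c (Equiv.swap (s + 2) (s + 3) t))
      + br φ P k Q (fun t => c' (Equiv.swap (s + 2) (s + 3) t))
      = - (br φ P k Q c + br φ P k Q c') := by
  rcases Nat.lt_or_ge s k with hs' | hs'
  · obtain ⟨r, rfl⟩ : ∃ r, k = s + 1 + r := ⟨k - (s + 1), by omega⟩
    have key : ∀ c : ℕ → Fin N, br φ P (s + 1 + r) Q (fun t => c (Equiv.swap (s + 2) (s + 3) t))
        = - br φ P (s + 1 + r) Q c := by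
      intro c
      have h := bv_swap φ P (s + 1 + r) hmid c s r (by omega)
      have h' : braceVec φ P (fun t => c (Equiv.swap (s + 2) (s + 3) t)) (s + 1 + r + 1)
          = - braceVec φ P c (s + 1 + r + 1) := by
        have e : s + 2 + r = s + 1 + r + 1 := by omega
        rw [e] at h
        exact h
      unfold br
      rw [h', neg_dotProduct]
      beta_reduce
      rw [Equiv.swap_apply_of_ne_of_ne (by omega) (by omega),
        Equiv.swap_apply_of_ne_of_ne (by omega) (by omega)]
    rw [key, key]
    ring
  · obtain rfl : s = k := le_antisymm hs hs'
    have key : ∀ c : ℕ → Fin N, c (s + 2) ≠ c (s + 4) → c (s + 3) ≠ c (s + 4) →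
        c (s + 2) ≠ c (s + 3) →
        br φ P s Q (fun t => c (Equiv.swap (s + 2) (s + 3) t)) + br φ P s Q c
        = - (Matrix.vecMul (braceVec φ P c s) (dM (φ (s + 1)) (c (s + 4))) ⬝ᵥ
            (fun z => C (Q (c (s + 2)) (c (s + 3)) z))) := by
      intro c ha hb hcc
      have h := hend (c (s + 4)) (c (s + 2)) (c (s + 3)) ha hb hcc
      have h' := congrArg (fun w => braceVec φ P c s ⬝ᵥ w) h
      simp only [dotProduct_add, Matrix.dotProduct_mulVec, dotProduct_zero] at h'
      unfold br
      rw [bv_succ, bv_succ, bv_congr φ P _ c s]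
      · simp only [Equiv.swap_apply_left, Equiv.swap_apply_right]
        rw [Equiv.swap_apply_of_ne_of_ne (by omega) (by omega)]
        linear_combination h'
      · intro t ht
        rw [Equiv.swap_apply_of_ne_of_ne] <;> omega
    have k1 := key c (by rwa [hl]) (by rwa [hl]) huv
    have k2 := key c' (by rwa [hl', ← hc _ (by omega) (by omega)])
      (by rwa [hl', ← hc _ (by omega) (by omega)])
      (by rwa [← hc _ (by omega) (by omega), ← hc _ (by omega) (by omega)])
    have k3 := bv_move φ P s hmid i j hst c c' h0 h1 h0' h1'
      (fun t h2 h3 => hc t h2 (by omega)) s le_rfl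
    have k4 := congrArg (fun w => w ⬝ᵥ (fun z => C (Q (c (s + 2)) (c (s + 3)) z))) k3
    simp only [add_dotProduct, zero_dotProduct] at k4
    rw [hl] at k1
    rw [hl', ← hc (s + 2) (by omega) (by omega), ← hc (s + 3) (by omega) (by omega)] at k2
    linear_combination k1 + k2 - k4

/-- The index sequence. -/
def cseq {k : ℕ} (e : Fin (k + 2) → Fin N) (x y z : Fin N) (τ : Equiv.Perm (Fin (k + 2))) :
    ℕ → Fin N := fun r => if r = 0 then x else if r = 1 then y
      else if h : r - 2 < k + 2 then e (τ ⟨r - 2, h⟩) else z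

lemma cseq_mid {k : ℕ} (e : Fin (k + 2) → Fin N) (x y z : Fin N) (τ : Equiv.Perm (Fin (k + 2)))
    (t : ℕ) (ht : t < k + 2) : cseq e x y z τ (t + 2) = e (τ ⟨t, ht⟩) := by
  simp [cseq, ht]

lemma cseq_swap {k : ℕ} (e : Fin (k + 2) → Fin N) (x y z : Fin N) (τ : Equiv.Perm (Fin (k + 2)))
    (s : Fin (k + 1)) : cseq e x y z (τ * Equiv.swap s.castSucc s.succ) =
      fun t => cseq e x y z τ (Equiv.swap (s.val + 2) (s.val + 3) t) := by
  have hs := s.isLt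
  funext t
  by_cases h1 : t = s.val + 2
  · subst h1
    rw [Equiv.swap_apply_left, cseq_mid _ _ _ _ _ s.val (by omega),
      cseq_mid _ _ _ _ _ (s.val + 1) (by omega)]
    have : (⟨s.val, by omega⟩ : Fin (k + 2)) = s.castSucc := rfl
    rw [this, Equiv.Perm.mul_apply, Equiv.swap_apply_left]
    rfl
  by_cases h2 : t = s.val + 3
  · subst h2
    rw [Equiv.swap_apply_right, cseq_mid _ _ _ _ _ s.val (by omega),
      cseq_mid _ _ _ _ _ (s.val + 1) (by omega)]
    have : (⟨s.val + 1, by omega⟩ : Fin (k + 2)) = s.succ := rfl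
    rw [this, Equiv.Perm.mul_apply, Equiv.swap_apply_right]
    rfl
  rw [Equiv.swap_apply_of_ne_of_ne h1 h2]
  unfold cseq
  split_ifs with h3 h4 h5
  · rfl
  · rfl
  · rw [Equiv.Perm.mul_apply, Equiv.swap_apply_of_ne_of_ne]
    · intro h; apply h1; have := congrArg Fin.val h; simp at this; omega
    · intro h; apply h2; have := congrArg Fin.val h; simp at this; omega
  · rfl

lemma sign_indep {k : ℕ} {M : Type*} [AddCommGroup M] (G : Equiv.Perm (Fin (k + 2)) → M)
    (hG : ∀ τ (s : Fin (k + 1)), G (τ * Equiv.swap s.castSucc s.succ) = - G τ)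
    (τ₁ τ₂ : Equiv.Perm (Fin (k + 2))) :
    (Equiv.Perm.sign τ₁ : ℤ) • G τ₁ = (Equiv.Perm.sign τ₂ : ℤ) • G τ₂ := by
  have key : ∀ σ : Equiv.Perm (Fin (k + 2)), ∀ τ,
      (Equiv.Perm.sign (τ * σ) : ℤ) • G (τ * σ) = (Equiv.Perm.sign τ : ℤ) • G τ := by
    intro σ
    have hσ : σ ∈ Submonoid.closure
        (Set.range fun s : Fin (k + 1) => Equiv.swap s.castSucc s.succ) := by
      rw [Equiv.Perm.mclosure_swap_castSucc_succ]; trivial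
    induction hσ using Submonoid.closure_induction with
    | mem x hx =>
      obtain ⟨s, rfl⟩ := hx
      intro τ
      have hne : s.castSucc ≠ s.succ := (Fin.castSucc_lt_succ).ne
      simp only [hG, Equiv.Perm.sign_mul, Equiv.Perm.sign_swap hne]
      simp
    | one => intro τ; simp
    | mul x y _ _ hx hy => intro τ; rw [← mul_assoc, hy, hx]
  have := key (τ₁⁻¹ * τ₂) τ₁
  rw [mul_inv_cancel_left] at this
  exact this.symm

end helpers

/-- In the brace setup (`n ≥ 5`), for distinct `i, j`, let `e` be the
increasing enumeration of `{1,…,n−1} \\ {i,j}` and let a permutation `τ ∈ S_{n−3}` give the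
middle entries `a_s = e(τ(s))` with `ν = sign(τ)`. Then
`A = ν·({i, j, a_1, …, a_{n−3}, i} + {i, i, a_1, …, a_{n−3}, j})` is independent of `τ`. -/
theorem stmt15 (K : Type*) [Field K] (n : ℕ) (hn : 5 ≤ n) (m : ℕ) (hm : m = n - 2)
    (b : ℕ → ℕ) (hbpos : ∀ r, r ≤ m → 0 < b r) (hb0 : b 0 = 1) (hbm : b m = 1)
    (φ : ∀ r : ℕ, Matrix (Fin (b r)) (Fin (b (r + 1))) (MvPolynomial (Fin (n - 1)) K))
    (hcomp : ∀ r, r + 2 ≤ m → φ r * φ (r + 1) = 0)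
    (hdeg1 : ∀ p q, (φ 0 p q).IsHomogeneous 2)
    (hdegm : ∀ p q, (φ (m - 1) p q).IsHomogeneous 2)
    (hdegmid : ∀ r, 1 ≤ r → r + 2 ≤ m → ∀ p q, (φ r p q).IsHomogeneous 1)
    (P : Fin (n - 1) → Fin (n - 1) → Fin (b 1) → K)
    (Q : Fin (n - 1) → Fin (n - 1) → Fin (b (m - 1)) → K)
    (hPsymm : ∀ i j, P i j = P j i) (hQsymm : ∀ i j, Q i j = Q j i)
    (hP : ∀ (p : Fin (b 0)) (q : Fin (b 1)),
      φ 0 p q = ∑ i : Fin (n - 1), ∑ j : Fin (n - 1),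
        if i ≤ j then C (P i j q) * X i * X j else 0)
    (hQ : ∀ (p : Fin (b (m - 1))) (q : Fin (b (m - 1 + 1))),
      φ (m - 1) p q = ∑ i : Fin (n - 1), ∑ j : Fin (n - 1),
        if i ≤ j then C (Q i j p) * X i * X j else 0)
    (i j : Fin (n - 1)) (hij : i ≠ j)
    (e : Fin (n - 3) → Fin (n - 1)) (he : StrictMono e)
    (hrange : ∀ x : Fin (n - 1), (∃ s, e s = x) ↔ (x ≠ i ∧ x ≠ j))
    (τ₁ τ₂ : Equiv.Perm (Fin (n - 3))) :
    (Equiv.Perm.sign τ₁ : ℤ) •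
        (braceFn φ P m Q (by omega) n
            (fun r => if r = 0 then i else if r = 1 then j
              else if h : r - 2 < n - 3 then e (τ₁ ⟨r - 2, h⟩) else i)
          + braceFn φ P m Q (by omega) n
              (fun r => if r = 0 then i else if r = 1 then i
                else if h : r - 2 < n - 3 then e (τ₁ ⟨r - 2, h⟩) else j))
      = (Equiv.Perm.sign τ₂ : ℤ) •
          (braceFn φ P m Q (by omega) n
              (fun r => if r = 0 then i else if r = 1 then j
                else if h : r - 2 < n - 3 then e (τ₂ ⟨r - 2, h⟩) else i)
            + braceFn φ P m Q (by omega) n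
                (fun r => if r = 0 then i else if r = 1 then i
                  else if h : r - 2 < n - 3 then e (τ₂ ⟨r - 2, h⟩) else j)) := by
  obtain ⟨k, rfl⟩ : ∃ k, n = k + 5 := ⟨n - 5, by omega⟩
  obtain rfl : m = k + 3 := by omega
  have hlin : ∀ r, r ≤ k → ∀ p q, (φ (r + 1) p q).IsHomogeneous 1 := fun r hr =>
    hdegmid (r + 1) (by omega) (by omega)
  have hmid : ∀ r, r + 1 ≤ k → ∀ u v, dM (φ (r + 1)) u * dM (φ (r + 2)) v
      = - (dM (φ (r + 1)) v * dM (φ (r + 2)) u) := fun r hr u v =>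
    rel_mid _ _ (hcomp (r + 1) (by omega)) (hlin r (by omega)) (hlin (r + 1) hr) u v
  have hst : Matrix.vecMul (fun z => C (P i j z)) (dM (φ 1) i) +
      Matrix.vecMul (fun z => C (P i i z)) (dM (φ 1) j) = 0 := by
    refine rel_start P hPsymm (φ 1) (fun y => ?_) (hlin 0 (by omega)) i j hij
    have h := congrFun (congrFun (hcomp 0 (by omega)) ⟨0, by omega⟩) y
    simp only [Matrix.mul_apply, Matrix.zero_apply, hP] at h
    exact h
  have hend : ∀ i u v : Fin (k + 5 - 1), u ≠ i → v ≠ i → u ≠ v →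
      Matrix.mulVec (dM (φ (k + 1)) u) (fun z => C (Q v i z))
      + Matrix.mulVec (dM (φ (k + 1)) v) (fun z => C (Q u i z))
      + Matrix.mulVec (dM (φ (k + 1)) i) (fun z => C (Q u v z)) = 0 := by
    intro i u v h1 h2 h3
    refine rel_end (q := Fin (b (k + 2))) Q hQsymm (φ (k + 1)) (fun y => ?_) (hlin k le_rfl) i u v h1 h2 h3
    have h := congrFun (congrFun (hcomp (k + 1) (by omega)) y) ⟨0, hbpos _ (by omega)⟩
    rw [Matrix.mul_apply] at h
    refine Eq.trans (Finset.sum_congr rfl fun z _ => ?_) h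
    exact congrArg _ (hQ z ⟨0, hbpos (k + 3) (by omega)⟩).symm
  have hbr : ∀ c, braceFn φ P (k + 3) Q (by omega) (k + 5) c = br φ P k Q c := fun c => rfl
  have hei : ∀ s, e s ≠ i := fun s => ((hrange _).mp ⟨s, rfl⟩).1
  have hej : ∀ s, e s ≠ j := fun s => ((hrange _).mp ⟨s, rfl⟩).2
  have main := sign_indep (k := k)
    (fun τ => br φ P k Q (cseq (k := k) e i j i τ) + br φ P k Q (cseq (k := k) e i i j τ)) (by
      intro τ s
      simp only [cseq_swap]
      have hs := s.isLt
      refine br_swap φ P k Q hmid i j hst hend _ _ rfl rfl rfl rfl ?_ ?_ ?_ ?_ ?_ ?_ ?_ ?_ s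
        (by omega)
      · intro t h2 h3
        obtain ⟨t, rfl⟩ : ∃ t', t = t' + 2 := ⟨t - 2, by omega⟩
        rw [cseq_mid _ _ _ _ _ t (by omega), cseq_mid _ _ _ _ _ t (by omega)]
      · simp [cseq]
      · simp [cseq]
      · rw [cseq_mid _ _ _ _ _ k (by omega)]; exact hei _
      · rw [cseq_mid _ _ _ _ _ k (by omega)]; exact hej _
      · rw [cseq_mid _ _ _ _ _ (k + 1) (by omega)]; exact hei _
      · rw [cseq_mid _ _ _ _ _ (k + 1) (by omega)]; exact hej _
      · rw [cseq_mid _ _ _ _ _ k (by omega), cseq_mid _ _ _ _ _ (k + 1) (by omega)]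
        intro h
        have := congrArg Fin.val (τ.injective (he.injective h))
        simp at this) τ₁ τ₂
  exact main
end

section
/- With the bracket and brace setup below (n ≥ 5), assume additionally the brace antisymmetry {i, j, a_1, …, a_{n−4}, k, ℓ} = −{k, ℓ, a_1, …, a_{n−4}, i, j} for all indices. Define σ = (1 2 ⋯ m) ∈ S_m, [[a_1,…,a_m]] := Σ_{k=1}^{m} [a_{σ^{2k}(1)}, …, a_{σ^{2k}(m)}], and Ω_j := (−1)^j·[[1, 2, …, ĵ, …, n−1]] for 1 ≤ j ≤ n−1. For distinct indices let ε_{ij} (resp. ε_{ijk}) denote the sign of the permutation taking 1, 2, …, n−1 to i, j, 1, …, îĵ, …, n−1 (resp. to i, j, k, 1, …, îĵk̂, …, n−1), where hats denote omission. Then for all pairwise distinct i, j, k ∈ {1,…,n−1}: (12) ∂²Ω_k/∂x_i∂x_j = (−1)^{n+1}·ε_{ijk}·2n·{i, i, 1, …, îĵk̂, …, n−1, j, j}; (13) ∂²Ω_j/∂x_i² = ε_{ij}·2n·{i, i, 1, …, îĵ, …, n−1, i}; (14) ∂²Ω_j/∂x_i∂x_j − ∂²Ω_k/∂x_i∂x_k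 = (−1)^n·ε_{ijk}·2n·{i, i, 1, …, îĵk̂, …, n−1, j, k}; (15) ∂²Ω_i/∂x_i² − ∂²Ω_j/∂x_i∂x_j − ∂²Ω_k/∂x_i∂x_k = (−1)^{n+1}·ε_{ijk}·2n·{i, j, 1, …, îĵk̂, …, n−1, k, i}. -/
open MvPolynomial

/-- The row vector `(∂φ_1/∂x_{a_1})(∂φ_2/∂x_{a_2})⋯(∂φ_r/∂x_{a_r})` (0-based indexing). -/
noncomputable def brkVec {K : Type*} [Field K] {N : ℕ} {b : ℕ → ℕ}
    (φ : ∀ r : ℕ, Matrix (Fin (b r)) (Fin (b (r + 1))) (MvPolynomial (Fin N) K))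
    (a : ℕ → Fin N) : ∀ r : ℕ, Fin (b r) → MvPolynomial (Fin N) K
  | 0 => fun _ => 1
  | (r + 1) => Matrix.vecMul (brkVec φ a r) (fun p q => pderiv (a r) (φ r p q))

/-- The bracket `[a_1, …, a_m]`, a `1 × 1` matrix (since `b m = 1`) identified with a
polynomial via the sum of its entries. -/
noncomputable def brk {K : Type*} [Field K] {N : ℕ} {b : ℕ → ℕ}
    (φ : ∀ r : ℕ, Matrix (Fin (b r)) (Fin (b (r + 1))) (MvPolynomial (Fin N) K))
    (m : ℕ) (a : ℕ → Fin N) : MvPolynomial (Fin N) K :=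
  ∑ j : Fin (b m), brkVec φ a m j

/-- The double bracket `[[a_1, …, a_m]] = Σ_{k=1}^{m} [a_{σ^{2k}(1)}, …, a_{σ^{2k}(m)}]`,
where `σ = (1 2 ⋯ m)`. -/
noncomputable def dbrk {K : Type*} [Field K] {N : ℕ} {b : ℕ → ℕ}
    (φ : ∀ r : ℕ, Matrix (Fin (b r)) (Fin (b (r + 1))) (MvPolynomial (Fin N) K))
    (m : ℕ) (a : ℕ → Fin N) : MvPolynomial (Fin N) K :=
  ∑ k ∈ Finset.range m, brk φ m (fun r => a ((r + 2 * (k + 1)) % m))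

/-- The 0-based sequence `1, 2, …, ĵ, …, n−1` (omission of `j`). -/
def omitIdx {N : ℕ} (j : Fin N) : ℕ → Fin N := fun r =>
  if h : r < (j : ℕ) then ⟨r, lt_trans h j.isLt⟩
  else if h2 : r + 1 < N then ⟨r + 1, h2⟩ else j

/-- The quadratic form `Ω_j = (−1)^j·[[1, 2, …, ĵ, …, n−1]]` (0-based `j`, whence the
exponent `j + 1`). -/
noncomputable def OmegaForm {K : Type*} [Field K] {N : ℕ} {b : ℕ → ℕ}
    (φ : ∀ r : ℕ, Matrix (Fin (b r)) (Fin (b (r + 1))) (MvPolynomial (Fin N) K))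
    (m : ℕ) (j : Fin N) : MvPolynomial (Fin N) K :=
  (-1 : MvPolynomial (Fin N) K) ^ ((j : ℕ) + 1) * dbrk φ m (omitIdx j)

/-- Abstract system of braces with left ends and right ends. -/
structure BraceSys (M : ℕ) (L A A' V : Type*) [CommRing V] where
  mid : A → List L → A' → V
  p : L → L → A
  P2 : L → A
  q : L → L → A'
  Q2 : L → A'
  psymm : ∀ x y, p x y = p y x
  qsymm : ∀ x y, q x y = q y x
  swap : ∀ α β s x y t, s.length + t.length + 1 = M →
    mid α (s ++ x :: y :: t) β = - mid α (s ++ y :: x :: t) β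
  Lrel : ∀ β x y z w, w.length = M →
    mid (p x y) (z :: w) β + mid (p x z) (y :: w) β + mid (p y z) (x :: w) β = 0
  Rrel : ∀ α x y z w, w.length = M →
    mid α (w ++ [z]) (q x y) + mid α (w ++ [y]) (q x z) + mid α (w ++ [x]) (q y z) = 0
  HL : ∀ β x y w, w.length = M → mid (p x y) (x :: w) β = - mid (P2 x) (y :: w) β
  HR : ∀ α x y w, w.length = M → mid α (w ++ [x]) (q x y) = - mid α (w ++ [y]) (Q2 x)
  twoL : ∀ x w β, mid (p x x) w β = 2 * mid (P2 x) w β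
  twoR : ∀ α x w, mid α w (q x x) = 2 * mid α w (Q2 x)
  zeroL : ∀ x w β, w.length = M → mid (P2 x) (x :: w) β = 0
  anti1 : ∀ x y z t w, w.length = M + 1 → mid (p x y) w (q z t) = - mid (p z t) w (q x y)
  anti2 : ∀ x y z w, w.length = M + 1 → mid (p x y) w (Q2 z) = - mid (P2 z) w (q x y)
  anti3 : ∀ x y w, w.length = M + 1 → mid (P2 x) w (Q2 y) = - mid (P2 y) w (Q2 x)

/-- Sum over even shifts. -/
def evSum {V : Type*} [AddCommMonoid V] (m : ℕ) (f : ℕ → V) : V :=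
  ∑ k ∈ Finset.range m, f (2 * (k + 1))

section evsum
set_option linter.unusedSectionVars false
variable {V : Type*} [CommRing V]

lemma evSum_shift {m : ℕ} (f : ℕ → V) (hf : ∀ r, f (r + m) = f r) :
    evSum m (fun r => f (r + 2)) = evSum m f := by
  unfold evSum
  have h := Finset.sum_range_succ (fun k => f (2 * (k + 1))) m
  rw [Finset.sum_range_succ'] at h
  have h2 : f (2 * (m + 1)) = f (2 * (0 + 1)) := by
    rw [show 2 * (m + 1) = 2 * (0 + 1) + m + m by ring, hf, hf]
  rw [h2] at h
  exact add_right_cancel h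

lemma per_mul {m : ℕ} (f : ℕ → V) (hf : ∀ r, f (r + m) = f r) (r : ℕ) : f (r % m) = f r :=
  Function.Periodic.map_mod_nat hf r

lemma evSum_pair {m : ℕ} (f : ℕ → V) (hf : ∀ r, f (r + m) = f r) :
    evSum m f + evSum m (fun r => f (r + 1)) = 2 * ∑ r ∈ Finset.range m, f r := by
  have h0 : ∑ r ∈ Finset.range (m + m), f r = 2 * ∑ r ∈ Finset.range m, f r := by
    rw [Finset.sum_range_add, two_mul]
    congr 1
    exact Finset.sum_congr rfl fun r _ => by rw [add_comm, hf]
  have h1 : ∀ n : ℕ, ∑ r ∈ Finset.range (n + n), f r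
      = ∑ k ∈ Finset.range n, (f (2 * k) + f (2 * k + 1)) := by
    intro n
    induction n with
    | zero => simp
    | succ n ih =>
      rw [show n + 1 + (n + 1) = n + n + 1 + 1 by ring, Finset.sum_range_succ,
        Finset.sum_range_succ, ih, Finset.sum_range_succ _ n, two_mul, add_assoc]
  rw [← h0, h1, Finset.sum_add_distrib]
  have e1 := evSum_shift f hf
  have e2 := evSum_shift (fun r => f (r + 1)) (fun r => by rw [add_right_comm, hf])
  congr 1
  · unfold evSum
    have h := Finset.sum_range_succ (fun k => f (2 * k)) m
    rw [Finset.sum_range_succ'] at h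
    have h2 : f (2 * m) = f (2 * 0) := by
      rw [show 2 * m = 2 * 0 + m + m by ring, hf, hf]
    rw [h2] at h
    exact add_right_cancel h
  · unfold evSum
    have h := Finset.sum_range_succ (fun k => f (2 * k + 1)) m
    rw [Finset.sum_range_succ'] at h
    have h2 : f (2 * m + 1) = f (2 * 0 + 1) := by
      rw [show 2 * m + 1 = 2 * 0 + 1 + m + m by ring, hf, hf]
    rw [h2] at h
    exact add_right_cancel h

lemma evSum_add (m : ℕ) (f g : ℕ → V) :
    evSum m (fun r => f r + g r) = evSum m f + evSum m g := Finset.sum_add_distrib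

/-- Periodic delta -/
def pdel (m : ℕ) (v : V) (r : ℕ) : V := if r % m = 0 then v else 0

lemma pdel_per (m : ℕ) (v : V) (r : ℕ) : pdel m v (r + m) = pdel m v r := by
  simp [pdel]

lemma pdel_sum (m : ℕ) (hm : 0 < m) (v : V) : ∑ r ∈ Finset.range m, pdel m v r = v := by
  rw [Finset.sum_eq_single 0]
  · simp [pdel]
  · intro b hb hb0
    rw [Finset.mem_range] at hb
    simp [pdel, Nat.mod_eq_of_lt hb, hb0]
  · intro h
    simp at h
    omega

lemma evSum_decomp {m : ℕ} (hm : 3 ≤ m) (g : ℕ → V) (hg : ∀ r, g (r + m) = g r) (c d0 d1 d2 : V)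
    (h0 : g 0 = c + d0) (h1 : g 1 = c + d1) (h2 : g 2 = c + d2)
    (hr : ∀ r, 3 ≤ r → r < m → g r = c) (r : ℕ) :
    g (r + 2) = c + pdel m d0 (r + 2) + pdel m d1 (r + 1) + pdel m d2 r := by
  have key : ∀ r, r < m →
      g (r + 2) = c + pdel m d0 (r + 2) + pdel m d1 (r + 1) + pdel m d2 r := by
    intro r hlt
    unfold pdel
    rw [Nat.mod_eq_of_lt hlt]
    rcases Nat.lt_or_ge (r + 2) m with h | h
    · rw [Nat.mod_eq_of_lt h, Nat.mod_eq_of_lt (by omega : r + 1 < m)]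
      rcases Nat.eq_zero_or_pos r with rfl | hp
      · simp [h2]
      · rw [hr _ (by omega) h]
        simp
        intro h
        omega
    · rcases (by omega : r + 2 = m ∨ r + 1 = m) with h' | h'
      · have : r + 2 = 0 + m := by omega
        rw [this, hg, Nat.mod_eq_of_lt (by omega : r + 1 < m), h0]
        have : r ≠ 0 := by omega
        simp [this]
      · have : r + 2 = 1 + m := by omega
        rw [this, hg, h', h1]
        have : r ≠ 0 := by omega
        have h3 : (1 + m) % m = 1 := by
          rw [Nat.add_mod_right, Nat.mod_eq_of_lt (by omega)]
        simp [this, h3]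
  have := key (r % m) (Nat.mod_lt _ (by omega))
  have e1 := per_mul (m := m) (fun r => g (r + 2)) (fun r => by rw [add_right_comm, hg]) r
  have e2 := per_mul (m := m) (fun r => pdel m d0 (r + 2)) (fun r => by rw [add_right_comm, pdel_per]) r
  have e3 := per_mul (m := m) (fun r => pdel m d1 (r + 1)) (fun r => by rw [add_right_comm, pdel_per]) r
  have e4 := per_mul (m := m) (fun r => pdel m d2 (r)) (fun r => by rw [pdel_per]) r
  beta_reduce at e1 e2 e3 e4
  rw [e1, e2, e3, e4] at this
  exact this

lemma evSum_pdel_zero {m : ℕ} (hm : 3 ≤ m) (f : ℕ → V) (hf : ∀ r, f (r + m) = f r)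
    (h02 : f 0 + f 2 = 0) (h1 : f 1 = 0) (hr : ∀ r, 3 ≤ r → r < m → f r = 0) (a : ℕ) :
    evSum m (fun r => f (r + a)) = 0 := by
  have hd := evSum_decomp hm f hf 0 (f 0) 0 (f 2) (by simp) (by simpa using h1) (by simp) hr
  rw [← evSum_shift (fun r => f (r + a)) (fun r => by rw [add_right_comm, hf])]
  have h3 : (fun r => f (r + 2 + a)) = fun r => pdel m (f 0) (r + 2 + a) + pdel m (f 2) (r + a) := by
    funext r
    rw [show r + 2 + a = r + a + 2 by ring, hd]
    simp [pdel]
  rw [h3, evSum_add, evSum_shift (fun r => pdel m (f 0) (r + a))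
    (fun r => by rw [add_right_comm, pdel_per]), ← evSum_add]
  unfold evSum
  apply Finset.sum_eq_zero
  intro k _
  unfold pdel
  beta_reduce
  split_ifs
  · exact h02
  · simp

lemma evSum_main {m : ℕ} (hm : 3 ≤ m) (g : ℕ → V) (hg : ∀ r, g (r + m) = g r) (x d0 d1 d2 : V)
    (h0 : g 0 = 2 * x + d0) (h1 : g 1 = 2 * x + d1) (h2 : g 2 = 2 * x + d2)
    (h02 : d0 + d2 = 2 * x) (hd1 : d1 = 2 * x)
    (hr : ∀ r, 3 ≤ r → r < m → g r = 2 * x) :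
    evSum m g = 2 * (m + 2) * x := by
  have hd := evSum_decomp hm g hg (2 * x) d0 d1 d2 h0 h1 h2 hr
  rw [← evSum_shift g hg]
  simp only [hd]
  rw [evSum_add, evSum_add, evSum_add, evSum_shift (fun r => pdel m d0 r) (pdel_per m d0)]
  have e1 : evSum m (fun r => pdel m d0 r) + evSum m (fun r => pdel m d2 r)
      = evSum m (fun r => pdel m d1 r) := by
    rw [← evSum_add]
    congr 1
    funext r
    unfold pdel
    split_ifs
    · rw [h02, hd1]
    · simp
  have e2 := evSum_pair (pdel m d1) (pdel_per m d1)
  rw [pdel_sum m (by omega)] at e2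
  have e3 : evSum m (fun _ => 2 * x) = m * (2 * x) := by
    simp [evSum]
  rw [e3]
  linear_combination e1 + e2 + 2 * hd1

end evsum

namespace BraceSys
variable {M : ℕ} {L A A' V : Type*} [CommRing V] (S : BraceSys M L A A' V)

lemma mv_front (α β x) (s t : List L) (h : s.length + t.length = M) :
    S.mid α (s ++ x :: t) β = (-1) ^ s.length * S.mid α (x :: (s ++ t)) β := by
  induction s using List.reverseRecOn generalizing t with
  | nil => simp
  | append_singleton s y ih =>
    simp only [List.length_append, List.length_cons, List.length_nil] at h
    rw [List.append_assoc, List.singleton_append, S.swap _ _ _ _ _ _ (by omega),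
      ih (y :: t) (by simp; omega)]
    simp [pow_succ]

lemma mv_end (α β x) (s t : List L) (h : s.length + t.length = M) :
    S.mid α (s ++ x :: t) β = (-1) ^ t.length * S.mid α (s ++ t ++ [x]) β := by
  induction t generalizing s with
  | nil => simp
  | cons y t ih =>
    simp only [List.length_cons] at h
    have := ih (s ++ [y]) (by simp; omega)
    rw [S.swap _ _ _ _ _ _ (by omega)]
    simp only [List.append_assoc, List.nil_append, List.length_cons, List.cons_append] at this ⊢
    rw [this]
    ring

lemma block (α β) (s t : List L) (h : s.length + t.length = M + 1) :
    S.mid α (s ++ t) β = (-1) ^ (s.length * t.length) * S.mid α (t ++ s) β := by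
  induction s generalizing t with
  | nil => simp
  | cons y s ih =>
    simp only [List.length_cons] at h
    have h1 := S.mv_end α β y [] (s ++ t) (by simp; omega)
    have h2 := ih (t ++ [y]) (by simp; omega)
    simp only [List.nil_append, List.append_assoc, List.length_append,
      List.length_cons, List.length_nil, List.cons_append] at h1 h2 ⊢
    rw [h1, h2]
    have : ((-1 : V) ^ s.length) ^ 2 = 1 := by rw [← pow_mul, mul_comm, pow_mul]; simp
    ring_nf
    ring_nf at this
    rw [this]
    ring

/-- second derivative of a bracket -/
def G (d : L) (l : List L) (u v : L) : V :=
  S.mid (S.p (l.headD d) u) l.tail.dropLast (S.q v (l.getLastD d)) +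
  S.mid (S.p (l.headD d) v) l.tail.dropLast (S.q u (l.getLastD d))

lemma G_eq (d x z u v : L) (w : List L) : S.G d (x :: (w ++ [z])) u v =
    S.mid (S.p x u) w (S.q v z) + S.mid (S.p x v) w (S.q u z) := by
  have h1 : (x :: (w ++ [z])).getLastD d = z := by
    rw [← List.cons_append, List.getLastD_concat]
  simp only [G, List.headD_cons, List.tail_cons, List.dropLast_concat, h1]

def D (d : L) (l : List L) (u v : L) : V :=
  evSum (M + 3) (fun r => S.G d (l.rotate r) u v)

lemma rot_per (l : List L) {m : ℕ} (h : l.length = m) (r : ℕ) : l.rotate (r + m) = l.rotate r := by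
  rw [← List.rotate_mod, ← List.rotate_mod l r, h, Nat.add_mod_right]

lemma sq1 (k : ℕ) : ((-1 : V) ^ k) * (-1) ^ k = 1 := by
  rw [← pow_add, ← two_mul, pow_mul]; simp

lemma D_swap0 (d : L) (x y : L) (t : List L) (ht : t.length = M + 1) (u v : L) (a : ℕ) :
    evSum (M + 3) (fun r => S.G d ((x :: y :: t).rotate (r + a)) u v +
      S.G d ((y :: x :: t).rotate (r + a)) u v) = 0 := by
  refine evSum_pdel_zero (by omega) (fun r => S.G d ((x :: y :: t).rotate r) u v +
      S.G d ((y :: x :: t).rotate r) u v) ?_ ?_ ?_ ?_ a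
  · intro r
    rw [rot_per _ (by simp [ht]), rot_per _ (by simp [ht])]
  · have r2 : ∀ x y : L, (x :: y :: t).rotate 2 = t ++ [x, y] := fun x y => by
      simp [List.rotate_cons_succ]
    simp only [r2, List.rotate_zero]
    obtain ⟨w, z, hw⟩ : ∃ w z, t = w ++ [z] :=
      ⟨_, _, (List.dropLast_append_getLast (by rintro rfl; simp at ht)).symm⟩
    have hwl : w.length = M := by simpa [hw] using ht
    have e1 : ∀ x y, S.G d (x :: y :: t) u v = S.mid (S.p x u) (y :: w) (S.q v z) +
        S.mid (S.p x v) (y :: w) (S.q u z) := fun x y => by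
      rw [hw, ← List.cons_append, G_eq]
    obtain ⟨c, w', hw'⟩ : ∃ c w', t = c :: w' := by
      cases t with
      | nil => simp at ht
      | cons c w' => exact ⟨c, w', rfl⟩
    have hwl' : w'.length = M := by simpa [hw'] using ht
    have e2 : ∀ x y, S.G d (t ++ [x, y]) u v = S.mid (S.p c u) (w' ++ [x]) (S.q v y) +
        S.mid (S.p c v) (w' ++ [x]) (S.q u y) := fun x y => by
      rw [hw', show c :: w' ++ [x, y] = c :: ((w' ++ [x]) ++ [y]) by simp, G_eq]
    rw [e1, e1, e2, e2]
    have a1 := S.Lrel (S.q v z) x u y w hwl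
    have a2 := S.Lrel (S.q u z) x v y w hwl
    have a3 := S.mv_end (S.p x y) (S.q v z) u [] w (by simpa using hwl)
    have a4 := S.mv_end (S.p x y) (S.q u z) v [] w (by simpa using hwl)
    have a5 := S.Rrel (S.p x y) v z u w hwl
    rw [S.qsymm v u, S.qsymm z u] at a5
    rw [S.psymm u y] at a1
    rw [S.psymm v y] at a2
    have b1 := S.Rrel (S.p c u) v y x w' hwl'
    have b2 := S.Rrel (S.p c v) u y x w' hwl'
    have b3 := S.mv_front (S.p c u) (S.q x y) v w' [] (by simpa using hwl')
    have b4 := S.mv_front (S.p c v) (S.q x y) u w' [] (by simpa using hwl')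
    have b5 := S.Lrel (S.q x y) c u v w' hwl'
    rw [S.qsymm y x] at b1 b2
    have c1 := S.anti1 x y u v t ht
    simp only [List.nil_append, List.append_nil, hwl, hwl'] at a3 a4 b3 b4
    rw [← hw'] at b5
    rw [← hw] at a5
    linear_combination a1 + a2 + b1 + b2 - a3 - a4 - b3 - b4 - (-1) ^ M * a5 - (-1) ^ M * b5
      + (-1) ^ M * c1
  · have r1 : ∀ x y : L, (x :: y :: t).rotate 1 = y :: (t ++ [x]) := fun x y => by
      simp [List.rotate_cons_succ]
    simp only [r1, G_eq]
    have a1 := S.anti1 x u v y t ht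
    have a2 := S.anti1 x v u y t ht
    rw [S.psymm v y, S.qsymm x u] at a1
    rw [S.psymm u y, S.qsymm x v] at a2
    linear_combination a1 + a2
  · intro r hr1 hr2
    obtain ⟨k, rfl⟩ : ∃ k, r = 2 + k := ⟨r - 2, by omega⟩
    have rr : ∀ x y : L, (x :: y :: t).rotate (2 + k) = t.drop k ++ (x :: y :: t.take k) := by
      intro x y
      rw [← List.rotate_rotate]
      have : (x :: y :: t).rotate 2 = t ++ [x, y] := by simp [List.rotate_cons_succ]
      rw [this, List.rotate_eq_drop_append_take (by simp; omega),
        List.drop_append_of_le_length (by omega), List.take_append_of_le_length (by omega)]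
      simp
    simp only [rr]
    have hk : (t.take k).length = k := by simp; omega
    have hk2 : (t.drop k).length = M + 1 - k := by simp [ht]
    generalize t.take k = t1 at *
    generalize t.drop k = t2 at *
    obtain ⟨w, z, rfl⟩ : ∃ w z, t1 = w ++ [z] :=
      ⟨_, _, (List.dropLast_append_getLast (by rintro rfl; simp at hk; omega)).symm⟩
    obtain ⟨c, w', rfl⟩ : ∃ c w', t2 = c :: w' := by
      cases t2 with
      | nil => simp at hk2; omega
      | cons c w' => exact ⟨c, w', rfl⟩
    simp only [List.length_append, List.length_cons, List.length_nil] at hk hk2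
    have e : ∀ x y : L, c :: w' ++ x :: y :: (w ++ [z]) = c :: ((w' ++ x :: y :: w) ++ [z]) := by
      simp
    rw [e, e, G_eq, G_eq, S.swap _ _ w' x y w (by omega), S.swap _ _ w' x y w (by omega)]
    ring

lemma D_swap (d : L) (s : List L) (x y : L) (t : List L) (ht : s.length + t.length = M + 1)
    (u v : L) : S.D d (s ++ x :: y :: t) u v = - S.D d (s ++ y :: x :: t) u v := by
  have h := S.D_swap0 d x y (t ++ s) (by simp; omega) u v (t.length + 2)
  have e : ∀ (x y : L) (r : ℕ), (x :: y :: (t ++ s)).rotate (r + (t.length + 2)) =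
      (s ++ x :: y :: t).rotate r := by
    intro x y r
    rw [add_comm, ← List.rotate_rotate]
    congr 1
    exact List.rotate_append_length_eq (x :: y :: t) s
  simp only [e] at h
  rw [evSum_add] at h
  unfold D
  linear_combination h


set_option linter.unusedSimpArgs false

/-- Splitting of the rotations of a list `x :: y :: t`. -/
lemma rot_generic (t : List L) (r m : ℕ) (ht : t.length + 2 = m) (h3 : 3 ≤ r)
    (hr : r < m) : ∃ w z c w', t = (w ++ [z]) ++ (c :: w') ∧ w.length + 3 = r ∧
      ∀ x y : L, (x :: y :: t).rotate r = c :: ((w' ++ x :: y :: w) ++ [z]) := by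
  obtain ⟨k, rfl⟩ : ∃ k, r = 2 + k := ⟨r - 2, by omega⟩
  have rr : ∀ x y : L, (x :: y :: t).rotate (2 + k) = t.drop k ++ (x :: y :: t.take k) := by
    intro x y
    rw [← List.rotate_rotate]
    have : (x :: y :: t).rotate 2 = t ++ [x, y] := by simp [List.rotate_cons_succ]
    rw [this, List.rotate_eq_drop_append_take (by simp; omega),
      List.drop_append_of_le_length (by omega), List.take_append_of_le_length (by omega)]
    simp
  have hk : (t.take k).length = k := by simp; omega
  have hk2 : (t.drop k).length = t.length - k := by simp
  have htt := (List.take_append_drop k t).symm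
  generalize t.take k = t1 at *
  generalize t.drop k = t2 at *
  obtain ⟨w, z, rfl⟩ : ∃ w z, t1 = w ++ [z] :=
    ⟨_, _, (List.dropLast_append_getLast (by rintro rfl; simp at hk; omega)).symm⟩
  obtain ⟨c, w', rfl⟩ : ∃ c w', t2 = c :: w' := by
    cases t2 with
    | nil => simp at hk2; omega
    | cons c w' => exact ⟨c, w', rfl⟩
  simp only [List.length_append, List.length_cons, List.length_nil] at hk hk2
  refine ⟨w, z, c, w', htt, by omega, fun x y => ?_⟩
  rw [rr]
  simp

lemma rot_two (x y : L) (t : List L) : (x :: y :: t).rotate 2 = t ++ [x, y] := by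
  simp [List.rotate_cons_succ]

lemma rot_one (x : L) (t : List L) : (x :: t).rotate 1 = t ++ [x] := by
  simp [List.rotate_cons_succ]

lemma sgn_even (k : ℕ) : (((-1 : V) ^ M) ^ (2 * (k + 1))) = 1 := by
  rw [pow_mul, ← pow_mul (-1) M 2, mul_comm M 2, pow_mul]; simp

lemma sgn_per (r : ℕ) : (((-1 : V) ^ M) ^ (r + (M + 3))) = ((-1 : V) ^ M) ^ r := by
  rw [pow_add]
  have : ((-1 : V) ^ M) ^ (M + 3) = 1 := by
    rw [← pow_mul]
    apply Even.neg_one_pow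
    rcases Nat.even_or_odd M with h | h
    · exact h.mul_right _
    · exact Even.mul_left (by obtain ⟨k, rfl⟩ := h; exact ⟨k + 2, by ring⟩) _
  rw [this, mul_one]

lemma evSum_sgn (f : ℕ → V) :
    evSum (M + 3) f = evSum (M + 3) (fun r => ((-1 : V) ^ M) ^ r * f r) := by
  unfold evSum
  refine Finset.sum_congr rfl fun k _ => ?_
  beta_reduce
  rw [sgn_even, one_mul]

lemma sgn_gen (a b : ℕ) (h : a + 1 + (b + 1) = M + 1) :
    (-1 : V) ^ ((b + 1) * (a + 1)) = ((-1 : V) ^ M) ^ (a + 3) := by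
  rw [← pow_mul]
  apply neg_one_pow_congr
  have : M = a + b + 1 := by omega
  subst this
  simp only [Nat.even_mul, Nat.even_add_one, Nat.even_add]
  have : ¬ Even 3 := by decide
  tauto

lemma split_last (t : List L) (ht : t.length = M + 1) : ∃ w z, t = w ++ [z] ∧ w.length = M := by
  obtain ⟨w, z, hw⟩ : ∃ w z, t = w ++ [z] :=
      ⟨_, _, (List.dropLast_append_getLast (by rintro rfl; simp at ht)).symm⟩
  exact ⟨w, z, hw, by simpa [hw] using ht⟩

lemma split_first (t : List L) (ht : t.length = M + 1) : ∃ c w, t = c :: w ∧ w.length = M := by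
  cases t with
  | nil => simp at ht
  | cons c w' => exact ⟨c, w', rfl, by simpa using ht⟩

lemma G_rot0 (d x y z u v : L) (w : List L) : S.G d ((x :: y :: (w ++ [z])).rotate 0) u v =
    S.mid (S.p x u) (y :: w) (S.q v z) + S.mid (S.p x v) (y :: w) (S.q u z) := by
  rw [List.rotate_zero, ← List.cons_append, G_eq]

lemma G_rot1 (d x y u v : L) (t : List L) : S.G d ((x :: y :: t).rotate 1) u v =
    S.mid (S.p y u) t (S.q v x) + S.mid (S.p y v) t (S.q u x) := by
  rw [rot_one, List.cons_append, G_eq]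

lemma G_rot2 (d x y c u v : L) (w : List L) : S.G d ((x :: y :: c :: w).rotate 2) u v =
    S.mid (S.p c u) (w ++ [x]) (S.q v y) + S.mid (S.p c v) (w ++ [x]) (S.q u y) := by
  rw [rot_two, show c :: w ++ [x, y] = c :: ((w ++ [x]) ++ [y]) by simp, G_eq]

/-- evaluation for (14) -/
lemma eval14 (d i j k : L) (W : List L) (hW : W.length = M + 1) :
    S.D d (k :: i :: W) i j + S.D d (j :: i :: W) i k
      = 2 * ((M + 3 : ℕ) + 2) * ((-1) ^ M * S.mid (S.P2 i) W (S.q j k)) := by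
  unfold D
  rw [← evSum_add, evSum_sgn]
  have he : (-1 : V) ^ M * (-1) ^ M = 1 := sq1 M
  set e := (-1 : V) ^ M with hedef
  set U := S.mid (S.P2 i) W (S.q j k) with hU
  have hU' : S.mid (S.p j k) W (S.Q2 i) = - U := S.anti2 j k i W hW
  refine evSum_main (by omega) _ ?_ (e * U) (e * U) (2 * (e * U)) (e * U) ?_ ?_ ?_ (by ring)
    rfl ?_
  · intro r
    rw [sgn_per, rot_per _ (by simp [hW]), rot_per _ (by simp [hW])]
  · obtain ⟨w, z, rfl, hw⟩ := split_last W hW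
    rw [G_rot0, G_rot0, pow_zero, one_mul]
    have a1 := S.HL (S.q j z) i k w hw
    have a2 := S.HL (S.q k z) i j w hw
    have a3 := S.mv_end (S.P2 i) (S.q j z) k [] w (by simpa using hw)
    have a4 := S.mv_end (S.P2 i) (S.q k z) j [] w (by simpa using hw)
    have a5 := S.Rrel (S.P2 i) j k z w hw
    have a6 := S.mv_end (S.p j k) (S.q i z) i [] w (by simpa using hw)
    have a7 := S.HR (S.p j k) i z w hw
    rw [S.psymm i k] at a1
    rw [S.psymm i j] at a2
    rw [S.psymm k j]
    simp only [List.nil_append, hw, ← hedef] at a3 a4 a6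
    rw [← hU] at a5
    linear_combination a1 + a2 - a3 - a4 - e * a5 + 2 * a6 + 2 * e * a7 - 2 * e * hU'
  · rw [G_rot1, G_rot1, pow_one]
    have a1 := S.twoL i W (S.q j k)
    have a2 := S.anti1 i j i k W hW
    rw [S.qsymm k j]
    rw [← hU] at a1
    linear_combination 2 * e * a1 + e * a2
  · obtain ⟨c, w, rfl, hw⟩ := split_first W hW
    rw [G_rot2, G_rot2, pow_two, he, one_mul]
    have a1 := S.Rrel (S.p c i) j i k w hw
    have a2 := S.mv_front (S.p c i) (S.q j k) i w [] (by simpa using hw)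
    have a3 := S.HL (S.q j k) i c w hw
    have a4 := S.twoR (S.p c j) i (w ++ [k])
    have a5 := S.twoR (S.p c k) i (w ++ [j])
    have a6 := S.mv_front (S.p c j) (S.Q2 i) k w [] (by simpa using hw)
    have a7 := S.mv_front (S.p c k) (S.Q2 i) j w [] (by simpa using hw)
    have a8 := S.Lrel (S.Q2 i) c j k w hw
    simp only [List.append_nil, hw, ← hedef] at a2 a6 a7
    rw [S.psymm i c] at a3
    rw [S.qsymm i k] at a1
    linear_combination a1 - a2 - e * a3 + a4 + a5 + 2 * a6 + 2 * a7 + 2 * e * a8 - 2 * e * hU'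
  · intro r hr1 hr2
    obtain ⟨w1, z, c, w2, rfl, hl, hrot⟩ := rot_generic W r (M + 3) (by omega) hr1 hr2
    rw [hrot, hrot, G_eq, G_eq]
    simp only [List.length_append, List.length_cons, List.length_nil] at hW
    have hb := S.block (S.P2 i) (S.q j k) (w1 ++ [z]) (c :: w2) (by simp; omega)
    simp only [List.length_append, List.length_cons, List.length_nil] at hb
    rw [mul_comm (w1.length + (0 + 1)), zero_add, sgn_gen w1.length w2.length (by omega), hl, ← hU] at hb
    set U' := S.mid (S.P2 i) (c :: w2 ++ (w1 ++ [z])) (S.q j k) with hU2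
    have hU2' : S.mid (S.p j k) (c :: w2 ++ (w1 ++ [z])) (S.Q2 i) = - U' :=
      S.anti2 j k i _ (by simp; omega)
    set s := (((-1 : V) ^ M) ^ r) with hs
    have hss : s * s = 1 := by
      rw [hs, ← pow_mul]; exact sq1 _
    set η := (-1 : V) ^ w2.length with hη
    set θ := (-1 : V) ^ w1.length with hθ
    have hηη : η * η = 1 := sq1 _
    have hθθ : θ * θ = 1 := sq1 _
    have hηθ : η * θ = - e := by
      rw [hη, hθ, hedef, ← pow_add, show M = w2.length + w1.length + 1 by omega]; ring
    suffices h : S.mid (S.p c i) (w2 ++ k :: i :: w1) (S.q j z) +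
        S.mid (S.p c j) (w2 ++ k :: i :: w1) (S.q i z) +
      (S.mid (S.p c i) (w2 ++ j :: i :: w1) (S.q k z) +
        S.mid (S.p c k) (w2 ++ j :: i :: w1) (S.q i z)) = 2 * e * U' by
      rw [h, hb]; ring
    -- first kind
    have f1 : ∀ j k, S.mid (S.p c i) (w2 ++ k :: i :: w1) (S.q j z) =
        η * θ * S.mid (S.P2 i) ((c :: w2 ++ w1) ++ [k]) (S.q j z) := by
      intro j k
      have a1 := S.mv_front (S.p c i) (S.q j z) i (w2 ++ [k]) w1 (by simp; omega)
      have a2 := S.HL (S.q j z) i c (w2 ++ k :: w1) (by simp; omega)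
      have a3 := S.mv_end (S.P2 i) (S.q j z) k (c :: w2) w1 (by simp; omega)
      simp only [List.append_assoc, List.cons_append, List.nil_append, List.length_append,
        List.length_cons, List.length_nil, zero_add, pow_succ, ← hη, ← hθ] at a1 a2 a3 ⊢
      rw [S.psymm i c] at a2
      linear_combination a1 - η * a2 + η * a3
    have f2 : ∀ j k, S.mid (S.p c j) (w2 ++ k :: i :: w1) (S.q i z) =
        - θ * η * S.mid (S.p c j) (k :: (w2 ++ w1 ++ [z])) (S.Q2 i) := by
      intro j k
      have a1 := S.mv_end (S.p c j) (S.q i z) i (w2 ++ [k]) w1 (by simp; omega)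
      have a2 := S.HR (S.p c j) i z (w2 ++ k :: w1) (by simp; omega)
      have a3 := S.mv_front (S.p c j) (S.Q2 i) k w2 (w1 ++ [z]) (by simp; omega)
      simp only [List.append_assoc, List.cons_append, List.nil_append, List.length_append,
        List.length_cons, List.length_nil, zero_add, pow_succ, ← hη, ← hθ] at a1 a2 a3 ⊢
      linear_combination a1 + θ * a2 - θ * a3
    rw [f1, f1, f2, f2]
    have a1 := S.Rrel (S.P2 i) j k z (c :: w2 ++ w1) (by simp; omega)
    have a2 := S.Lrel (S.Q2 i) c j k (w2 ++ w1 ++ [z]) (by simp; omega)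
    simp only [List.append_assoc, List.cons_append] at a1 a2 hU2 hU2' ⊢
    rw [← hU2] at a1
    linear_combination η * θ * a1 - η * θ * a2 + η * θ * hU2' - 2 * U' * hηθ

/-- evaluation for (12) -/
lemma eval12 (d i j : L) (W : List L) (hW : W.length = M + 1) :
    S.D d (j :: i :: W) i j
      = 2 * ((M + 3 : ℕ) + 2) * ((-1) ^ M * S.mid (S.P2 i) W (S.Q2 j)) := by
  unfold D
  rw [evSum_sgn]
  have he : (-1 : V) ^ M * (-1) ^ M = 1 := sq1 M
  set e := (-1 : V) ^ M with hedef
  set U := S.mid (S.P2 i) W (S.Q2 j) with hU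
  have hU' : S.mid (S.P2 j) W (S.Q2 i) = - U := S.anti3 j i W hW
  refine evSum_main (by omega) _ ?_ (e * U) (e * U) (2 * (e * U)) (e * U) ?_ ?_ ?_ (by ring)
    rfl ?_
  · intro r
    rw [sgn_per, rot_per _ (by simp [hW])]
  · obtain ⟨w, z, rfl, hw⟩ := split_last W hW
    rw [G_rot0, pow_zero, one_mul]
    have a1 := S.HL (S.q j z) i j w hw
    have a3 := S.mv_end (S.P2 i) (S.q j z) j [] w (by simpa using hw)
    have a5 := S.HR (S.P2 i) j z w hw
    have a6 := S.mv_end (S.p j j) (S.q i z) i [] w (by simpa using hw)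
    have a7 := S.HR (S.p j j) i z w hw
    have a8 := S.twoL j (w ++ [z]) (S.Q2 i)
    rw [S.psymm i j] at a1
    simp only [List.nil_append, hw, ← hedef] at a3 a6
    rw [← hU] at a5
    linear_combination a1 - a3 - e * a5 + a6 + e * a7 - e * a8 - 2 * e * hU'
  · rw [G_rot1, pow_one]
    have a1 := S.twoL i W (S.q j j)
    have a2 := S.twoR (S.P2 i) j W
    rw [← hU] at a2
    obtain ⟨w, z, hWw, hw⟩ := split_last W hW
    obtain ⟨c, w', hWc, hw'⟩ := split_first W hW
    -- the brace `{i j W i j}` vanishes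
    have a3 : S.mid (S.p i j) W (S.q i j) = 0 := by
      have b1 := S.Lrel (S.q i j) i j c w' hw'
      have b2 := S.mv_end (S.p i c) (S.q i j) j [] w' (by simpa using hw')
      have b3 := S.mv_end (S.p j c) (S.q i j) i [] w' (by simpa using hw')
      have b4 := S.HR (S.p i c) j i w' hw'
      have b5 := S.HR (S.p j c) i j w' hw'
      have b6 := S.mv_front (S.p i c) (S.Q2 j) i w' [] (by simpa using hw')
      have b7 := S.mv_front (S.p j c) (S.Q2 i) j w' [] (by simpa using hw')
      have b8 := S.HL (S.Q2 j) i c w' hw'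
      have b9 := S.HL (S.Q2 i) j c w' hw'
      simp only [List.nil_append, List.append_nil, hw', ← hedef] at b2 b3 b6 b7
      rw [S.qsymm j i] at b4
      rw [← hWc] at b1 b8 b9
      rw [← hU] at b8
      linear_combination b1 - b2 - b3 - e * b4 - e * b5 + e * b6 + e * b7 + e * e * b8 + e * e * b9
        - e * e * hU'
    linear_combination e * a1 + 2 * e * a2 + e * a3
  · obtain ⟨c, w, rfl, hw⟩ := split_first W hW
    rw [G_rot2, pow_two, he, one_mul]
    have a1 := S.HR (S.p c i) j i w hw
    have a2 := S.mv_front (S.p c i) (S.Q2 j) i w [] (by simpa using hw)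
    have a3 := S.HL (S.Q2 j) i c w hw
    have a4 := S.twoR (S.p c j) i (w ++ [j])
    have a6 := S.mv_front (S.p c j) (S.Q2 i) j w [] (by simpa using hw)
    have a8 := S.HL (S.Q2 i) j c w hw
    simp only [List.append_nil, hw, ← hedef] at a2 a6
    rw [S.psymm i c] at a3
    rw [S.psymm j c] at a8
    linear_combination a1 - a2 - e * a3 + a4 + 2 * a6 + 2 * e * a8 - 2 * e * hU'
  · intro r hr1 hr2
    obtain ⟨w1, z, c, w2, rfl, hl, hrot⟩ := rot_generic W r (M + 3) (by omega) hr1 hr2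
    rw [hrot, G_eq]
    simp only [List.length_append, List.length_cons, List.length_nil] at hW
    have hb := S.block (S.P2 i) (S.Q2 j) (w1 ++ [z]) (c :: w2) (by simp; omega)
    simp only [List.length_append, List.length_cons, List.length_nil] at hb
    rw [mul_comm (w1.length + (0 + 1)), zero_add, sgn_gen w1.length w2.length (by omega), hl, ← hU] at hb
    set U' := S.mid (S.P2 i) (c :: w2 ++ (w1 ++ [z])) (S.Q2 j) with hU2
    have hU2' : S.mid (S.P2 j) (c :: w2 ++ (w1 ++ [z])) (S.Q2 i) = - U' :=
      S.anti3 j i _ (by simp; omega)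
    set s := (((-1 : V) ^ M) ^ r) with hs
    have hss : s * s = 1 := by
      rw [hs, ← pow_mul]; exact sq1 _
    set η := (-1 : V) ^ w2.length with hη
    set θ := (-1 : V) ^ w1.length with hθ
    have hηθ : η * θ = - e := by
      rw [hη, hθ, hedef, ← pow_add, show M = w2.length + w1.length + 1 by omega]; ring
    suffices h : S.mid (S.p c i) (w2 ++ j :: i :: w1) (S.q j z) +
        S.mid (S.p c j) (w2 ++ j :: i :: w1) (S.q i z) = 2 * e * U' by
      rw [h, hb]; ring
    -- first kind
    have f1 : ∀ j k, S.mid (S.p c i) (w2 ++ k :: i :: w1) (S.q j z) =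
        η * θ * S.mid (S.P2 i) ((c :: w2 ++ w1) ++ [k]) (S.q j z) := by
      intro j k
      have a1 := S.mv_front (S.p c i) (S.q j z) i (w2 ++ [k]) w1 (by simp; omega)
      have a2 := S.HL (S.q j z) i c (w2 ++ k :: w1) (by simp; omega)
      have a3 := S.mv_end (S.P2 i) (S.q j z) k (c :: w2) w1 (by simp; omega)
      simp only [List.append_assoc, List.cons_append, List.nil_append, List.length_append,
        List.length_cons, List.length_nil, zero_add, pow_succ, ← hη, ← hθ] at a1 a2 a3 ⊢
      rw [S.psymm i c] at a2
      linear_combination a1 - η * a2 + η * a3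
    have f2 : ∀ j k, S.mid (S.p c j) (w2 ++ k :: i :: w1) (S.q i z) =
        - θ * η * S.mid (S.p c j) (k :: (w2 ++ w1 ++ [z])) (S.Q2 i) := by
      intro j k
      have a1 := S.mv_end (S.p c j) (S.q i z) i (w2 ++ [k]) w1 (by simp; omega)
      have a2 := S.HR (S.p c j) i z (w2 ++ k :: w1) (by simp; omega)
      have a3 := S.mv_front (S.p c j) (S.Q2 i) k w2 (w1 ++ [z]) (by simp; omega)
      simp only [List.append_assoc, List.cons_append, List.nil_append, List.length_append,
        List.length_cons, List.length_nil, zero_add, pow_succ, ← hη, ← hθ] at a1 a2 a3 ⊢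
      linear_combination a1 + θ * a2 - θ * a3
    rw [f1, f2]
    have a1 := S.HR (S.P2 i) j z (c :: w2 ++ w1) (by simp; omega)
    have a2 := S.HL (S.Q2 i) j c (w2 ++ w1 ++ [z]) (by simp; omega)
    rw [S.psymm j c] at a2
    simp only [List.append_assoc, List.cons_append] at a1 a2 hU2 hU2' ⊢
    rw [← hU2] at a1
    linear_combination η * θ * a1 - η * θ * a2 + η * θ * hU2' - 2 * U' * hηθ

/-- evaluation for (15) -/
lemma eval15 (d i j k : L) (W : List L) (hW : W.length = M + 1) :
    S.D d (j :: k :: W) i i + S.D d (i :: k :: W) i j + S.D d (j :: i :: W) i k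
      = 2 * ((M + 3 : ℕ) + 2) * (- (-1) ^ M * S.mid (S.p i j) W (S.q k i)) := by
  unfold D
  rw [← evSum_add, ← evSum_add, evSum_sgn, S.qsymm k i]
  have he : (-1 : V) ^ M * (-1) ^ M = 1 := sq1 M
  set e := (-1 : V) ^ M with hedef
  set T := S.mid (S.p i j) W (S.q i k) with hT
  have hT' : S.mid (S.p i k) W (S.q i j) = - T := S.anti1 i k i j W hW
  set U := S.mid (S.P2 i) W (S.q j k) with hU
  have hU' : S.mid (S.p j k) W (S.Q2 i) = - U := S.anti2 j k i W hW
  refine evSum_main (by omega) _ ?_ (- e * T) (- e * T - e * U) (2 * (- e * T))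
    (- e * T + e * U) ?_ ?_ ?_ (by ring) rfl ?_
  · intro r
    rw [sgn_per, rot_per _ (by simp [hW]), rot_per _ (by simp [hW]), rot_per _ (by simp [hW])]
  · obtain ⟨w, z, rfl, hw⟩ := split_last W hW
    rw [G_rot0, G_rot0, G_rot0, pow_zero, one_mul]
    have a0 := S.Lrel (S.q i z) i j k w hw
    have a1 := S.HL (S.q k z) i j w hw
    have a2 := S.HL (S.q j z) i k w hw
    have a3 := S.twoL i (k :: w) (S.q j z)
    have a4 := S.mv_end (S.p i j) (S.q i z) k [] w (by simpa using hw)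
    have a5 := S.mv_end (S.p i k) (S.q i z) j [] w (by simpa using hw)
    have a6 := S.Rrel (S.p i j) i k z w hw
    have a7 := S.Rrel (S.p i k) i j z w hw
    have a8 := S.mv_end (S.p i j) (S.q k z) i [] w (by simpa using hw)
    have a9 := S.mv_end (S.p i k) (S.q j z) i [] w (by simpa using hw)
    have b1 := S.mv_end (S.P2 i) (S.q j z) k [] w (by simpa using hw)
    have b2 := S.mv_end (S.P2 i) (S.q k z) j [] w (by simpa using hw)
    have b3 := S.Rrel (S.P2 i) j k z w hw
    rw [S.psymm j i]
    simp only [List.nil_append, hw, ← hedef] at a4 a5 a8 a9 b1 b2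
    rw [← hU] at b3
    rw [← hT] at a6
    rw [hT'] at a7
    linear_combination a0 + 2 * a4 - a5 + 2 * e * a6 - e * a7 - 2 * a8 + a9 - 1 * a1 - a2 + a3
      + b1 + b2 + e * b3 + 4 * a8 - 2 * a9 + 2 * a2
  · rw [G_rot1, G_rot1, G_rot1, pow_one]
    have a1 := S.twoL i W (S.q j k)
    have a2 := S.twoR (S.p j k) i W
    rw [S.qsymm k j, S.psymm k j, S.psymm k i, S.qsymm j i]
    rw [← hU] at a1
    linear_combination e * a1 + e * a2 + 4 * e * hT' + 2 * e * hU'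
  · obtain ⟨c, w, rfl, hw⟩ := split_first W hW
    rw [G_rot2, G_rot2, G_rot2, pow_two, he, one_mul]
    have a1 := S.mv_front (S.p c i) (S.q j k) i w [] (by simpa using hw)
    have a2 := S.HL (S.q j k) i c w hw
    have a3 := S.twoR (S.p c k) i (w ++ [j])
    have a4 := S.HR (S.p c j) i k w hw
    have a5 := S.mv_front (S.p c i) (S.q i k) j w [] (by simpa using hw)
    have a6 := S.Lrel (S.q i k) c i j w hw
    have a7 := S.mv_front (S.p c j) (S.q i k) i w [] (by simpa using hw)
    have b1 := S.mv_front (S.p c j) (S.Q2 i) k w [] (by simpa using hw)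
    have b2 := S.mv_front (S.p c k) (S.Q2 i) j w [] (by simpa using hw)
    have b3 := S.Lrel (S.Q2 i) c j k w hw
    simp only [List.append_nil, hw, ← hedef] at a1 a5 a7 b1 b2
    rw [S.psymm i c] at a2
    rw [S.qsymm k i]
    linear_combination a1 + e * a2 + a3 + 3 * a5 + 3 * e * a6 + 3 * a7 - 2 * a4
      + 2 * b1 + 2 * b2 + 2 * e * b3 - 2 * e * hU'
  · intro r hr1 hr2
    obtain ⟨w1, z, c, w2, rfl, hl, hrot⟩ := rot_generic W r (M + 3) (by omega) hr1 hr2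
    rw [hrot, hrot, hrot, G_eq, G_eq, G_eq]
    simp only [List.length_append, List.length_cons, List.length_nil] at hW
    have hb := S.block (S.p i j) (S.q i k) (w1 ++ [z]) (c :: w2) (by simp; omega)
    simp only [List.length_append, List.length_cons, List.length_nil] at hb
    rw [mul_comm (w1.length + (0 + 1)), zero_add, sgn_gen w1.length w2.length (by omega), hl, ← hT] at hb
    set T' := S.mid (S.p i j) (c :: w2 ++ (w1 ++ [z])) (S.q i k) with hT2
    set U' := S.mid (S.P2 i) (c :: w2 ++ (w1 ++ [z])) (S.q j k) with hU2
    have hU2' : S.mid (S.p j k) (c :: w2 ++ (w1 ++ [z])) (S.Q2 i) = - U' :=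
      S.anti2 j k i _ (by simp; omega)
    set s := (((-1 : V) ^ M) ^ r) with hs
    have hss : s * s = 1 := by
      rw [hs, ← pow_mul]; exact sq1 _
    set η := (-1 : V) ^ w2.length with hη
    set θ := (-1 : V) ^ w1.length with hθ
    have hηη : η * η = 1 := sq1 _
    have hθθ : θ * θ = 1 := sq1 _
    have hηθ : e = - (η * θ) := by
      rw [hη, hθ, hedef, ← pow_add, show M = w2.length + w1.length + 1 by omega]; ring
    suffices h : S.mid (S.p c i) (w2 ++ j :: k :: w1) (S.q i z) +
        S.mid (S.p c i) (w2 ++ j :: k :: w1) (S.q i z) +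
      (S.mid (S.p c i) (w2 ++ i :: k :: w1) (S.q j z) +
        S.mid (S.p c j) (w2 ++ i :: k :: w1) (S.q i z)) +
      (S.mid (S.p c i) (w2 ++ j :: i :: w1) (S.q k z) +
        S.mid (S.p c k) (w2 ++ j :: i :: w1) (S.q i z)) = - 2 * e * T' by
      rw [h, hb]; ring
    have f1 : ∀ j k, S.mid (S.p c i) (w2 ++ k :: i :: w1) (S.q j z) =
        η * θ * S.mid (S.P2 i) ((c :: w2 ++ w1) ++ [k]) (S.q j z) := by
      intro j k
      have a1 := S.mv_front (S.p c i) (S.q j z) i (w2 ++ [k]) w1 (by simp; omega)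
      have a2 := S.HL (S.q j z) i c (w2 ++ k :: w1) (by simp; omega)
      have a3 := S.mv_end (S.P2 i) (S.q j z) k (c :: w2) w1 (by simp; omega)
      simp only [List.append_assoc, List.cons_append, List.nil_append, List.length_append,
        List.length_cons, List.length_nil, zero_add, pow_succ, ← hη, ← hθ] at a1 a2 a3 ⊢
      rw [S.psymm i c] at a2
      linear_combination a1 - η * a2 + η * a3
    have f2 : ∀ j k, S.mid (S.p c j) (w2 ++ k :: i :: w1) (S.q i z) =
        - θ * η * S.mid (S.p c j) (k :: (w2 ++ w1 ++ [z])) (S.Q2 i) := by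
      intro j k
      have a1 := S.mv_end (S.p c j) (S.q i z) i (w2 ++ [k]) w1 (by simp; omega)
      have a2 := S.HR (S.p c j) i z (w2 ++ k :: w1) (by simp; omega)
      have a3 := S.mv_front (S.p c j) (S.Q2 i) k w2 (w1 ++ [z]) (by simp; omega)
      simp only [List.append_assoc, List.cons_append, List.nil_append, List.length_append,
        List.length_cons, List.length_nil, zero_add, pow_succ, ← hη, ← hθ] at a1 a2 a3 ⊢
      linear_combination a1 + θ * a2 - θ * a3
    have f3 : S.mid (S.p c i) (w2 ++ j :: k :: w1) (S.q i z) =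
        η * θ * T' - η * θ * S.mid (S.P2 i) ((c :: w2 ++ w1) ++ [j]) (S.q k z)
         + η * θ * (- S.mid (S.p c j) (k :: (w2 ++ w1 ++ [z])) (S.Q2 i)) := by
      have a1 := S.mv_front (S.p c i) (S.q i z) j w2 (k :: w1) (by simp; omega)
      have a2 := S.Lrel (S.q i z) c i j (w2 ++ k :: w1) (by simp; omega)
      have a3 := S.mv_front (S.p c j) (S.q i z) i (w2 ++ [k]) w1 (by simp; omega)
      have a4 := S.mv_end (S.p i j) (S.q i z) k (c :: w2) w1 (by simp; omega)
      have a5 := S.Rrel (S.p i j) i k z (c :: w2 ++ w1) (by simp; omega)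
      have a6 := S.mv_front (S.p i j) (S.q k z) i (c :: w2 ++ w1) [] (by simp; omega)
      have a7 := S.HL (S.q k z) i j (c :: w2 ++ w1) (by simp; omega)
      have a8 := S.mv_end (S.P2 i) (S.q k z) j [] (c :: w2 ++ w1) (by simp; omega)
      have a9 := f2 j k
      simp only [List.append_assoc, List.cons_append, List.nil_append, List.length_append,
        List.length_cons, List.length_nil, zero_add, List.append_nil, pow_succ, pow_add,
        ← hη, ← hθ] at a1 a2 a3 a4 a5 a6 a7 a8 a9 hT2 ⊢
      rw [← hT2] at a5
      linear_combination a1 + η * a2 + a3 - a9 - η * a4 - η * θ * a5 + η * θ * a6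
        - η * θ * (η * θ) * a7 + η * θ * (η * θ) * a8
        - 2 * a3 + 2 * a9 - η * θ * S.mid (S.P2 i) (c :: (w2 ++ (w1 ++ [j]))) (S.q k z) *
          (θ * θ * hηη + hθθ)
    have f4 : ∀ x y β, S.mid x (w2 ++ i :: y :: w1) β = - S.mid x (w2 ++ y :: i :: w1) β :=
      fun x y β => S.swap _ _ _ _ _ _ (by omega)
    rw [f4, f4, f3, f1, f1, f2, f2]
    have a1 := S.Rrel (S.P2 i) j k z (c :: w2 ++ w1) (by simp; omega)
    have a2 := S.Lrel (S.Q2 i) c j k (w2 ++ w1 ++ [z]) (by simp; omega)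
    simp only [List.append_assoc, List.cons_append] at a1 a2 hU2 hU2' ⊢
    rw [← hU2] at a1
    linear_combination -η * θ * a1 - η * θ * a2 + η * θ * hU2' + 2 * T' * hηθ

lemma rot_generic1 (t : List L) (r m : ℕ) (ht : t.length + 1 = m) (h3 : 2 ≤ r)
    (hr : r < m) : ∃ w z c w', t = (w ++ [z]) ++ (c :: w') ∧ w.length + 2 = r ∧
      ∀ x : L, (x :: t).rotate r = c :: ((w' ++ x :: w) ++ [z]) := by
  obtain ⟨k, rfl⟩ : ∃ k, r = 1 + k := ⟨r - 1, by omega⟩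
  have rr : ∀ x : L, (x :: t).rotate (1 + k) = t.drop k ++ (x :: t.take k) := by
    intro x
    rw [← List.rotate_rotate]
    rw [rot_one, List.rotate_eq_drop_append_take (by simp; omega),
      List.drop_append_of_le_length (by omega), List.take_append_of_le_length (by omega)]
    simp
  have hk : (t.take k).length = k := by simp; omega
  have hk2 : (t.drop k).length = t.length - k := by simp
  have htt := (List.take_append_drop k t).symm
  generalize t.take k = t1 at *
  generalize t.drop k = t2 at *
  obtain ⟨w, z, rfl⟩ : ∃ w z, t1 = w ++ [z] :=
    ⟨_, _, (List.dropLast_append_getLast (by rintro rfl; simp at hk; omega)).symm⟩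
  obtain ⟨c, w', rfl⟩ : ∃ c w', t2 = c :: w' := by
    cases t2 with
    | nil => simp at hk2; omega
    | cons c w' => exact ⟨c, w', rfl⟩
  simp only [List.length_append, List.length_cons, List.length_nil] at hk hk2
  refine ⟨w, z, c, w', htt, by omega, fun x => ?_⟩
  rw [rr]
  simp

lemma swap13 (i y z : L) (w : List L) (hw : w.length = M) :
    S.mid (S.P2 i) (w ++ [y]) (S.q z i) = - S.mid (S.P2 i) (w ++ [z]) (S.q y i) := by
  have a1 := S.Rrel (S.P2 i) z i y w hw
  have a2 := S.mv_front (S.P2 i) (S.q z y) i w [] (by simpa using hw)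
  have a3 := S.zeroL i w (S.q z y) hw
  rw [S.qsymm i y] at a1
  rw [List.append_nil, a3] at a2
  linear_combination a1 - a2

lemma block13 (i y z : L) (s0 t0 : List L) (h : s0.length + t0.length = M) :
    S.mid (S.P2 i) (s0 ++ y :: t0) (S.q z i) =
      (-1) ^ ((s0.length + 1) * (t0.length + 1)) * S.mid (S.P2 i) (t0 ++ z :: s0) (S.q y i) := by
  have a1 := S.mv_end (S.P2 i) (S.q z i) y s0 t0 h
  have a2 := S.swap13 i y z (s0 ++ t0) (by simp; omega)
  have a3 := S.block (S.P2 i) (S.q y i) s0 (t0 ++ [z]) (by simp; omega)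
  simp only [List.append_assoc, List.length_append, List.length_cons, List.length_nil,
    List.cons_append, List.nil_append] at a1 a2 a3
  rw [a1, a2, a3]
  ring

/-- evaluation for (13) -/
lemma eval13 (d i z : L) (w : List L) (hW : w.length = M + 1) :
    S.D d (i :: (w ++ [z])) i i
      = 2 * ((M + 3 : ℕ) + 2) * S.mid (S.P2 i) w (S.q z i) := by
  unfold D
  rw [evSum_sgn]
  set U := S.mid (S.P2 i) w (S.q z i) with hU
  have gen : ∀ r, 2 ≤ r → r < M + 3 →
      ((-1 : V) ^ M) ^ r * S.G d ((i :: (w ++ [z])).rotate r) i i = 2 * U := by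
    intro r hr1 hr2
    obtain ⟨w1, z1, c, w2, hs, hl, hrot⟩ := rot_generic1 (w ++ [z]) r (M + 3)
      (by simp; omega) hr1 hr2
    have hlen : w1.length + w2.length = M := by
      have := congrArg List.length hs
      simp only [List.length_append, List.length_cons, List.length_nil] at this
      omega
    rw [hrot, G_eq]
    obtain ⟨s0, y, hy⟩ : ∃ s0 y, c :: w2 = s0 ++ [y] :=
      ⟨_, _, (List.dropLast_append_getLast (by simp)).symm⟩
    have hs0 : s0.length = w2.length := by
      have := congrArg List.length hy
      simp only [List.length_append, List.length_cons, List.length_nil] at this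
      omega
    rw [hy, ← List.append_assoc] at hs
    obtain ⟨h1, h2⟩ := List.append_inj' hs rfl
    simp only [List.cons.injEq, and_true] at h2
    subst h2
    have a1 := S.mv_front (S.p c i) (S.q i z1) i w2 w1 (by omega)
    have a2 := S.HL (S.q i z1) i c (w2 ++ w1) (by simp; omega)
    have a3 := S.block13 i z z1 s0 w1 (by omega)
    have e1 : s0 ++ z :: w1 = c :: (w2 ++ w1) := by
      rw [← List.cons_append, hy]; simp
    rw [e1, show w1 ++ z1 :: s0 = w by rw [h1]; simp, ← hU, S.qsymm z1 i] at a3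
    rw [S.psymm i c] at a2
    have sg : ((-1 : V) ^ M) ^ r * (-1) ^ w2.length *
        (-1) ^ ((s0.length + 1) * (w1.length + 1)) = -1 := by
      rw [← pow_mul, ← pow_add, ← pow_add, hs0, ← hl, ← hlen]
      apply Odd.neg_one_pow
      rw [← Nat.not_even_iff_odd]
      simp only [Nat.even_mul, Nat.even_add_one, Nat.even_add]
      have : Even 2 := by decide
      tauto
    linear_combination 2 * ((-1 : V) ^ M) ^ r * a1
      + 2 * ((-1 : V) ^ M) ^ r * (-1) ^ w2.length * a2
      - 2 * ((-1 : V) ^ M) ^ r * (-1) ^ w2.length * a3 - 2 * U * sg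
  refine evSum_main (by omega) _ ?_ U (2 * U) (2 * U) 0 ?_ ?_ ?_ (by ring)
    rfl (fun r hr1 hr2 => gen r (by omega) hr2)
  · intro r
    rw [sgn_per, rot_per _ (by simp [hW])]
  · rw [List.rotate_zero, G_eq, pow_zero, S.twoL, S.qsymm i z]
    ring
  · rw [rot_one]
    obtain ⟨c, w', rfl, hw'⟩ := split_first w hW
    have e1 : c :: w' ++ [z] ++ [i] = c :: ((w' ++ [z]) ++ [i]) := by simp
    rw [e1, G_eq, S.twoR, S.anti2 _ _ _ _ (by simp [hw']), S.swap13 _ _ _ _ hw']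
    have a3 := S.mv_front (S.P2 i) (S.q z i) c w' [] (by simpa using hw')
    rw [List.append_nil, ← hU, hw'] at a3
    have he : (-1 : V) ^ M * (-1) ^ M = 1 := sq1 M
    rw [pow_one, a3]
    linear_combination 4 * U * he
  · rw [gen 2 le_rfl (by omega)]
    ring

end BraceSys


namespace BraceSys
variable {M : ℕ} {L A A' V : Type*} [CommRing V] (S : BraceSys M L A A' V)

lemma ofFn_split {N : ℕ} (a : Fin N → L) (i : ℕ) (hi : i + 1 < N) :
    List.ofFn a = (List.ofFn a).take i ++ a ⟨i, by omega⟩ :: a ⟨i + 1, hi⟩ ::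
      (List.ofFn a).drop (i + 2) := by
  conv_lhs => rw [← List.take_append_drop i (List.ofFn a)]
  congr 1
  rw [List.drop_eq_getElem_cons (by simpa using by omega),
    List.drop_eq_getElem_cons (by simpa using by omega)]
  simp

lemma D_swapFn (d u v : L) (a : Fin (M + 3) → L) (i : Fin (M + 2)) :
    S.D d (List.ofFn (a ∘ Equiv.swap i.castSucc i.succ)) u v = - S.D d (List.ofFn a) u v := by
  have h1 := ofFn_split a i (by omega)
  have h2 := ofFn_split (a ∘ Equiv.swap i.castSucc i.succ) i (by omega)
  have e1 : (⟨i, by omega⟩ : Fin (M + 3)) = i.castSucc := rfl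
  have e2 : (⟨i + 1, by omega⟩ : Fin (M + 3)) = i.succ := rfl
  have t1 : (List.ofFn (a ∘ Equiv.swap i.castSucc i.succ)).take i = (List.ofFn a).take i := by
    apply List.ext_getElem (by simp)
    intro r h _
    simp at h
    simp only [List.getElem_take, List.getElem_ofFn, Function.comp]
    rw [Equiv.swap_apply_of_ne_of_ne]
    · intro h; simp [Fin.ext_iff] at h; omega
    · intro h; simp [Fin.ext_iff] at h; omega
  have t2 : (List.ofFn (a ∘ Equiv.swap i.castSucc i.succ)).drop (i + 2) =
      (List.ofFn a).drop (i + 2) := by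
    apply List.ext_getElem (by simp)
    intro r h _
    simp only [List.getElem_drop, List.getElem_ofFn, Function.comp]
    rw [Equiv.swap_apply_of_ne_of_ne]
    · intro h; simp [Fin.ext_iff] at h; omega
    · intro h; simp [Fin.ext_iff] at h; omega
  rw [t1, t2, e1, e2] at h2
  rw [e1, e2] at h1
  simp only [Function.comp, Equiv.swap_apply_left, Equiv.swap_apply_right] at h2
  rw [h2, D_swap, ← h1]
  simp; omega

lemma D_perm (d u v : L) (τ : Equiv.Perm (Fin (M + 3))) : ∀ a : Fin (M + 3) → L,
    S.D d (List.ofFn (a ∘ τ)) u v = ((Equiv.Perm.sign τ : ℤ) : V) * S.D d (List.ofFn a) u v := by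
  have hτ : τ ∈ Submonoid.closure
      (Set.range fun i : Fin (M + 2) => Equiv.swap i.castSucc i.succ) := by
    rw [Equiv.Perm.mclosure_swap_castSucc_succ]; trivial
  induction hτ using Submonoid.closure_induction with
  | mem x hx =>
    obtain ⟨i, rfl⟩ := hx
    intro a
    beta_reduce
    rw [D_swapFn, Equiv.Perm.sign_swap (by simp [Fin.ext_iff])]
    simp
  | one => intro a; simp
  | mul x y _ _ hx hy =>
    intro a
    rw [Equiv.Perm.coe_mul, ← Function.comp_assoc, hy, hx, Equiv.Perm.sign_mul]
    push_cast
    ring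

end BraceSys

lemma perm_zero {k : ℕ} (π : Equiv.Perm (Fin (k + 1))) : ∃ τ : Equiv.Perm (Fin k),
    (∀ r, π r.succ = (π 0).succAbove (τ r)) ∧
    (Equiv.Perm.sign π : ℤ) = (-1) ^ (π 0 : ℕ) * (Equiv.Perm.sign τ : ℤ) := by
  set σ := Fin.cycleRange (π 0) * π with hσ
  have h0 : σ 0 = 0 := by simp [hσ]
  obtain ⟨⟨p, τ⟩, hp⟩ := (Equiv.Perm.decomposeFin (n := k)).symm.surjective σ
  have hp0 : p = 0 := by
    rw [← h0, ← hp, Equiv.Perm.decomposeFin_symm_apply_zero]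
  subst hp0
  have hπ : π = (Fin.cycleRange (π 0)).symm * σ := by
    rw [hσ]; ext x; simp
  refine ⟨τ, fun r => ?_, ?_⟩
  · conv_lhs => rw [hπ]
    rw [Equiv.Perm.mul_apply, ← hp, Equiv.Perm.decomposeFin_symm_apply_succ]
    simp [Fin.cycleRange_symm_succ]
  · have h1 : Equiv.Perm.sign σ = Equiv.Perm.sign τ := by
      rw [← hp, Equiv.Perm.decomposeFin.symm_sign]; simp
    rw [hσ, Equiv.Perm.sign_mul, Fin.sign_cycleRange] at h1
    rw [← h1]
    push_cast
    rw [← mul_assoc, ← pow_add, ← two_mul, pow_mul]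
    simp


section polyfacts
set_option linter.unusedSimpArgs false
variable {K : Type*} [Field K] {N : ℕ}

/-- Homogeneous polynomials of degree one have constant derivatives. -/
lemma lin_const (f : MvPolynomial (Fin N) K) (hf : f.IsHomogeneous 1) (x : Fin N) :
    pderiv x f = C (coeff 0 (pderiv x f)) := by
  have h := hf.pderiv (i := x)
  simp only [le_refl, tsub_eq_zero_of_le] at h
  rw [← totalDegree_eq_zero_iff_eq_C]
  exact Nat.le_zero.mp h.totalDegree_le

/-- The linear form with given coefficients. -/
noncomputable def linF (c : Fin N → K) : MvPolynomial (Fin N) K := ∑ y, C (c y) * X y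

lemma lin_expand (f : MvPolynomial (Fin N) K) (hf : f.IsHomogeneous 1) :
    f = linF (fun i => coeff 0 (pderiv i f)) := by
  have h := hf.sum_X_mul_pderiv
  rw [one_smul] at h
  conv_lhs => rw [← h]
  unfold linF
  refine Finset.sum_congr rfl fun i _ => ?_
  rw [mul_comm]
  conv_lhs => rw [lin_const f hf i]

/-- Weighted coefficients of a quadratic form. -/
def wt (P : Fin N → Fin N → K) (x y : Fin N) : K := (if x = y then 2 else 1) * P x y

/-- The quadratic form with given coefficients. -/
noncomputable def quad (P : Fin N → Fin N → K) : MvPolynomial (Fin N) K :=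
  ∑ i : Fin N, ∑ j : Fin N, if i ≤ j then C (P i j) * X i * X j else 0

lemma wt_symm (P : Fin N → Fin N → K) (hP : ∀ i j, P i j = P j i) (x y : Fin N) :
    wt P x y = wt P y x := by
  unfold wt
  rw [hP x y]
  simp only [eq_comm]

lemma quad_d1 (P : Fin N → Fin N → K) (hP : ∀ i j, P i j = P j i) (a : Fin N) :
    pderiv a (quad P) = linF (wt P a) := by
  classical
  unfold quad linF
  have h1 : ∀ i j : Fin N, pderiv a (if i ≤ j then C (P i j) * X i * X j else 0) =
      (if i = a then (if i ≤ j then C (P i j) * X j else 0) else 0) +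
      (if j = a then (if i ≤ j then C (P i j) * X i else 0) else 0) := by
    intro i j
    split_ifs with h h1 h2 h2 <;> simp_all [pderiv_X, Derivation.leibniz, Pi.single_apply] <;> ring
  simp only [map_sum, h1, Finset.sum_add_distrib]
  have h2 : ∑ i, ∑ j, (if i = a then (if i ≤ j then C (P i j) * X j else 0) else 0)
      = ∑ j, (if a ≤ j then C (P a j) * X j else 0 : MvPolynomial (Fin N) K) := by
    rw [Finset.sum_comm]
    refine Finset.sum_congr rfl fun j _ => ?_
    rw [Finset.sum_ite_eq' Finset.univ a]
    simp
  have h3 : ∑ i, ∑ j, (if j = a then (if i ≤ j then C (P i j) * X i else 0) else 0)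
      = ∑ j, (if j ≤ a then C (P j a) * X j else 0 : MvPolynomial (Fin N) K) := by
    refine Finset.sum_congr rfl fun j _ => ?_
    rw [Finset.sum_ite_eq' Finset.univ a]
    simp
  rw [h2, h3, ← Finset.sum_add_distrib]
  refine Finset.sum_congr rfl fun y _ => ?_
  unfold wt
  rcases lt_trichotomy a y with h | h | h
  · rw [if_pos h.le, if_neg (not_le.2 h), if_neg h.ne]
    simp
  · subst h
    simp only [le_refl, if_true, map_mul, map_ofNat]
    ring
  · rw [if_neg (not_le.2 h), if_pos h.le, if_neg h.ne', hP y a]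
    simp

lemma lin_d (c : Fin N → K) (u : Fin N) :
    pderiv u (linF c) = C (c u) := by
  classical
  unfold linF
  rw [map_sum, Finset.sum_eq_single u]
  · simp
  · intro y _ hy
    simp [pderiv_X, Pi.single_apply, hy]
  · simp

lemma quad_d2 (P : Fin N → Fin N → K) (hP : ∀ i j, P i j = P j i) (a u : Fin N) :
    pderiv u (pderiv a (quad P)) = C (wt P a u) := by
  rw [quad_d1 P hP, lin_d]

lemma lin_eval (c : Fin N → K) (x : Fin N) :
    eval (Pi.single x 1) (linF c) = c x := by
  classical
  simp [linF, Pi.single_apply]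

lemma quad_eval (P : Fin N → Fin N → K) (x : Fin N) :
    eval (Pi.single x 1) (quad P) = P x x := by
  classical
  unfold quad
  simp only [map_sum]
  rw [Finset.sum_eq_single x, Finset.sum_eq_single x]
  · simp
  · intro j _ hj
    split_ifs <;> simp [Pi.single_apply, hj]
  · simp
  · intro i _ hi
    refine Finset.sum_eq_zero fun j _ => ?_
    split_ifs <;> simp [Pi.single_apply, hi]
  · simp

variable {ι : Type*} [Fintype ι] (P : ι → Fin N → Fin N → K)
  (f g : ι → MvPolynomial (Fin N) K) (c c' : ι → Fin N → K)

lemma rel3 (hP : ∀ s i j, P s i j = P s j i) (hf : ∀ s, f s = quad (P s)) (hg : ∀ s, g s = linF (c s))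
    (h : ∑ s, f s * g s = 0) (x y z : Fin N) :
    ∑ s, (wt (P s) x y * c s z + wt (P s) x z * c s y + wt (P s) y z * c s x) = 0 := by
  have h' := congrArg (fun F => pderiv z (pderiv y (pderiv x F))) h
  simp only [map_sum, map_zero, Derivation.leibniz, map_add, smul_eq_mul, hf, hg, lin_d,
    quad_d2 _ (hP _), pderiv_C, mul_zero, add_zero, zero_add] at h'
  apply C_injective (Fin N) K
  rw [map_zero, ← h', map_sum]
  refine Finset.sum_congr rfl fun s _ => ?_
  simp only [map_add, map_mul]
  ring

lemma rel2 (hP : ∀ s i j, P s i j = P s j i) (hf : ∀ s, f s = quad (P s)) (hg : ∀ s, g s = linF (c s))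
    (h : ∑ s, f s * g s = 0) (x y : Fin N) :
    ∑ s, (wt (P s) x y * c s x + P s x x * c s y) = 0 := by
  have h' := congrArg (fun F => eval (Pi.single x 1) (pderiv y F)) h
  simp only [map_sum, map_zero, Derivation.leibniz, map_add, smul_eq_mul, map_mul, hf, hg, lin_d,
    quad_d1 _ (hP _), lin_eval, quad_eval, eval_C] at h'
  rw [← h']
  refine Finset.sum_congr rfl fun s _ => ?_
  rw [wt_symm _ (hP s) x y]
  ring

lemma rel1 (hf : ∀ s, f s = quad (P s)) (hg : ∀ s, g s = linF (c s))
    (h : ∑ s, f s * g s = 0) (x : Fin N) :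
    ∑ s, P s x x * c s x = 0 := by
  have h' := congrArg (fun F => eval (Pi.single x 1) F) h
  rw [map_sum] at h'
  simp only [map_mul, hf, hg, map_zero, lin_eval, quad_eval] at h'
  exact h'

lemma relL (hf : ∀ s, f s = linF (c' s)) (hg : ∀ s, g s = linF (c s))
    (h : ∑ s, f s * g s = 0) (x y : Fin N) :
    ∑ s, (c' s x * c s y + c' s y * c s x) = 0 := by
  have h' := congrArg (fun F => pderiv y (pderiv x F)) h
  simp only [map_sum, map_zero, Derivation.leibniz, map_add, smul_eq_mul, hf, hg, lin_d,
    pderiv_C, mul_zero, add_zero, zero_add] at h'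
  apply C_injective (Fin N) K
  rw [map_zero, ← h', map_sum]
  refine Finset.sum_congr rfl fun s _ => ?_
  simp only [map_add, map_mul]
  ring

end polyfacts


/-- All the data and hypotheses of the setup, with `n = M + 5`. -/
structure Cfg (K : Type*) [Field K] (M : ℕ) where
  b : ℕ → ℕ
  φ : ∀ r : ℕ, Matrix (Fin (b r)) (Fin (b (r + 1))) (MvPolynomial (Fin (M + 4)) K)
  hb0 : b 0 = 1
  hbm : b (M + 3) = 1
  hcomp : ∀ r, r + 2 ≤ M + 3 → φ r * φ (r + 1) = 0
  hdeg : ∀ r, 1 ≤ r → r + 2 ≤ M + 3 → ∀ p q, (φ r p q).IsHomogeneous 1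
  P : Fin (M + 4) → Fin (M + 4) → Fin (b 1) → K
  Q : Fin (M + 4) → Fin (M + 4) → Fin (b (M + 2)) → K
  hPs : ∀ i j, P i j = P j i
  hQs : ∀ i j, Q i j = Q j i
  hP : ∀ p q, φ 0 p q = quad (fun i j => P i j q)
  hQ : ∀ p q, φ (M + 2) p q = quad (fun i j => Q i j p)
  hanti : ∀ c : ℕ → Fin (M + 4),
      braceFn φ P (M + 3) Q rfl (M + 5) c
        = - braceFn φ P (M + 3) Q rfl (M + 5)
            (fun r => if r = 0 then c (M + 3) else if r = 1 then c (M + 4)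
              else if r = M + 3 then c 0 else if r = M + 4 then c 1 else c r)

namespace Cfg
variable {K : Type*} [Field K] {M : ℕ} (T : Cfg K M)

/-- Row vector transported through the middle matrices. -/
noncomputable def vec (α : Fin (T.b 1) → MvPolynomial (Fin (M + 4)) K) (c : ℕ → Fin (M + 4)) :
    ∀ r : ℕ, Fin (T.b (r + 1)) → MvPolynomial (Fin (M + 4)) K
  | 0 => α
  | (r + 1) => fun q => ∑ p, vec α c r p * pderiv (c r) (T.φ (r + 1) p q)

/-- Constant entries of the derivatives of the middle matrices. -/
noncomputable def a (r : ℕ) (x : Fin (M + 4)) (p : Fin (T.b r)) (q : Fin (T.b (r + 1))) : K :=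
  coeff 0 (pderiv x (T.φ r p q))

lemma hA (r : ℕ) (h1 : 1 ≤ r) (h2 : r + 2 ≤ M + 3) (x p q) :
    pderiv x (T.φ r p q) = C (T.a r x p q) := lin_const _ (T.hdeg r h1 h2 p q) x

lemma hlin (r : ℕ) (h1 : 1 ≤ r) (h2 : r + 2 ≤ M + 3) (p q) :
    T.φ r p q = linF (fun x => T.a r x p q) := lin_expand _ (T.hdeg r h1 h2 p q)

lemma comp (r : ℕ) (h : r + 2 ≤ M + 3) (p q) : ∑ s, T.φ r p s * T.φ (r + 1) s q = 0 := by
  have := congrFun (congrFun (T.hcomp r h) p) q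
  simpa [Matrix.mul_apply] using this

lemma prop3 (α1 α2 α3 : Fin (T.b 1) → MvPolynomial (Fin (M + 4)) K)
    (c1 c2 c3 : ℕ → Fin (M + 4)) (s : ℕ)
    (h : ∀ q, T.vec α1 c1 s q + T.vec α2 c2 s q + T.vec α3 c3 s q = 0)
    (hc2 : ∀ r, s ≤ r → c2 r = c1 r) (hc3 : ∀ r, s ≤ r → c3 r = c1 r) (r : ℕ) (hr : s ≤ r) :
    ∀ q, T.vec α1 c1 r q + T.vec α2 c2 r q + T.vec α3 c3 r q = 0 := by
  induction r, hr using Nat.le_induction with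
  | base => exact h
  | succ r hr ih =>
    intro q
    simp only [vec, hc2 r hr, hc3 r hr]
    rw [← Finset.sum_add_distrib, ← Finset.sum_add_distrib]
    refine Finset.sum_eq_zero fun p _ => ?_
    rw [← add_mul, ← add_mul, ih p, zero_mul]

lemma vec_zero (c : ℕ → Fin (M + 4)) (r : ℕ) (q) : T.vec (fun _ => 0) c r q = 0 := by
  induction r with
  | zero => rfl
  | succ r ih => simp [vec, ih]

lemma prop2 (α1 α2 : Fin (T.b 1) → MvPolynomial (Fin (M + 4)) K)
    (c1 c2 : ℕ → Fin (M + 4)) (s : ℕ)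
    (h : ∀ q, T.vec α1 c1 s q + T.vec α2 c2 s q = 0)
    (hc2 : ∀ r, s ≤ r → c2 r = c1 r) (r : ℕ) (hr : s ≤ r) (q) :
    T.vec α1 c1 r q + T.vec α2 c2 r q = 0 := by
  have := T.prop3 α1 α2 (fun _ => 0) c1 c2 c1 s (fun q => by rw [vec_zero, add_zero, h q]) hc2
    (fun _ _ => rfl) r hr q
  rwa [vec_zero, add_zero] at this

lemma vec_congr (α) (c c' : ℕ → Fin (M + 4)) (r : ℕ) (h : ∀ s, s < r → c s = c' s) :
    T.vec α c r = T.vec α c' r := by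
  induction r with
  | zero => rfl
  | succ r ih =>
    simp only [vec, h r (Nat.lt_succ_self r), ih fun s hs => h s (Nat.lt_succ_of_lt hs)]

lemma vec_smul (f : MvPolynomial (Fin (M + 4)) K) (α) (c : ℕ → Fin (M + 4)) (r : ℕ) (q) :
    T.vec (fun s => f * α s) c r q = f * T.vec α c r q := by
  induction r with
  | zero => rfl
  | succ r ih => simp only [vec, ih, Finset.mul_sum, mul_assoc]

lemma vec_pderiv (u : Fin (M + 4)) (α) (c : ℕ → Fin (M + 4)) (r : ℕ) (hr : r ≤ M + 1) (q) :
    pderiv u (T.vec α c r q) = T.vec (fun s => pderiv u (α s)) c r q := by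
  induction r with
  | zero => rfl
  | succ r ih =>
    simp only [vec, map_sum]
    refine Finset.sum_congr rfl fun p _ => ?_
    rw [T.hA _ (by omega) (by omega), Derivation.leibniz, ih (by omega)]
    simp [mul_comm]

/-- The pairing of a row, a word of middle matrices and a column. -/
noncomputable def mid (α : Fin (T.b 1) → MvPolynomial (Fin (M + 4)) K) (c : ℕ → Fin (M + 4))
    (β : Fin (T.b (M + 2)) → MvPolynomial (Fin (M + 4)) K) : MvPolynomial (Fin (M + 4)) K :=
  ∑ p, T.vec α c (M + 1) p * β p

lemma mid_congr (α β) (c c' : ℕ → Fin (M + 4)) (h : ∀ s, s < M + 1 → c s = c' s) :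
    T.mid α c β = T.mid α c' β := by
  unfold mid; rw [T.vec_congr α c c' _ h]

lemma mid_smulL (f) (α β) (c : ℕ → Fin (M + 4)) :
    T.mid (fun s => f * α s) c β = f * T.mid α c β := by
  simp only [mid, vec_smul, Finset.mul_sum, mul_assoc]

lemma mid_smulR (f) (α β) (c : ℕ → Fin (M + 4)) :
    T.mid α c (fun s => f * β s) = f * T.mid α c β := by
  simp only [mid, Finset.mul_sum]
  exact Finset.sum_congr rfl fun p _ => by ring

lemma mid_pderiv (u : Fin (M + 4)) (α β) (c : ℕ → Fin (M + 4)) :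
    pderiv u (T.mid α c β) = T.mid (fun s => pderiv u (α s)) c β +
      T.mid α c (fun s => pderiv u (β s)) := by
  simp only [mid, map_sum, Derivation.leibniz, T.vec_pderiv u α c _ le_rfl,
    Finset.sum_add_distrib, smul_eq_mul]
  refine (add_comm _ _).trans ?_
  congr 1
  exact Finset.sum_congr rfl fun p _ => by ring

lemma mid_snoc (α β) (c : ℕ → Fin (M + 4)) : T.mid α c β =
    ∑ s, T.vec α c M s * ∑ p, pderiv (c M) (T.φ (M + 1) s p) * β p := by
  simp only [mid, vec, Finset.mul_sum, Finset.sum_mul]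
  rw [Finset.sum_comm]
  exact Finset.sum_congr rfl fun p _ => Finset.sum_congr rfl fun p _ => by ring

/-- Left end. -/
noncomputable def p (x y : Fin (M + 4)) : Fin (T.b 1) → MvPolynomial (Fin (M + 4)) K :=
  fun s => C (wt (fun i j => T.P i j s) x y)

/-- Left end, diagonal. -/
noncomputable def P2 (x : Fin (M + 4)) : Fin (T.b 1) → MvPolynomial (Fin (M + 4)) K :=
  fun s => C (T.P x x s)

/-- Right end. -/
noncomputable def q (x y : Fin (M + 4)) : Fin (T.b (M + 2)) → MvPolynomial (Fin (M + 4)) K :=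
  fun s => C (wt (fun i j => T.Q i j s) x y)

/-- Right end, diagonal. -/
noncomputable def Q2 (x : Fin (M + 4)) : Fin (T.b (M + 2)) → MvPolynomial (Fin (M + 4)) K :=
  fun s => C (T.Q x x s)

lemma braceVec_eq (c : ℕ → Fin (M + 4)) (r : ℕ) : braceVec T.φ T.P c r =
    T.vec (fun s => C (T.P (c 0) (c 1) s)) (fun r => c (r + 2)) r := by
  induction r with
  | zero => rfl
  | succ r ih =>
    funext q
    simp only [braceVec, vec, ih, Matrix.vecMul, dotProduct]

lemma braceFn_eq (c : ℕ → Fin (M + 4)) : braceFn T.φ T.P (M + 3) T.Q rfl (M + 5) c =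
    T.mid (fun s => C (T.P (c 0) (c 1) s)) (fun r => c (r + 2))
      (fun s => C (T.Q (c (M + 3)) (c (M + 4)) s)) := by
  unfold mid
  rw [← braceVec_eq]
  rfl

/-- The word attached to a list. -/
def wd (w : List (Fin (M + 4))) : ℕ → Fin (M + 4) := fun r => w.getD r 0

lemma anti0 (x y z t : Fin (M + 4)) (c : ℕ → Fin (M + 4)) :
    T.mid (fun s => C (T.P x y s)) c (fun s => C (T.Q z t s)) =
    - T.mid (fun s => C (T.P z t s)) c (fun s => C (T.Q x y s)) := by
  have h := T.hanti (fun r => if r = 0 then x else if r = 1 then y else if r = M + 3 then z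
    else if r = M + 4 then t else c (r - 2))
  rw [braceFn_eq, braceFn_eq] at h
  have e1 : M + 4 ≠ M + 3 := by omega
  have e2 : M + 4 ≠ 0 := by omega
  have e3 : M + 4 ≠ 1 := by omega
  have e4 : M + 3 ≠ 0 := by omega
  have e5 : M + 3 ≠ 1 := by omega
  simp only [if_true, if_neg e1, if_neg e2, if_neg e3, if_neg e4, if_neg e5, one_ne_zero,
    if_false] at h
  rw [T.mid_congr _ _ _ c, T.mid_congr (fun s => C (T.P z t s)) _ _ c] at h
  · exact h
  · intro s hs
    have f1 : s + 2 ≠ 0 := by omega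
    have f2 : s + 2 ≠ 1 := by omega
    have f3 : s + 2 ≠ M + 3 := by omega
    have f4 : s + 2 ≠ M + 4 := by omega
    simp only [if_neg f1, if_neg f2, if_neg f3, if_neg f4]
    congr 1
  · intro s hs
    have f1 : s + 2 ≠ 0 := by omega
    have f2 : s + 2 ≠ 1 := by omega
    have f3 : s + 2 ≠ M + 3 := by omega
    have f4 : s + 2 ≠ M + 4 := by omega
    simp only [if_neg f1, if_neg f2, if_neg f3, if_neg f4]
    congr 1

/-- The scalar weight. -/
noncomputable def w2 (x y : Fin (M + 4)) : MvPolynomial (Fin (M + 4)) K :=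
  C (if x = y then 2 else 1)

lemma p_eq (x y) : T.p x y = fun s => w2 x y * C (T.P x y s) := by
  funext s; simp only [p, wt, w2, map_mul]

lemma q_eq (x y) : T.q x y = fun s => w2 x y * C (T.Q x y s) := by
  funext s; simp only [q, wt, w2, map_mul]

lemma wd_cons_succ (x) (w : List (Fin (M + 4))) (r : ℕ) (hr : 1 ≤ r) :
    wd (x :: w) r = wd w (r - 1) := by
  obtain ⟨r, rfl⟩ : ∃ r', r = r' + 1 := ⟨r - 1, by omega⟩
  simp [wd]

lemma wd_left (w t : List (Fin (M + 4))) (r : ℕ) (hr : r < w.length) :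
    wd (w ++ t) r = wd w r := by
  unfold wd; rw [List.getD_append _ _ _ _ hr]

lemma wd_right (w t : List (Fin (M + 4))) (r : ℕ) (hr : w.length ≤ r) :
    wd (w ++ t) r = wd t (r - w.length) := by
  unfold wd; rw [List.getD_append_right _ _ _ _ hr]

lemma vec_one (α) (x) (w : List (Fin (M + 4))) (q) : T.vec α (wd (x :: w)) 1 q =
    ∑ s, α s * C (T.a 1 x s q) := by
  simp only [vec, T.hA 1 le_rfl (by omega)]
  rfl

lemma i0 : ∃ _ : Fin (T.b 0), True := ⟨⟨0, by rw [T.hb0]; exact Nat.one_pos⟩, trivial⟩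
lemma im : ∃ _ : Fin (T.b (M + 3)), True := ⟨⟨0, by rw [T.hbm]; exact Nat.one_pos⟩, trivial⟩

lemma Lrel (β x y z) (w : List (Fin (M + 4))) :
    T.mid (T.p x y) (wd (z :: w)) β + T.mid (T.p x z) (wd (y :: w)) β
      + T.mid (T.p y z) (wd (x :: w)) β = 0 := by
  obtain ⟨p0, -⟩ := T.i0
  unfold mid
  rw [← Finset.sum_add_distrib, ← Finset.sum_add_distrib]
  refine Finset.sum_eq_zero fun s _ => ?_
  rw [← add_mul, ← add_mul, T.prop3 _ _ _ _ _ _ 1 _ _ _ (M + 1) (by omega), zero_mul]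
  · intro q
    rw [vec_one, vec_one, vec_one]
    have := rel3 (fun s i j => T.P i j s) (fun s => T.φ 0 p0 s) (fun s => T.φ 1 s q)
      (fun s x => T.a 1 x s q) (fun s i j => by rw [T.hPs])
      (fun s => T.hP p0 s) (fun s => T.hlin 1 le_rfl (by omega) s q)
      (T.comp 0 (by omega) p0 q) x y z
    rw [← map_zero C, ← this, map_sum, ← Finset.sum_add_distrib, ← Finset.sum_add_distrib]
    refine Finset.sum_congr rfl fun s _ => ?_
    simp only [p, map_add, map_mul]
  · intro r hr
    rw [wd_cons_succ _ _ _ hr, wd_cons_succ _ _ _ hr]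
  · intro r hr
    rw [wd_cons_succ _ _ _ hr, wd_cons_succ _ _ _ hr]

lemma HL (β x y) (w : List (Fin (M + 4))) :
    T.mid (T.p x y) (wd (x :: w)) β = - T.mid (T.P2 x) (wd (y :: w)) β := by
  obtain ⟨p0, -⟩ := T.i0
  rw [eq_neg_iff_add_eq_zero]
  unfold mid
  rw [← Finset.sum_add_distrib]
  refine Finset.sum_eq_zero fun s _ => ?_
  rw [← add_mul, T.prop2 _ _ _ _ 1 _ _ (M + 1) (by omega), zero_mul]
  · intro q
    rw [vec_one, vec_one]
    have := rel2 (fun s i j => T.P i j s) (fun s => T.φ 0 p0 s) (fun s => T.φ 1 s q)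
      (fun s x => T.a 1 x s q) (fun s i j => by rw [T.hPs])
      (fun s => T.hP p0 s) (fun s => T.hlin 1 le_rfl (by omega) s q)
      (T.comp 0 (by omega) p0 q) x y
    rw [← map_zero C, ← this, map_sum, ← Finset.sum_add_distrib]
    refine Finset.sum_congr rfl fun s _ => ?_
    simp only [p, P2, map_add, map_mul]
  · intro r hr
    rw [wd_cons_succ _ _ _ hr, wd_cons_succ _ _ _ hr]

lemma zeroL (β x) (w : List (Fin (M + 4))) : T.mid (T.P2 x) (wd (x :: w)) β = 0 := by
  obtain ⟨p0, -⟩ := T.i0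
  unfold mid
  refine Finset.sum_eq_zero fun s _ => ?_
  have key := T.prop2 (T.P2 x) (fun _ => 0) (wd (x :: w)) (wd (x :: w)) 1 ?_ (fun _ _ => rfl)
    (M + 1) (by omega) s
  · rw [vec_zero, add_zero] at key
    rw [key, zero_mul]
  · intro q
    rw [vec_one, vec_zero, add_zero]
    have := rel1 (fun s i j => T.P i j s) (fun s => T.φ 0 p0 s) (fun s => T.φ 1 s q)
      (fun s x => T.a 1 x s q)
      (fun s => T.hP p0 s) (fun s => T.hlin 1 le_rfl (by omega) s q)
      (T.comp 0 (by omega) p0 q) x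
    rw [← map_zero C, ← this, map_sum]
    refine Finset.sum_congr rfl fun s _ => ?_
    simp only [P2, map_mul]

lemma mid_snoc' (α β z) (w : List (Fin (M + 4))) (hw : w.length = M) :
    T.mid α (wd (w ++ [z])) β = ∑ s, T.vec α (wd w) M s * ∑ p, C (T.a (M + 1) z s p) * β p := by
  rw [mid_snoc, T.vec_congr α (wd (w ++ [z])) (wd w) M (fun s hs => wd_left _ _ _ (by omega))]
  have : wd (w ++ [z]) M = z := by rw [wd_right _ _ _ (by omega)]; simp [hw, wd]
  rw [this]
  simp only [T.hA (M + 1) (by omega) (by omega)]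

lemma Rrel (α x y z) (w : List (Fin (M + 4))) (hw : w.length = M) :
    T.mid α (wd (w ++ [z])) (T.q x y) + T.mid α (wd (w ++ [y])) (T.q x z)
      + T.mid α (wd (w ++ [x])) (T.q y z) = 0 := by
  obtain ⟨q0, -⟩ := T.im
  rw [mid_snoc' _ _ _ _ _ hw, mid_snoc' _ _ _ _ _ hw, mid_snoc' _ _ _ _ _ hw,
    ← Finset.sum_add_distrib, ← Finset.sum_add_distrib]
  refine Finset.sum_eq_zero fun s _ => ?_
  rw [← mul_add, ← mul_add]
  have := rel3 (fun s i j => T.Q i j s) (fun s => T.φ (M + 2) s q0) (fun p => T.φ (M + 1) s p)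
      (fun p x => T.a (M + 1) x s p) (fun s i j => by rw [T.hQs])
      (fun s => T.hQ s q0) (fun p => T.hlin (M + 1) (by omega) (by omega) s p)
      ((Finset.sum_congr rfl fun _ _ => mul_comm _ _).trans (T.comp (M + 1) (by omega) s q0)) x y z
  have h2 := congrArg (C (σ := Fin (M + 4))) this
  rw [map_zero, map_sum] at h2
  rw [← Finset.sum_add_distrib, ← Finset.sum_add_distrib]
  convert mul_zero _ using 2
  rw [← h2]
  refine Finset.sum_congr rfl fun s _ => ?_
  simp only [q, map_add, map_mul]
  ring

lemma HR (α x y) (w : List (Fin (M + 4))) (hw : w.length = M) :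
    T.mid α (wd (w ++ [x])) (T.q x y) = - T.mid α (wd (w ++ [y])) (T.Q2 x) := by
  obtain ⟨q0, -⟩ := T.im
  rw [eq_neg_iff_add_eq_zero]
  rw [mid_snoc' _ _ _ _ _ hw, mid_snoc' _ _ _ _ _ hw, ← Finset.sum_add_distrib]
  refine Finset.sum_eq_zero fun s _ => ?_
  rw [← mul_add]
  have := rel2 (fun s i j => T.Q i j s) (fun s => T.φ (M + 2) s q0) (fun p => T.φ (M + 1) s p)
      (fun p x => T.a (M + 1) x s p) (fun s i j => by rw [T.hQs])
      (fun s => T.hQ s q0) (fun p => T.hlin (M + 1) (by omega) (by omega) s p)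
      ((Finset.sum_congr rfl fun _ _ => mul_comm _ _).trans (T.comp (M + 1) (by omega) s q0)) x y
  have h2 := congrArg (C (σ := Fin (M + 4))) this
  rw [map_zero, map_sum] at h2
  rw [← Finset.sum_add_distrib]
  convert mul_zero _ using 2
  rw [← h2]
  refine Finset.sum_congr rfl fun s _ => ?_
  simp only [q, Q2, map_add, map_mul]
  ring

lemma swap (α β) (s : List (Fin (M + 4))) (x y) (t : List (Fin (M + 4)))
    (h : s.length + t.length + 1 = M) :
    T.mid α (wd (s ++ x :: y :: t)) β = - T.mid α (wd (s ++ y :: x :: t)) β := by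
  rw [eq_neg_iff_add_eq_zero]
  unfold mid
  rw [← Finset.sum_add_distrib]
  refine Finset.sum_eq_zero fun o _ => ?_
  rw [← add_mul, T.prop2 _ _ _ _ (s.length + 2) _ _ (M + 1) (by omega), zero_mul]
  · intro q
    have e1 : ∀ x y, wd (s ++ x :: y :: t) s.length = x := fun x y => by
      rw [wd_right _ _ _ le_rfl]; simp [wd]
    have e2 : ∀ x y, wd (s ++ x :: y :: t) (s.length + 1) = y := fun x y => by
      rw [wd_right _ _ _ (by omega)]; simp [wd]
    have e3 : ∀ x y, T.vec α (wd (s ++ x :: y :: t)) s.length = T.vec α (wd s) s.length :=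
      fun x y => T.vec_congr _ _ _ _ fun r hr => wd_left _ _ _ hr
    have ex : ∀ x y, T.vec α (wd (s ++ x :: y :: t)) (s.length + 2) q =
        ∑ o, T.vec α (wd s) s.length o * ∑ p, C (T.a (s.length + 1) x o p) *
          C (T.a (s.length + 2) y p q) := by
      intro x y
      simp only [vec, e1, e2, e3, T.hA (s.length + 1) (by omega) (by omega),
        T.hA (s.length + 1 + 1) (by omega) (by omega), Finset.mul_sum, Finset.sum_mul]
      rw [Finset.sum_comm]
      exact Finset.sum_congr rfl fun p _ => Finset.sum_congr rfl fun p _ => by ring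
    rw [ex, ex, ← Finset.sum_add_distrib]
    refine Finset.sum_eq_zero fun o _ => ?_
    rw [← mul_add]
    have := relL (fun p => T.φ (s.length + 1) o p) (fun p => T.φ (s.length + 2) p q)
      (fun p x => T.a (s.length + 2) x p q) (fun p x => T.a (s.length + 1) x o p)
      (fun p => T.hlin _ (by omega) (by omega) o p) (fun p => T.hlin _ (by omega) (by omega) p q)
      (T.comp (s.length + 1) (by omega) o q) x y
    have h2 := congrArg (C (σ := Fin (M + 4))) this
    rw [map_zero, map_sum] at h2
    rw [← Finset.sum_add_distrib]
    convert mul_zero _ using 2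
    rw [← h2]
    refine Finset.sum_congr rfl fun s _ => ?_
    simp only [map_add, map_mul]
  · intro r hr
    rw [wd_right _ _ _ (by omega), wd_right _ _ _ (by omega), wd_cons_succ _ _ _ (by omega),
      wd_cons_succ _ _ _ (by omega), wd_cons_succ _ _ _ (by omega), wd_cons_succ _ _ _ (by omega)]

/-- The abstract brace system of the configuration. -/
noncomputable def sys : BraceSys M (Fin (M + 4)) (Fin (T.b 1) → MvPolynomial (Fin (M + 4)) K)
    (Fin (T.b (M + 2)) → MvPolynomial (Fin (M + 4)) K) (MvPolynomial (Fin (M + 4)) K) where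
  mid α w β := T.mid α (wd w) β
  p := T.p
  P2 := T.P2
  q := T.q
  Q2 := T.Q2
  psymm x y := by
    funext s; unfold p; rw [wt_symm]; intro i j; rw [T.hPs]
  qsymm x y := by
    funext s; unfold q; rw [wt_symm]; intro i j; rw [T.hQs]
  swap α β s x y t h := T.swap α β s x y t h
  Lrel β x y z w _ := T.Lrel β x y z w
  Rrel α x y z w h := T.Rrel α x y z w h
  HL β x y w _ := T.HL β x y w
  HR α x y w h := T.HR α x y w h
  twoL x w β := by
    rw [p_eq, mid_smulL, w2, if_pos rfl, map_ofNat]; rfl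
  twoR α x w := by
    rw [q_eq, mid_smulR, w2, if_pos rfl, map_ofNat]; rfl
  zeroL x w β _ := T.zeroL β x w
  anti1 x y z t w _ := by
    rw [p_eq, p_eq, q_eq, q_eq, mid_smulL, mid_smulR, mid_smulL, mid_smulR, anti0]; ring
  anti2 x y z w _ := by
    unfold Q2 P2
    rw [p_eq, q_eq, mid_smulL, mid_smulR, anti0]; ring
  anti3 x y w _ := by
    unfold Q2 P2
    rw [anti0]

end Cfg


namespace Cfg
variable {K : Type*} [Field K] {M : ℕ} (T : Cfg K M)

lemma brkVec_eq (a : ℕ → Fin (M + 4)) (r : ℕ) : brkVec T.φ a (r + 1) =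
    T.vec (fun s => pderiv (a 0) (quad (fun i j => T.P i j s))) (fun r => a (r + 1)) r := by
  induction r with
  | zero =>
    funext q
    simp only [brkVec, vec, Matrix.vecMul, dotProduct, T.hP, one_mul, Finset.sum_const,
      Finset.card_univ, Fintype.card_fin, T.hb0, one_smul]
  | succ r ih =>
    funext q
    rw [brkVec, ih]
    simp only [vec, Matrix.vecMul, dotProduct]

lemma brk_eq (a : ℕ → Fin (M + 4)) : brk T.φ (M + 3) a =
    T.mid (fun s => pderiv (a 0) (quad (fun i j => T.P i j s))) (fun r => a (r + 1))
      (fun s => pderiv (a (M + 2)) (quad (fun i j => T.Q i j s))) := by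
  unfold brk mid
  rw [brkVec, brkVec_eq]
  simp only [Matrix.vecMul, dotProduct, T.hQ, Finset.sum_const,
      Finset.card_univ, Fintype.card_fin, T.hbm, one_smul]

lemma mid_zeroL (c : ℕ → Fin (M + 4)) (β) : T.mid (fun _ => 0) c β = 0 := by
  simp [mid, vec_zero]

lemma mid_zeroR (c : ℕ → Fin (M + 4)) (α) : T.mid α c (fun _ => 0) = 0 := by
  simp [mid]

lemma brk_d2' (a : ℕ → Fin (M + 4)) (u v : Fin (M + 4)) :
    pderiv u (pderiv v (brk T.φ (M + 3) a)) =
      T.mid (T.p (a 0) u) (fun r => a (r + 1)) (T.q v (a (M + 2))) +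
      T.mid (T.p (a 0) v) (fun r => a (r + 1)) (T.q u (a (M + 2))) := by
  have hp : ∀ x u, (fun s => pderiv u (pderiv x (quad (fun i j => T.P i j s)))) = T.p x u := by
    intro x u; funext s
    rw [quad_d2 _ (fun i j => by rw [T.hPs])]; rfl
  have hq : ∀ x u, (fun s => pderiv u (pderiv x (quad (fun i j => T.Q i j s)))) = T.q u x := by
    intro x u; funext s
    rw [quad_d2 _ (fun i j => by rw [T.hQs]), wt_symm _ (fun i j => by rw [T.hQs])]; rfl
  have hp' : ∀ x y u, (fun s => pderiv u (T.p x y s)) = fun _ => 0 := by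
    intro x y u; funext s; simp [p]
  have hq' : ∀ x y u, (fun s => pderiv u (T.q x y s)) = fun _ => 0 := by
    intro x y u; funext s; simp [q]
  rw [brk_eq, mid_pderiv, map_add, hp, hq, mid_pderiv, mid_pderiv, hp, hq, hp', hq',
    mid_zeroL, mid_zeroR]
  ring

lemma brk_d2 (l : List (Fin (M + 4))) (hl : l.length = M + 3) (a : ℕ → Fin (M + 4))
    (ha : ∀ r, r < M + 3 → a r = l.getD r 0) (u v : Fin (M + 4)) :
    pderiv u (pderiv v (brk T.φ (M + 3) a)) = T.sys.G 0 l u v := by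
  obtain ⟨x, t, rfl⟩ : ∃ x t, l = x :: t := by
    cases l with
    | nil => simp at hl
    | cons x t => exact ⟨x, t, rfl⟩
  obtain ⟨w, z, rfl⟩ : ∃ w z, t = w ++ [z] := by
    rcases List.eq_nil_or_concat t with h | ⟨w, z, h⟩
    · subst h; simp at hl
    · exact ⟨w, z, by simpa using h⟩
  have hw : w.length = M + 1 := by simpa using hl
  rw [BraceSys.G_eq, brk_d2']
  have h0 : a 0 = x := by rw [ha 0 (by omega)]; rfl
  have h1 : a (M + 2) = z := by
    rw [ha (M + 2) (by omega), List.getD_cons_succ, List.getD_append_right _ _ _ _ (by omega), hw]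
    simp
  rw [h0, h1]
  have h2 : ∀ s, s < M + 1 → a (s + 1) = wd w s := by
    intro s hs
    rw [ha _ (by omega), List.getD_cons_succ, List.getD_append _ _ _ _ (by omega)]; rfl
  rw [T.mid_congr _ _ (fun r => a (r + 1)) (wd w) h2, T.mid_congr _ _ (fun r => a (r + 1)) (wd w) h2]
  rfl

lemma dbrk_d2 (l : List (Fin (M + 4))) (hl : l.length = M + 3) (a : ℕ → Fin (M + 4))
    (ha : ∀ r, r < M + 3 → a r = l.getD r 0) (u v : Fin (M + 4)) :
    pderiv u (pderiv v (dbrk T.φ (M + 3) a)) = T.sys.D 0 l u v := by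
  unfold dbrk BraceSys.D evSum
  rw [map_sum, map_sum]
  refine Finset.sum_congr rfl fun k _ => ?_
  apply brk_d2
  · simpa using hl
  · intro r hr
    rw [ha _ (Nat.mod_lt _ (by omega)), List.getD_eq_getElem _ _ (by rw [hl]; exact Nat.mod_lt _ (by omega)),
      List.getD_eq_getElem _ _ (by simpa [hl] using hr), List.getElem_rotate]
    simp only [hl]

lemma omit_eq (j : Fin (M + 4)) (r : Fin (M + 3)) : omitIdx j r = j.succAbove r := by
  unfold omitIdx
  by_cases h : (r : ℕ) < j
  · rw [dif_pos h, Fin.succAbove_of_castSucc_lt _ _ (by simpa [Fin.lt_def] using h)]; rfl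
  · rw [dif_neg h, dif_pos (by omega),
      Fin.succAbove_of_le_castSucc _ _ (by simpa [Fin.le_def] using h)]; rfl

lemma omega_d2 (π : Equiv.Perm (Fin (M + 4))) (u v : Fin (M + 4)) :
    pderiv u (pderiv v (OmegaForm T.φ (M + 3) (π 0))) =
      -(((Equiv.Perm.sign π : ℤ) : MvPolynomial (Fin (M + 4)) K) *
        T.sys.D 0 (List.ofFn fun r : Fin (M + 3) => π r.succ) u v) := by
  obtain ⟨τ, h1, h2⟩ := perm_zero π
  have e1 : (fun r : Fin (M + 3) => π r.succ) = (fun r => (π 0).succAbove r) ∘ τ := by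
    funext r; exact h1 r
  rw [e1, BraceSys.D_perm, h2]
  have e2 : ∀ k : ℕ, (-1 : MvPolynomial (Fin (M + 4)) K) ^ k = C ((-1) ^ k) := by
    intro k; simp
  unfold OmegaForm
  rw [e2, pderiv_C_mul, pderiv_C_mul, T.dbrk_d2 (List.ofFn fun r => (π 0).succAbove r) (by simp)]
  · have e3 : ((Equiv.Perm.sign τ : ℤ) : MvPolynomial (Fin (M + 4)) K) *
        ((Equiv.Perm.sign τ : ℤ) : MvPolynomial (Fin (M + 4)) K) = 1 := by
      rcases Int.units_eq_one_or (Equiv.Perm.sign τ) with h | h <;> simp [h]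
    push_cast
    rw [← e2, pow_succ]
    linear_combination (-(-1) ^ (π 0 : ℕ) * T.sys.D 0 (List.ofFn fun r => (π 0).succAbove r) u v) * (-e3)
  · intro r hr
    rw [List.getD_eq_getElem _ _ (by rw [List.length_ofFn]; exact hr), List.getElem_ofFn, ← omit_eq]

end Cfg


namespace Cfg
variable {K : Type*} [Field K] {M : ℕ} (T : Cfg K M)

lemma omega_three (π τ : Equiv.Perm (Fin (M + 4))) (hτ : ∀ r : Fin (M + 1),
    τ r.succ.succ.succ = r.succ.succ.succ) (x y z : Fin (M + 4)) (hx : π (τ 0) = x)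
    (hy : π (τ 1) = y) (hz : π (τ 2) = z) (u v : Fin (M + 4)) :
    pderiv u (pderiv v (OmegaForm T.φ (M + 3) x)) =
      -(((Equiv.Perm.sign π : ℤ) : MvPolynomial (Fin (M + 4)) K) *
        ((Equiv.Perm.sign τ : ℤ) : MvPolynomial (Fin (M + 4)) K) *
        T.sys.D 0 (y :: z :: List.ofFn fun r : Fin (M + 1) => π r.succ.succ.succ) u v) := by
  have h := T.omega_d2 (π * τ) u v
  rw [List.ofFn_succ, List.ofFn_succ] at h
  have e1 : ((0 : Fin (M + 3)).succ) = 1 := rfl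
  have e2 : ((0 : Fin (M + 2)).succ.succ) = 2 := rfl
  simp only [Equiv.Perm.mul_apply, e1, e2, hx, hy, hz, hτ, map_mul, Units.val_mul,
    Int.cast_mul] at h
  exact h

lemma two_val : ((2 : Fin (M + 4)) : ℕ) = 2 := Nat.mod_eq_of_lt (show 2 < M + 4 by omega)

lemma one_val : ((1 : Fin (M + 4)) : ℕ) = 1 := Nat.mod_eq_of_lt (show 1 < M + 4 by omega)

lemma succ3_ne (r : Fin (M + 1)) : r.succ.succ.succ ≠ 0 ∧ r.succ.succ.succ ≠ 1 ∧
    r.succ.succ.succ ≠ 2 := by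
  refine ⟨?_, ?_, ?_⟩ <;> intro h <;> have := congrArg Fin.val h <;>
    simp only [Fin.val_succ, one_val, two_val, Fin.val_zero] at this <;> omega

lemma three_ne : (0 : Fin (M + 4)) ≠ 1 ∧ (1 : Fin (M + 4)) ≠ 2 ∧ (0 : Fin (M + 4)) ≠ 2 := by
  refine ⟨?_, ?_, ?_⟩ <;> intro h <;> have := congrArg Fin.val h <;>
    simp only [one_val, two_val, Fin.val_zero] at this <;> omega

lemma omega_id (π : Equiv.Perm (Fin (M + 4))) (u v : Fin (M + 4)) :
    pderiv u (pderiv v (OmegaForm T.φ (M + 3) (π 0))) =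
      -(((Equiv.Perm.sign π : ℤ) : MvPolynomial (Fin (M + 4)) K) *
        T.sys.D 0 (π 1 :: π 2 :: List.ofFn fun r : Fin (M + 1) => π r.succ.succ.succ) u v) := by
  have := T.omega_three π 1 (fun _ => rfl) _ _ _ rfl rfl rfl u v
  simpa using this

lemma omega_210 (π : Equiv.Perm (Fin (M + 4))) (u v : Fin (M + 4)) :
    pderiv u (pderiv v (OmegaForm T.φ (M + 3) (π 2))) =
      ((Equiv.Perm.sign π : ℤ) : MvPolynomial (Fin (M + 4)) K) *
        T.sys.D 0 (π 1 :: π 0 :: List.ofFn fun r : Fin (M + 1) => π r.succ.succ.succ) u v := by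
  obtain ⟨a, b, c⟩ := three_ne (M := M)
  have := T.omega_three π (Equiv.swap 0 2) (fun r => Equiv.swap_apply_of_ne_of_ne
    (succ3_ne r).1 (succ3_ne r).2.2) (π 2) (π 1) (π 0) (by rw [Equiv.swap_apply_left])
    (by rw [Equiv.swap_apply_of_ne_of_ne a.symm b]) (by rw [Equiv.swap_apply_right]) u v
  rw [this, Equiv.Perm.sign_swap c]
  simp

lemma omega_102 (π : Equiv.Perm (Fin (M + 4))) (u v : Fin (M + 4)) :
    pderiv u (pderiv v (OmegaForm T.φ (M + 3) (π 1))) =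
      ((Equiv.Perm.sign π : ℤ) : MvPolynomial (Fin (M + 4)) K) *
        T.sys.D 0 (π 0 :: π 2 :: List.ofFn fun r : Fin (M + 1) => π r.succ.succ.succ) u v := by
  obtain ⟨a, b, c⟩ := three_ne (M := M)
  have := T.omega_three π (Equiv.swap 0 1) (fun r => Equiv.swap_apply_of_ne_of_ne
    (succ3_ne r).1 (succ3_ne r).2.1) (π 1) (π 0) (π 2) (by rw [Equiv.swap_apply_left])
    (by rw [Equiv.swap_apply_right]) (by rw [Equiv.swap_apply_of_ne_of_ne c.symm b.symm]) u v
  rw [this, Equiv.Perm.sign_swap a]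
  simp

lemma omega_120 (π : Equiv.Perm (Fin (M + 4))) (u v : Fin (M + 4)) :
    pderiv u (pderiv v (OmegaForm T.φ (M + 3) (π 1))) =
      -(((Equiv.Perm.sign π : ℤ) : MvPolynomial (Fin (M + 4)) K) *
        T.sys.D 0 (π 2 :: π 0 :: List.ofFn fun r : Fin (M + 1) => π r.succ.succ.succ) u v) := by
  have h := T.omega_102 π u v
  have h2 := T.sys.D_swap 0 [] (π 0) (π 2)
    (List.ofFn fun r : Fin (M + 1) => π r.succ.succ.succ) (by simp) u v
  rw [h, ← List.nil_append (_ :: _), h2]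
  simp

/-- Conversion of a word given by a permutation. -/
lemma wd_ofFn {k : ℕ} (f : Fin k → Fin (M + 4)) (r : ℕ) (hr : r < k) :
    wd (List.ofFn f) r = f ⟨r, hr⟩ := by
  unfold wd
  rw [List.getD_eq_getElem _ _ (by rw [List.length_ofFn]; exact hr), List.getElem_ofFn]

lemma p_ne {x y : Fin (M + 4)} (h : x ≠ y) : T.p x y = fun s => C (T.P x y s) := by
  rw [p_eq]; simp [w2, h]

lemma q_ne {x y : Fin (M + 4)} (h : x ≠ y) : T.q x y = fun s => C (T.Q x y s) := by
  rw [q_eq]; simp [w2, h]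

/-- Comparison of an abstract brace with the concrete one. -/
lemma brace_conv (w : List (Fin (M + 4))) (x y z t : Fin (M + 4)) (c : ℕ → Fin (M + 4))
    (h0 : c 0 = x) (h1 : c 1 = y) (hz : c (M + 3) = z) (ht : c (M + 4) = t)
    (hw : ∀ r, r < M + 1 → c (r + 2) = wd w r) :
    braceFn T.φ T.P (M + 3) T.Q rfl (M + 5) c =
      T.mid (fun s => C (T.P x y s)) (wd w) (fun s => C (T.Q z t s)) := by
  rw [braceFn_eq, h0, h1, hz, ht, T.mid_congr _ _ _ (wd w) hw]

lemma main12 (π : Equiv.Perm (Fin (M + 4))) (c : ℕ → Fin (M + 4))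
    (h0 : c 0 = π 0) (h1 : c 1 = π 0) (hz : c (M + 3) = π 1) (ht : c (M + 4) = π 1)
    (hw : ∀ r : Fin (M + 1), c (r + 2) = π r.succ.succ.succ) :
    pderiv (π 0) (pderiv (π 1) (OmegaForm T.φ (M + 3) (π 2))) =
      ((-1 : ℤ) ^ (M + 5 + 1) * (Equiv.Perm.sign π : ℤ) * (2 * ((M + 5 : ℕ) : ℤ))) •
        braceFn T.φ T.P (M + 3) T.Q rfl (M + 5) c := by
  rw [T.brace_conv (List.ofFn fun r : Fin (M + 1) => π r.succ.succ.succ) _ _ _ _ c h0 h1 hz ht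
    (fun r hr => by rw [wd_ofFn _ _ hr]; exact hw ⟨r, hr⟩), omega_210, BraceSys.eval12 _ _ _ _ _ (by simp)]
  rw [zsmul_eq_mul]
  change _ * (_ * (_ * T.mid (fun s => C (T.P (π 0) (π 0) s)) _ (fun s => C (T.Q (π 1) (π 1) s)))) = _
  push_cast
  ring

lemma main14 (π : Equiv.Perm (Fin (M + 4))) (c : ℕ → Fin (M + 4))
    (h0 : c 0 = π 0) (h1 : c 1 = π 0) (hz : c (M + 3) = π 1) (ht : c (M + 4) = π 2)
    (hw : ∀ r : Fin (M + 1), c (r + 2) = π r.succ.succ.succ) :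
    pderiv (π 0) (pderiv (π 1) (OmegaForm T.φ (M + 3) (π 1))) -
      pderiv (π 0) (pderiv (π 2) (OmegaForm T.φ (M + 3) (π 2))) =
      ((-1 : ℤ) ^ (M + 5) * (Equiv.Perm.sign π : ℤ) * (2 * ((M + 5 : ℕ) : ℤ))) •
        braceFn T.φ T.P (M + 3) T.Q rfl (M + 5) c := by
  rw [T.brace_conv (List.ofFn fun r : Fin (M + 1) => π r.succ.succ.succ) _ _ _ _ c h0 h1 hz ht
    (fun r hr => by rw [wd_ofFn _ _ hr]; exact hw ⟨r, hr⟩), omega_210, omega_120]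
  have h := T.sys.eval14 0 (π 0) (π 1) (π 2)
    (List.ofFn fun r : Fin (M + 1) => π r.succ.succ.succ) (by simp)
  rw [show T.sys.q (π 1) (π 2) = fun s => C (T.Q (π 1) (π 2) s) from
    T.q_ne (fun h => three_ne.2.1 (π.injective h))] at h
  change _ = _ * (_ * T.mid (fun s => C (T.P (π 0) (π 0) s)) _ _) at h
  rw [zsmul_eq_mul]
  push_cast at h ⊢
  linear_combination (-((Equiv.Perm.sign π : ℤ) : MvPolynomial (Fin (M + 4)) K)) * h

lemma main15 (π : Equiv.Perm (Fin (M + 4))) (c : ℕ → Fin (M + 4))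
    (h0 : c 0 = π 0) (h1 : c 1 = π 1) (hz : c (M + 3) = π 2) (ht : c (M + 4) = π 0)
    (hw : ∀ r : Fin (M + 1), c (r + 2) = π r.succ.succ.succ) :
    pderiv (π 0) (pderiv (π 0) (OmegaForm T.φ (M + 3) (π 0))) -
      pderiv (π 0) (pderiv (π 1) (OmegaForm T.φ (M + 3) (π 1))) -
      pderiv (π 0) (pderiv (π 2) (OmegaForm T.φ (M + 3) (π 2))) =
      ((-1 : ℤ) ^ (M + 5 + 1) * (Equiv.Perm.sign π : ℤ) * (2 * ((M + 5 : ℕ) : ℤ))) •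
        braceFn T.φ T.P (M + 3) T.Q rfl (M + 5) c := by
  rw [T.brace_conv (List.ofFn fun r : Fin (M + 1) => π r.succ.succ.succ) _ _ _ _ c h0 h1 hz ht
    (fun r hr => by rw [wd_ofFn _ _ hr]; exact hw ⟨r, hr⟩), omega_210, omega_102, omega_id]
  have h := T.sys.eval15 0 (π 0) (π 1) (π 2)
    (List.ofFn fun r : Fin (M + 1) => π r.succ.succ.succ) (by simp)
  rw [show T.sys.q (π 2) (π 0) = fun s => C (T.Q (π 2) (π 0) s) from
    T.q_ne (fun h => three_ne.2.2.symm (π.injective h)),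
    show T.sys.p (π 0) (π 1) = fun s => C (T.P (π 0) (π 1) s) from
    T.p_ne (fun h => three_ne.1 (π.injective h))] at h
  change _ = _ * (_ * T.mid _ _ _) at h
  rw [zsmul_eq_mul]
  push_cast at h ⊢
  linear_combination (-((Equiv.Perm.sign π : ℤ) : MvPolynomial (Fin (M + 4)) K)) * h

lemma main13 (ρ : Equiv.Perm (Fin (M + 4))) (c : ℕ → Fin (M + 4))
    (h0 : c 0 = ρ 0) (h1 : c 1 = ρ 0) (ht : c (M + 4) = ρ 0)
    (hw : ∀ r : Fin (M + 2), c (r + 2) = ρ r.succ.succ) :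
    pderiv (ρ 0) (pderiv (ρ 0) (OmegaForm T.φ (M + 3) (ρ 1))) =
      ((Equiv.Perm.sign ρ : ℤ) * (2 * ((M + 5 : ℕ) : ℤ))) •
        braceFn T.φ T.P (M + 3) T.Q rfl (M + 5) c := by
  have hz : c (M + 3) = ρ (Fin.last (M + 3)) := hw (Fin.last (M + 1))
  have e : (ρ 2 :: List.ofFn fun r : Fin (M + 1) => ρ r.succ.succ.succ) =
      (List.ofFn fun r : Fin (M + 1) => ρ r.castSucc.succ.succ) ++ [ρ (Fin.last (M + 3))] := by
    have h1 := List.ofFn_succ (f := fun r : Fin (M + 2) => ρ r.succ.succ)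
    have h2 := List.ofFn_succ' (f := fun r : Fin (M + 2) => ρ r.succ.succ)
    rw [List.concat_eq_append] at h2
    exact h1.symm.trans h2
  rw [T.brace_conv (List.ofFn fun r : Fin (M + 1) => ρ r.castSucc.succ.succ) _ _ _ _ c h0 h1 hz ht
    (fun r hr => by rw [wd_ofFn _ _ hr]; exact hw (Fin.castSucc ⟨r, hr⟩)), omega_102, e]
  rw [BraceSys.eval13 _ _ _ _ _ (by simp), show T.sys.q (ρ (Fin.last (M + 3))) (ρ 0) =
    fun s => C (T.Q (ρ (Fin.last (M + 3))) (ρ 0) s) from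
    T.q_ne (fun h => (Fin.last_pos).ne' (ρ.injective h))]
  change _ * (_ * T.mid (fun s => C (T.P (ρ 0) (ρ 0) s)) _ _) = _
  rw [zsmul_eq_mul]
  push_cast
  ring

end Cfg

/-- Theorem 9.1 of the paper: with the bracket and brace setup and the brace
antisymmetry `{i,j,…,k,ℓ} = −{k,ℓ,…,i,j}`, the second partial derivatives of the forms
`Ω_j = (−1)^j·[[1,…,ĵ,…,n−1]]` are given by the identities (12)–(15), with signs
`ε_{ij}`/`ε_{ijk}` the signs of the permutations `ρ`/`π` taking `1,…,n−1` to
`i,j,1,…,îĵ,…,n−1` resp. `i,j,k,1,…,îĵk̂,…,n−1` (characterized by their first values and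
strict monotonicity on the remaining positions). -/
theorem stmt16 (K : Type*) [Field K] (n : ℕ) (hn : 5 ≤ n) (m : ℕ) (hm : m = n - 2)
    (b : ℕ → ℕ) (hbpos : ∀ r, r ≤ m → 0 < b r) (hb0 : b 0 = 1) (hbm : b m = 1)
    (φ : ∀ r : ℕ, Matrix (Fin (b r)) (Fin (b (r + 1))) (MvPolynomial (Fin (n - 1)) K))
    (hcomp : ∀ r, r + 2 ≤ m → φ r * φ (r + 1) = 0)
    (hdeg1 : ∀ p q, (φ 0 p q).IsHomogeneous 2)
    (hdegm : ∀ p q, (φ (m - 1) p q).IsHomogeneous 2)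
    (hdegmid : ∀ r, 1 ≤ r → r + 2 ≤ m → ∀ p q, (φ r p q).IsHomogeneous 1)
    (P : Fin (n - 1) → Fin (n - 1) → Fin (b 1) → K)
    (Q : Fin (n - 1) → Fin (n - 1) → Fin (b (m - 1)) → K)
    (hPsymm : ∀ i j, P i j = P j i) (hQsymm : ∀ i j, Q i j = Q j i)
    (hP : ∀ (p : Fin (b 0)) (q : Fin (b 1)),
      φ 0 p q = ∑ i : Fin (n - 1), ∑ j : Fin (n - 1),
        if i ≤ j then C (P i j q) * X i * X j else 0)
    (hQ : ∀ (p : Fin (b (m - 1))) (q : Fin (b (m - 1 + 1))),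
      φ (m - 1) p q = ∑ i : Fin (n - 1), ∑ j : Fin (n - 1),
        if i ≤ j then C (Q i j p) * X i * X j else 0)
    -- brace antisymmetry `{i, j, a_1, …, a_{n−4}, k, ℓ} = −{k, ℓ, a_1, …, a_{n−4}, i, j}`
    (hanti : ∀ c : ℕ → Fin (n - 1),
      braceFn φ P m Q (by omega) n c
        = - braceFn φ P m Q (by omega) n
            (fun r => if r = 0 then c (n - 2) else if r = 1 then c (n - 1)
              else if r = n - 2 then c 0 else if r = n - 1 then c 1 else c r))
    (i j k : Fin (n - 1)) (hij : i ≠ j) (hjk : j ≠ k) (hik : i ≠ k)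
    -- `π` realizes `i, j, k, 1, …, îĵk̂, …, n−1`; `sign π = ε_{ijk}`
    (π : Equiv.Perm (Fin (n - 1)))
    (hπ0 : π ⟨0, by omega⟩ = i) (hπ1 : π ⟨1, by omega⟩ = j) (hπ2 : π ⟨2, by omega⟩ = k)
    (hπmono : ∀ s t : Fin (n - 1), 3 ≤ (s : ℕ) → s < t → π s < π t)
    -- `ρ` realizes `i, j, 1, …, îĵ, …, n−1`; `sign ρ = ε_{ij}`
    (ρ : Equiv.Perm (Fin (n - 1)))
    (hρ0 : ρ ⟨0, by omega⟩ = i) (hρ1 : ρ ⟨1, by omega⟩ = j)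
    (hρmono : ∀ s t : Fin (n - 1), 2 ≤ (s : ℕ) → s < t → ρ s < ρ t) :
    -- (12)  ∂²Ω_k/∂xᵢ∂xⱼ = (−1)^{n+1}·ε_{ijk}·2n·{i,i,1,…,îĵk̂,…,n−1,j,j}
    (pderiv i (pderiv j (OmegaForm φ m k))
        = ((-1 : ℤ) ^ (n + 1) * (Equiv.Perm.sign π : ℤ) * (2 * n)) •
            braceFn φ P m Q (by omega) n
              (fun r => if r = 0 ∨ r = 1 then i
                else if h : r < n - 2 then π ⟨r + 1, by omega⟩ else j))
    -- (13)  ∂²Ω_j/∂xᵢ² = ε_{ij}·2n·{i,i,1,…,îĵ,…,n−1,i}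
    ∧ (pderiv i (pderiv i (OmegaForm φ m j))
        = ((Equiv.Perm.sign ρ : ℤ) * (2 * n)) •
            braceFn φ P m Q (by omega) n
              (fun r => if r = 0 ∨ r = 1 then i
                else if h : 2 ≤ r ∧ r ≤ n - 2 then ρ ⟨r, by omega⟩ else i))
    -- (14)  ∂²Ω_j/∂xᵢ∂xⱼ − ∂²Ω_k/∂xᵢ∂x_k = (−1)^n·ε_{ijk}·2n·{i,i,1,…,îĵk̂,…,n−1,j,k}
    ∧ (pderiv i (pderiv j (OmegaForm φ m j)) - pderiv i (pderiv k (OmegaForm φ m k))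
        = ((-1 : ℤ) ^ n * (Equiv.Perm.sign π : ℤ) * (2 * n)) •
            braceFn φ P m Q (by omega) n
              (fun r => if r = 0 ∨ r = 1 then i
                else if h : r < n - 2 then π ⟨r + 1, by omega⟩
                else if r = n - 2 then j else k))
    -- (15)  ∂²Ω_i/∂xᵢ² − ∂²Ω_j/∂xᵢ∂xⱼ − ∂²Ω_k/∂xᵢ∂x_k
    --         = (−1)^{n+1}·ε_{ijk}·2n·{i,j,1,…,îĵk̂,…,n−1,k,i}
    ∧ (pderiv i (pderiv i (OmegaForm φ m i))
          - pderiv i (pderiv j (OmegaForm φ m j)) - pderiv i (pderiv k (OmegaForm φ m k))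
        = ((-1 : ℤ) ^ (n + 1) * (Equiv.Perm.sign π : ℤ) * (2 * n)) •
            braceFn φ P m Q (by omega) n
              (fun r => if r = 0 then i else if r = 1 then j
                else if h : r < n - 2 then π ⟨r + 1, by omega⟩
                else if r = n - 2 then k else i)) := by
  obtain ⟨M, rfl⟩ : ∃ M, n = M + 5 := ⟨n - 5, by omega⟩
  obtain rfl : m = M + 3 := hm
  let T : Cfg K M :=
    { b := b, φ := φ, hb0 := hb0, hbm := hbm, hcomp := hcomp, hdeg := hdegmid, P := P, Q := Q
      hPs := hPsymm, hQs := hQsymm, hP := hP, hQ := hQ, hanti := hanti }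
  have z0 : (⟨0, by omega⟩ : Fin (M + 4)) = 0 := rfl
  have z1 : (⟨1, by omega⟩ : Fin (M + 4)) = 1 := Fin.ext Cfg.one_val.symm
  have z2 : (⟨2, by omega⟩ : Fin (M + 4)) = 2 := Fin.ext Cfg.two_val.symm
  have p0 : π (0 : Fin (M + 4)) = i := hπ0
  have p1 : π (1 : Fin (M + 4)) = j := z1 ▸ hπ1
  have p2 : π (2 : Fin (M + 4)) = k := z2 ▸ hπ2
  have r0 : ρ (0 : Fin (M + 4)) = i := hρ0
  have r1 : ρ (1 : Fin (M + 4)) = j := z1 ▸ hρ1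
  have a1 : M + 3 ≠ 0 := by omega
  have a2 : M + 3 ≠ 1 := by omega
  have a3 : M + 4 ≠ 0 := by omega
  have a4 : M + 4 ≠ 1 := by omega
  have a5 : M + 4 ≠ M + 3 := by omega
  have a6 : ¬ (M + 3 < M + 3) := by omega
  have a7 : ¬ (M + 4 < M + 3) := by omega
  have a8 : ¬ (2 ≤ M + 4 ∧ M + 4 ≤ M + 3) := by omega
  refine ⟨?_, ?_, ?_, ?_⟩
  · have h := T.main12 π (fun r => if r = 0 ∨ r = 1 then i
                else if h : r < M + 3 then π ⟨r + 1, by omega⟩ else j)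
      (by simp [p0]) (by simp [p0]) (by simp [p1]) (by simp [p1]) (by
        intro r
        have b1 : ¬ ((r : ℕ) + 2 = 0 ∨ (r : ℕ) + 2 = 1) := by omega
        have b2 : (r : ℕ) + 2 < M + 3 := by omega
        simp only [if_neg b1, dif_pos b2]
        rfl)
    rw [p0, p1, p2] at h
    exact h
  · have h := T.main13 ρ (fun r => if r = 0 ∨ r = 1 then i
                else if h : 2 ≤ r ∧ r ≤ M + 3 then ρ ⟨r, by omega⟩ else i)
      (by simp [r0]) (by simp [r0]) (by simp [r0]) (by
        intro r
        have b1 : ¬ ((r : ℕ) + 2 = 0 ∨ (r : ℕ) + 2 = 1) := by omega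
        have b2 : 2 ≤ (r : ℕ) + 2 ∧ (r : ℕ) + 2 ≤ M + 3 := by omega
        simp only [if_neg b1, dif_pos b2]
        rfl)
    rw [r0, r1] at h
    exact h
  · have h := T.main14 π (fun r => if r = 0 ∨ r = 1 then i
                else if h : r < M + 3 then π ⟨r + 1, by omega⟩
                else if r = M + 3 then j else k)
      (by simp [p0]) (by simp [p0]) (by simp [p1]) (by simp [p2]) (by
        intro r
        have b1 : ¬ ((r : ℕ) + 2 = 0 ∨ (r : ℕ) + 2 = 1) := by omega
        have b2 : (r : ℕ) + 2 < M + 3 := by omega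
        simp only [if_neg b1, dif_pos b2]
        rfl)
    rw [p0, p1, p2] at h
    exact h
  · have h := T.main15 π (fun r => if r = 0 then i else if r = 1 then j
                else if h : r < M + 3 then π ⟨r + 1, by omega⟩
                else if r = M + 3 then k else i)
      (by simp [p0]) (by simp [p1]) (by simp [p2]) (by simp [p0]) (by
        intro r
        have b1 : ¬ ((r : ℕ) + 2 = 0) := by omega
        have b3 : ¬ ((r : ℕ) + 2 = 1) := by omega
        have b2 : (r : ℕ) + 2 < M + 3 := by omega
        simp only [if_neg b1, if_neg b3, dif_pos b2]
        rfl)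
    rw [p0, p1, p2] at h
    exact h
end

section
/- Let R be a commutative ring and a, b, c, d ∈ R. Define a multiplication on the free R-module with basis 1, ω, θ by declaring 1 to be the multiplicative identity, ω² = −ac·1 − b·ω + a·θ, ω·θ = θ·ω = −ad·1, and θ² = −bd·1 − d·ω + c·θ, extended R-bilinearly. Then this multiplication makes the free R-module R·1 ⊕ R·ω ⊕ R·θ into a commutative and associative unital R-algebra (a ring of rank 3 over R). -/
/-- Levi–Delone–Faddeev: over a commutative ring `R`, the multiplication on
the free module `R·1 ⊕ R·ω ⊕ R·θ` (triples `(x, y, z) = x·1 + y·ω + z·θ`) determined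
`R`-bilinearly by `ω² = −ac·1 − b·ω + a·θ`, `ω·θ = θ·ω = −ad·1`, `θ² = −bd·1 − d·ω + c·θ`
and `1` being the identity, is commutative, associative and unital. -/
theorem stmt18 (R : Type*) [CommRing R] (a b c d : R)
    (mul : (R × R × R) → (R × R × R) → (R × R × R))
    (hmul : ∀ p q : R × R × R, mul p q =
      (p.1 * q.1 - a * c * (p.2.1 * q.2.1) - a * d * (p.2.1 * q.2.2 + p.2.2 * q.2.1)
          - b * d * (p.2.2 * q.2.2),
        p.1 * q.2.1 + p.2.1 * q.1 - b * (p.2.1 * q.2.1) - d * (p.2.2 * q.2.2),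
        p.1 * q.2.2 + p.2.2 * q.1 + a * (p.2.1 * q.2.1) + c * (p.2.2 * q.2.2))) :
    (∀ p q : R × R × R, mul p q = mul q p)
      ∧ (∀ p q r : R × R × R, mul (mul p q) r = mul p (mul q r))
      ∧ (∀ p : R × R × R, mul (1, 0, 0) p = p)
      ∧ (∀ p : R × R × R, mul p (1, 0, 0) = p) := by
  refine ⟨?_, ?_, ?_, ?_⟩
  · rintro ⟨p1, p2, p3⟩ ⟨q1, q2, q3⟩
    simp only [hmul, Prod.mk.injEq]
    refine ⟨?_, ?_, ?_⟩ <;> ring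
  · rintro ⟨p1, p2, p3⟩ ⟨q1, q2, q3⟩ ⟨r1, r2, r3⟩
    simp only [hmul, Prod.mk.injEq]
    refine ⟨?_, ?_, ?_⟩ <;> ring
  · rintro ⟨p1, p2, p3⟩
    simp only [hmul, Prod.mk.injEq]
    refine ⟨?_, ?_, ?_⟩ <;> ring
  · rintro ⟨p1, p2, p3⟩
    simp only [hmul, Prod.mk.injEq]
    refine ⟨?_, ?_, ?_⟩ <;> ring
end
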